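/- arXiv:hep-th/9407124 — 9 statements merged into one kernel-verified Lean document; each statement's English description precedes it below -/
import Mathlib

section
/- In Sym, for every n ≥ 1, Ψ_n = Σ_{|K|=n} c_K · Φ^K / (ℓ(K)!·π(K)), where the sum is over all compositions K = (k₁,…,k_r) of n, π(K) := k₁k₂⋯k_r, and c_K := Σ_{i=1}^{r} (−1)^{i−1} C(r−1, i−1) k_i with C(a,b) the binomial coefficient. (This is the expansion of the first-kind power sums in the basis of products of second-kind power sums.) -/
open Finset

namespace NCSF

noncomputable section

/-- `Sym = ℚ⟨S₁,S₂,S₃,…⟩`, the free associative algebra over `ℚ` on countably many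
noncommuting generators, the generator of index `n : ℕ` representing `S (n+1)`. -/
abbrev Sym : Type := FreeAlgebra ℚ ℕ

/-- The complete homogeneous noncommutative symmetric functions: `S 0 = 1` and
`S (n+1)` is the `n`-th generator of the free algebra. -/
def S : ℕ → Sym
  | 0 => 1
  | n + 1 => FreeAlgebra.ι ℚ n

/-- `S^I = S_{i₁} ⋯ S_{i_r}` for a list `I = [i₁, …, i_r]`. -/
def SProd (L : List ℕ) : Sym := (L.map S).prod

/-- The set of partial sums `i₁ + ⋯ + i_k` (`1 ≤ k ≤ length`) of a list. -/
def psums (L : List ℕ) : Finset ℕ :=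
  (Finset.range L.length).image fun k => (L.take (k + 1)).sum

/-- The noncommutative ribbon Schur function
`R_I = ∑_{J ⪯ I} (−1)^{ℓ(I)−ℓ(J)} S^J`, the sum being over the compositions `J`
of `|I|` that are coarser than `I` (every partial sum of `J` is a partial sum of `I`). -/
def Ribbon (L : List ℕ) : Sym :=
  ∑ J : Composition L.sum,
    if psums J.blocks ⊆ psums L then ((-1 : ℚ) ^ (L.length - J.length)) • SProd J.blocks
    else 0


/-- The noncommutative power sums of the second kind
`Φ_n = ∑_{|J|=n} (−1)^{ℓ(J)−1} (n/ℓ(J)) S^J`. -/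
def Phi (n : ℕ) : Sym :=
  ∑ J : Composition n,
    ((-1 : ℚ) ^ (J.length - 1) * (n : ℚ) / (J.length : ℚ)) • SProd J.blocks

/-- `Φ^K = Φ_{k₁} ⋯ Φ_{k_r}`. -/
def PhiProd (L : List ℕ) : Sym := (L.map Phi).prod

/-- `c_K = ∑_{i=1}^{r} (−1)^{i−1} C(r−1, i−1) k_i` for a composition `K = (k₁,…,k_r)`. -/
def cCoeff (K : List ℕ) : ℚ :=
  ∑ i ∈ Finset.range K.length,
    (-1 : ℚ) ^ i * (Nat.choose (K.length - 1) i : ℚ) * (K.getD i 0 : ℚ)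

/-!
Write `σ = ∑ Sₙ tⁿ`, `F = log σ` and `D = t d/dt`. The recursion says that the generating series
of the `Ψₙ` is `σ⁻¹ Dσ`, and the coefficients of `F` are the `Φₙ / n`. Differentiating `σ = e^F`
gives `σ⁻¹ Dσ = e^{-F} D(e^F) = ∑ₖ ad(-F)ᵏ(DF) / (k + 1)!`. Since `ad(-F)` is right minus left
multiplication by `F`, and these commute, `ad(-F)ᵏ(DF) = ∑ᵢ (-1)ⁱ C(k, i) Fⁱ (DF) Fᵏ⁻ⁱ`. In the
term of a composition of length `k + 1`, the factor `DF` contributes the `(i + 1)`-st part, so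
these parts add up to `c_K`.
-/

open PowerSeries

section Commutator

attribute [local instance] LieRing.ofAssociativeRing LieAlgebra.ofAssociativeAlgebra

variable {R B : Type*} [CommRing R] [Ring B] [Algebra R B]

lemma ad_neg_pow_apply (x y : B) (n : ℕ) :
    (LieAlgebra.ad R B (-x) ^ n) y =
      ∑ p ∈ antidiagonal n, ((-1) ^ p.1 * (n.choose p.1 : R)) • (x ^ p.1 * y * x ^ p.2) := by
  have ad_eq : (LieAlgebra.ad R B (-x) : Module.End R B) =
      LinearMap.mulLeft R (-x) + LinearMap.mulRight R x := by
    ext z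
    simp [LieRing.of_associative_ring_bracket, neg_add_eq_sub]
  rw [ad_eq, (LinearMap.commute_mulLeft_right (-x) x).add_pow', LinearMap.sum_apply]
  refine Finset.sum_congr rfl fun p _ => ?_
  rw [LinearMap.smul_apply, Module.End.mul_apply, LinearMap.pow_mulLeft, LinearMap.pow_mulRight,
    LinearMap.mulLeft_apply, LinearMap.mulRight_apply, ← neg_one_smul R x, smul_pow, mul_comm,
    mul_smul, Nat.cast_smul_eq_nsmul, smul_mul_assoc, mul_assoc]

lemma mul_pow_eq_sum_ad_neg (x y : B) (n : ℕ) :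
    y * x ^ n =
      ∑ p ∈ antidiagonal n, n.choose p.2 • (x ^ p.1 * (LieAlgebra.ad R B (-x) ^ p.2) y) := by
  have mulRight_eq : LinearMap.mulRight R x =
      LinearMap.mulLeft R x + (LieAlgebra.ad R B (-x) : Module.End R B) := by
    ext z
    simp [LieRing.of_associative_ring_bracket]
  have commute : Commute (LinearMap.mulLeft R x) (LieAlgebra.ad R B (-x) : Module.End R B) := by
    rw [← sub_eq_of_eq_add' mulRight_eq]
    exact (LinearMap.commute_mulLeft_right x x).sub_right (Commute.refl _)
  rw [← LinearMap.mulRight_apply (R := R), ← LinearMap.pow_mulRight, mulRight_eq, commute.add_pow',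
    LinearMap.sum_apply]
  refine Finset.sum_congr rfl fun p hp => ?_
  rw [Nat.choose_symm_of_eq_add (mem_antidiagonal.1 hp).symm]
  simp [LinearMap.pow_mulLeft]

lemma leibniz_pow_succ_eq_sum_ad_neg (δ : B →ₗ[R] B)
    (hδ : ∀ x y, δ (x * y) = δ x * y + x * δ y) (x : B) (n : ℕ) :
    δ (x ^ (n + 1)) = ∑ p ∈ antidiagonal n,
      (n + 1).choose (p.2 + 1) • (x ^ p.1 * (LieAlgebra.ad R B (-x) ^ p.2) (δ x)) := by
  induction n with
  | zero => simp
  | succ n ih =>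
    -- Pascal's rule separates the contributions of `δ x * x ^ (n + 1)` and `x * δ (x ^ (n + 1))`.
    simp_rw [Nat.choose_succ_succ (n + 1), add_smul, Finset.sum_add_distrib]
    rw [pow_succ', hδ, mul_pow_eq_sum_ad_neg (R := R), ih, Finset.Nat.sum_antidiagonal_succ
      (f := fun p => (n + 1).choose p.2.succ • (x ^ p.1 * (LieAlgebra.ad R B (-x) ^ p.2) (δ x)))]
    simp only [pow_zero, one_mul, pow_succ', mul_assoc, Finset.mul_sum, mul_smul_comm]
    simp

end Commutator

section FormalSum

variable {A : Type*} [Semiring A]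

/-- The sum `∑ₖ f k` of a sequence of power series with `k ≤ (f k).order`, a condition which makes
every coefficient a finite sum. Without it, the value of `formalSum f` is meaningless. -/
def formalSum (f : ℕ → A⟦X⟧) : A⟦X⟧ :=
  mk fun n => ∑ k ∈ range (n + 1), coeff n (f k)

variable {f g : ℕ → A⟦X⟧}

lemma coeff_formalSum (hf : ∀ k, k ≤ (f k).order) {n N : ℕ} (hn : n < N) :
    coeff n (formalSum f) = ∑ k ∈ range N, coeff n (f k) := by
  rw [formalSum, coeff_mk]
  refine Finset.sum_subset (by simpa using hn) fun k _ hk => ?_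
  refine coeff_of_lt_order n (lt_of_lt_of_le ?_ (hf k))
  simpa using hk

lemma natCast_add_le_order_mul (hf : ∀ k, k ≤ (f k).order) (hg : ∀ k, k ≤ (g k).order) (i j : ℕ) :
    ((i + j : ℕ) : ℕ∞) ≤ (f i * g j).order := by
  grw [Nat.cast_add, hf i, hg j, le_order_mul]

lemma formalSum_mul_formalSum (hf : ∀ k, k ≤ (f k).order) (hg : ∀ k, k ≤ (g k).order) :
    formalSum f * formalSum g = formalSum fun k => ∑ p ∈ antidiagonal k, f p.1 * g p.2 := by
  ext n
  calc coeff n (formalSum f * formalSum g)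
      = coeff n ((∑ i ∈ range (n + 1), f i) * ∑ j ∈ range (n + 1), g j) := by
        simp_rw [coeff_mul, map_sum]
        refine Finset.sum_congr rfl fun p hp => ?_
        rw [coeff_formalSum hf (Nat.lt_succ_of_le (HasAntidiagonal.antidiagonal.fst_le hp)),
          coeff_formalSum hg (Nat.lt_succ_of_le (HasAntidiagonal.antidiagonal.snd_le hp))]
    _ = ∑ i ∈ range (n + 1), ∑ j ∈ range (n + 1), coeff n (f i * g j) := by
        simp_rw [Finset.sum_mul_sum, map_sum]
    _ = ∑ i ∈ range (n + 1), ∑ j ∈ range (n + 1 - i), coeff n (f i * g j) := by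
        refine Finset.sum_congr rfl fun i _ => ?_
        refine (Finset.sum_subset (by simp) fun j _ hj => ?_).symm
        refine coeff_of_lt_order n (lt_of_lt_of_le ?_ (natCast_add_le_order_mul hf hg i j))
        rw [mem_range, not_lt] at hj
        exact_mod_cast (by omega : n < i + j)
    _ = _ := by
        simp_rw [← Finset.sum_range_diag_flip, formalSum, coeff_mk, map_sum,
          Finset.Nat.sum_antidiagonal_eq_sum_range_succ_mk]

end FormalSum

section Substitution

variable {R A : Type*} [CommRing R] [Semiring A] [Algebra R A] {u : A⟦X⟧}

lemma natCast_le_order_smul_pow (hu : constantCoeff u = 0) (c : R) (r : ℕ) :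
    r ≤ (c • u ^ r).order := by
  refine (le_order_pow_of_constantCoeff_eq_zero r hu).trans (le_order _ _ fun i hi => ?_)
  rw [coeff_smul, coeff_of_lt_order i hi, smul_zero]

variable (u) in
/-- Substitution `f ↦ f(u) = ∑ᵣ fᵣ uʳ` of a series `u` without constant term over a ring which
need not be commutative, a setting which `PowerSeries.subst` does not cover. -/
def ncSubst (hu : constantCoeff u = 0) : R⟦X⟧ →ₐ[R] A⟦X⟧ :=
  .ofLinearMap
    { toFun := fun f => formalSum fun r => coeff r f • u ^ r
      map_add' := fun f g => by
        ext n
        simp [formalSum, add_smul, Finset.sum_add_distrib]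
      map_smul' := fun c f => by
        ext n
        simp [formalSum, mul_smul, Finset.smul_sum] }
    (by
      ext n
      simp [formalSum, PowerSeries.coeff_one, ite_smul])
    (fun f g => by
      simp_rw [LinearMap.coe_mk, AddHom.coe_mk]
      rw [formalSum_mul_formalSum (fun r => natCast_le_order_smul_pow hu _ r)
        (fun r => natCast_le_order_smul_pow hu _ r)]
      congr! 2 with r
      rw [coeff_mul, Finset.sum_smul]
      refine Finset.sum_congr rfl fun p hp => ?_
      rw [smul_mul_smul_comm, ← pow_add, mem_antidiagonal.1 hp])

lemma ncSubst_apply (hu : constantCoeff u = 0) (f : R⟦X⟧) :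
    ncSubst u hu f = formalSum fun r => coeff r f • u ^ r :=
  rfl

lemma coeff_ncSubst (hu : constantCoeff u = 0) (f : R⟦X⟧) (n : ℕ) :
    coeff n (ncSubst u hu f) = ∑ r ∈ range (n + 1), coeff r f • coeff n (u ^ r) := by
  simp [ncSubst_apply, formalSum]

lemma ncSubst_X (hu : constantCoeff u = 0) : ncSubst u hu (X : R⟦X⟧) = u := by
  ext n
  rcases n with _ | n
  · simpa [coeff_ncSubst] using hu.symm
  · simp [coeff_ncSubst, coeff_X]

lemma constantCoeff_ncSubst (hu : constantCoeff u = 0) {f : R⟦X⟧} (hf : constantCoeff f = 0) :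
    constantCoeff (ncSubst u hu f) = 0 := by
  rw [← coeff_zero_eq_constantCoeff_apply, coeff_ncSubst]
  simp [hf]

lemma ncSubst_formalSum (hu : constantCoeff u = 0) {g : ℕ → R⟦X⟧} (hg : ∀ k, k ≤ (g k).order) :
    ncSubst u hu (formalSum g) = formalSum fun k => ncSubst u hu (g k) := by
  ext n
  simp only [coeff_ncSubst, formalSum, coeff_mk]
  rw [Finset.sum_comm]
  refine Finset.sum_congr rfl fun r hr => ?_
  rw [← Finset.sum_smul, ← coeff_formalSum hg (mem_range.1 hr), formalSum, coeff_mk]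

lemma subst_eq_formalSum {f l : R⟦X⟧} (hl : constantCoeff l = 0) :
    f.subst l = formalSum fun r => coeff r f • l ^ r := by
  ext n
  rw [coeff_subst' (.of_constantCoeff_zero' hl), formalSum, coeff_mk]
  refine finsum_eq_sum_of_support_subset _ fun r hr => ?_
  contrapose! hr
  rw [Finset.mem_coe, mem_range, Nat.lt_succ_iff, not_le] at hr
  rw [Function.notMem_support, ← coeff_smul]
  exact coeff_of_lt_order n
    ((Nat.cast_lt.2 hr).trans_le (natCast_le_order_smul_pow hl _ r))

lemma ncSubst_ncSubst (hu : constantCoeff u = 0) {f l : R⟦X⟧} (hl : constantCoeff l = 0) :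
    ncSubst (ncSubst u hu l) (constantCoeff_ncSubst hu hl) f = ncSubst u hu (f.subst l) := by
  rw [subst_eq_formalSum hl, ncSubst_formalSum hu fun r => natCast_le_order_smul_pow hl _ r]
  simp only [map_smul, map_pow, ncSubst_apply]

end Substitution

section ExpLog

lemma exp_subst_log (A : Type*) [CommRing A] [Algebra ℚ A] :
    (exp A).subst (log A) = 1 + X := by
  have := IsAddTorsionFree.of_module_rat A
  set g : A⟦X⟧ := (exp A).subst (log A) with g_def
  set l := d⁄dX A (log A) with l_def
  have deriv_g : d⁄dX A g = g * l := by
    rw [g_def, derivative_subst .log, derivative_exp]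
  have mul_l : (1 + X) * l = 1 := by
    ext n
    rcases n with _ | n
    · simp [l_def, deriv_log]
    · simp [l_def, deriv_log, add_mul, coeff_succ_X_mul, PowerSeries.coeff_one, pow_succ]
  have deriv_l : d⁄dX A l = -(l * l) := by
    have deriv_mul_l := congr_arg (d⁄dX A) mul_l
    simp only [Derivation.leibniz, map_add, smul_eq_mul, Derivation.map_one_eq_zero,
      derivative_X] at deriv_mul_l
    linear_combination l * deriv_mul_l - d⁄dX A l * mul_l
  have constantCoeff_g : constantCoeff g = 1 := by
    rw [g_def, subst_eq_formalSum constantCoeff_log, ← coeff_zero_eq_constantCoeff_apply]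
    simp [formalSum]
  have g_mul_l : g * l = 1 := by
    refine derivative.ext ?_ ?_
    · simp only [Derivation.leibniz, smul_eq_mul, Derivation.map_one_eq_zero, deriv_g, deriv_l]
      ring
    · simp [constantCoeff_g, l_def, deriv_log]
  linear_combination (1 + X) * g_mul_l - g * mul_l

variable {A : Type*} [Ring A] {f : A⟦X⟧}

lemma constantCoeff_sub_one (hf : constantCoeff f = 1) : constantCoeff (f - 1) = 0 := by
  rw [map_sub, hf, map_one, sub_self]

variable [Algebra ℚ A]

variable (f) in
/-- The logarithm of a series with constant term `1` over a ring which need not be commutative. -/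
def ncLog (hf : constantCoeff f = 1) : A⟦X⟧ :=
  ncSubst (f - 1) (constantCoeff_sub_one hf) (log ℚ)

lemma constantCoeff_ncLog (hf : constantCoeff f = 1) : constantCoeff (ncLog f hf) = 0 :=
  constantCoeff_ncSubst (constantCoeff_sub_one hf) constantCoeff_log

lemma exp_ncLog (hf : constantCoeff f = 1) :
    ncSubst (ncLog f hf) (constantCoeff_ncLog hf) (exp ℚ) = f := by
  simp only [ncLog]
  rw [ncSubst_ncSubst (constantCoeff_sub_one hf) constantCoeff_log, exp_subst_log, map_add,
    map_one, ncSubst_X, add_sub_cancel]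

end ExpLog

section EulerDerivation

variable (R A : Type*) [CommSemiring R] [Semiring A] [Algebra R A]

/-- The Euler derivation `t d/dt` of `A⟦t⟧`; the coefficients need not commute, which is why
`PowerSeries.derivative` cannot be used. -/
def eulerDerivation : A⟦X⟧ →ₗ[R] A⟦X⟧ where
  toFun f := mk fun n => n • coeff n f
  map_add' f g := by
    ext n
    simp
  map_smul' c f := by
    ext n
    simp

variable {A}

lemma coeff_eulerDerivation (f : A⟦X⟧) (n : ℕ) :
    coeff n (eulerDerivation R A f) = n • coeff n f := by
  simp [eulerDerivation]

lemma eulerDerivation_mul (f g : A⟦X⟧) :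
    eulerDerivation R A (f * g) = eulerDerivation R A f * g + f * eulerDerivation R A g := by
  ext n
  simp_rw [map_add, coeff_eulerDerivation, coeff_mul, coeff_eulerDerivation, Finset.smul_sum,
    ← Finset.sum_add_distrib]
  refine Finset.sum_congr rfl fun p hp => ?_
  rw [smul_mul_assoc, mul_smul_comm, ← add_smul, mem_antidiagonal.1 hp]

lemma eulerDerivation_one : eulerDerivation R A 1 = 0 := by
  ext n
  simp +contextual [coeff_eulerDerivation, PowerSeries.coeff_one]

end EulerDerivation

section Composition

lemma sum_composition_length_succ {M : Type*} [AddCommMonoid M] {g : List ℕ → M}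
    (hg : ∀ L, g (0 :: L) = 0) (n r : ℕ) :
    ∑ K : Composition n with K.length = r + 1, g K.blocks =
      ∑ p ∈ antidiagonal n, ∑ K : Composition p.2 with K.length = r, g (p.1 :: K.blocks) := by
  have cons_tail {K : Composition n} (hK : K.length = r + 1) :
      K.blocks = K.blocks.headI :: K.blocks.tail :=
    (List.cons_head!_tail (List.ne_nil_of_length_eq_add_one hK)).symm
  rw [Finset.sum_sigma']
  refine Finset.sum_of_injOn (fun K => ⟨(K.blocks.headI, K.blocks.tail.sum),
    K.blocks.tail, fun h => K.blocks_pos (List.mem_of_mem_tail h), rfl⟩) ?_ ?_ ?_ ?_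
  · intro K hK K' hK' h
    obtain ⟨head_eq, tail_eq⟩ := Prod.mk.inj <|
      congr_arg (fun P : (p : ℕ × ℕ) × Composition p.2 => (P.1.1, P.2.blocks)) h
    apply Composition.ext
    rw [cons_tail (K := K) (by simpa using hK), cons_tail (K := K') (by simpa using hK')]
    exact congr_arg₂ List.cons head_eq tail_eq
  · intro K hK
    have hK : K.length = r + 1 := by simpa using hK
    have sum_eq : K.blocks.headI + K.blocks.tail.sum = n := by
      rw [← List.sum_cons, ← cons_tail hK, K.blocks_sum]
    have length_eq : K.blocks.tail.length = r := by
      rw [List.length_tail, K.blocks_length, hK, Nat.add_sub_cancel]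
    simp [sum_eq, Composition.length, length_eq]
  · rintro ⟨⟨k, m⟩, L, L_pos, sum_eq_m⟩ hL hL'
    obtain rfl : L.sum = m := sum_eq_m
    obtain ⟨sum_eq, length_eq⟩ : k + L.sum = n ∧ L.length = r := by
      simpa [Composition.length] using hL
    rcases k.eq_zero_or_pos with rfl | hk
    · exact hg L
    · exact absurd ⟨⟨k :: L, by simpa [hk] using fun i => L_pos, by simpa using sum_eq⟩,
        by simp [Composition.length, length_eq], rfl⟩ hL'
  · intro K hK
    rw [← cons_tail (mem_filter.1 hK).2]

lemma sum_range_sum_composition_length {M : Type*} [AddCommMonoid M] {n : ℕ}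
    (g : Composition n → M) :
    ∑ r ∈ range (n + 1), ∑ K : Composition n with K.length = r, g K = ∑ K, g K :=
  Finset.sum_fiberwise_of_maps_to
    (fun K _ => mem_range.2 (Nat.lt_succ_of_le K.length_le)) _

variable {A : Type*} [Semiring A] {F G : A⟦X⟧}

/-- The product `F_{k₁} ⋯ F_{k_r}` of the coefficients of `F` along a list `[k₁, …, k_r]`. -/
def coeffProd (F : A⟦X⟧) (L : List ℕ) : A := (L.map fun k => coeff k F).prod

lemma coeffProd_cons (k : ℕ) (L : List ℕ) :
    coeffProd F (k :: L) = coeff k F * coeffProd F L := by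
  simp [coeffProd]

lemma coeff_mul_eq_sum_composition (hF : constantCoeff F = 0) {r : ℕ} (g g' : List ℕ → A)
    (hg' : ∀ k L, g' (k :: L) = coeff k F * g L)
    (hG : ∀ m, coeff m G = ∑ K : Composition m with K.length = r, g K.blocks) (n : ℕ) :
    coeff n (F * G) = ∑ K : Composition n with K.length = r + 1, g' K.blocks := by
  rw [sum_composition_length_succ fun L => by simp [hg', hF], coeff_mul]
  simp_rw [hG, hg', Finset.mul_sum]

lemma coeff_pow_eq_sum_composition (hF : constantCoeff F = 0) (r n : ℕ) :
    coeff n (F ^ r) = ∑ K : Composition n with K.length = r, coeffProd F K.blocks := by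
  induction r generalizing n with
  | zero =>
    rcases n with _ | n
    · simp [coeffProd, (Composition.blocks_eq_nil _).2, composition_card]
    · simp [PowerSeries.coeff_one]
  | succ r ih =>
    rw [pow_succ', coeff_mul_eq_sum_composition hF _ _ coeffProd_cons ih]

lemma coeff_pow_mul_eulerDerivation_mul_pow {R : Type*} [CommSemiring R] [Algebra R A]
    (hF : constantCoeff F = 0) (a b n : ℕ) :
    coeff n (F ^ a * eulerDerivation R A F * F ^ b) =
      ∑ K : Composition n with K.length = a + b + 1,
        K.blocks.getD a 0 • coeffProd F K.blocks := by
  induction a generalizing n with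
  | zero =>
    have constantCoeff_eulerDerivation : constantCoeff (eulerDerivation R A F) = 0 := by
      rw [← coeff_zero_eq_constantCoeff_apply, coeff_eulerDerivation, zero_smul]
    rw [pow_zero, one_mul, zero_add, coeff_mul_eq_sum_composition constantCoeff_eulerDerivation _
      (fun L => L.getD 0 0 • coeffProd F L) (fun k L => ?_) (coeff_pow_eq_sum_composition hF b)]
    simp [coeffProd_cons, coeff_eulerDerivation, mul_assoc]
  | succ a ih =>
    rw [pow_succ', mul_assoc F, mul_assoc F, add_right_comm a 1 b,
      coeff_mul_eq_sum_composition hF (fun L => L.getD a 0 • coeffProd F L)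
        (fun L => L.getD (a + 1) 0 • coeffProd F L) (fun k L => ?_) ih]
    rw [List.getD_cons_succ, coeffProd_cons, mul_smul_comm]

lemma coeff_ncSubst_eq_sum_composition {R : Type*} [CommRing R] [Algebra R A]
    (hF : constantCoeff F = 0) (f : R⟦X⟧) (n : ℕ) :
    coeff n (ncSubst F hF f) =
      ∑ K : Composition n, coeff K.length f • coeffProd F K.blocks := by
  rw [coeff_ncSubst, ← sum_range_sum_composition_length]
  refine Finset.sum_congr rfl fun r _ => ?_
  rw [coeff_pow_eq_sum_composition hF, Finset.smul_sum]
  refine Finset.sum_congr rfl fun K hK => ?_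
  rw [(mem_filter.1 hK).2]

end Composition

section Dexp

attribute [local instance] LieRing.ofAssociativeRing LieAlgebra.ofAssociativeAlgebra

open Nat (factorial)

variable {A : Type*} [Ring A] [Algebra ℚ A] {F : A⟦X⟧}

/-- The term of degree `k` in `F` of `dexp F`, the `k`-th one being `ad(-F)^(k-1)(DF) / k!` for
`k ≥ 1`, where `D` is the Euler derivation. -/
def dexpTerm (F : A⟦X⟧) : ℕ → A⟦X⟧
  | 0 => 0
  | k + 1 =>
    ((factorial (k + 1) : ℚ)⁻¹) • (LieAlgebra.ad ℚ A⟦X⟧ (-F) ^ k) (eulerDerivation ℚ A F)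

/-- The logarithmic derivative `e^{-F} D(e^F) = ((1 - e^{-ad F}) / ad F) (DF)` of the exponential
for the Euler derivation `D`, as a series in `ad F`. -/
def dexp (F : A⟦X⟧) : A⟦X⟧ := formalSum (dexpTerm F)

lemma cCoeff_eq_sum_antidiagonal {L : List ℕ} {k : ℕ} (hL : L.length = k + 1) :
    cCoeff L = ∑ p ∈ antidiagonal k, (-1) ^ p.1 * (k.choose p.1 : ℚ) * (L.getD p.1 0 : ℚ) := by
  rw [cCoeff, hL, Finset.Nat.sum_antidiagonal_eq_sum_range_succ_mk, Nat.add_sub_cancel]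

lemma coeff_ad_neg_pow_eulerDerivation (hF : constantCoeff F = 0) (k n : ℕ) :
    coeff n ((LieAlgebra.ad ℚ A⟦X⟧ (-F) ^ k) (eulerDerivation ℚ A F)) =
      ∑ K : Composition n with K.length = k + 1, cCoeff K.blocks • coeffProd F K.blocks := by
  rw [ad_neg_pow_apply, map_sum]
  calc ∑ p ∈ antidiagonal k, coeff n
          (((-1) ^ p.1 * (k.choose p.1 : ℚ)) • (F ^ p.1 * eulerDerivation ℚ A F * F ^ p.2))
      = ∑ p ∈ antidiagonal k, ∑ K : Composition n with K.length = k + 1,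
          ((-1) ^ p.1 * (k.choose p.1 : ℚ) * (K.blocks.getD p.1 0 : ℚ)) •
            coeffProd F K.blocks := by
        refine Finset.sum_congr rfl fun p hp => ?_
        rw [coeff_smul, coeff_pow_mul_eulerDerivation_mul_pow hF, mem_antidiagonal.1 hp,
          Finset.smul_sum]
        simp_rw [mul_smul, Nat.cast_smul_eq_nsmul]
    _ = _ := by
        rw [Finset.sum_comm]
        refine Finset.sum_congr rfl fun K hK => ?_
        rw [← Finset.sum_smul, cCoeff_eq_sum_antidiagonal (mem_filter.1 hK).2]

lemma coeff_dexpTerm (hF : constantCoeff F = 0) (k n : ℕ) :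
    coeff n (dexpTerm F k) =
      ∑ K : Composition n with K.length = k,
        (cCoeff K.blocks / (factorial K.length : ℚ)) • coeffProd F K.blocks := by
  rcases k with _ | k
  · refine (Finset.sum_eq_zero fun K hK => ?_).symm
    have length_eq : K.blocks.length = 0 := (mem_filter.1 hK).2
    simp [cCoeff, length_eq]
  · rw [dexpTerm, coeff_smul, coeff_ad_neg_pow_eulerDerivation hF, Finset.smul_sum]
    refine Finset.sum_congr rfl fun K hK => ?_
    rw [(mem_filter.1 hK).2, smul_smul, div_eq_inv_mul]

lemma coeff_dexp (hF : constantCoeff F = 0) (n : ℕ) :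
    coeff n (dexp F) =
      ∑ K : Composition n,
        (cCoeff K.blocks / (factorial K.length : ℚ)) • coeffProd F K.blocks := by
  rw [dexp, formalSum, coeff_mk, ← sum_range_sum_composition_length]
  exact Finset.sum_congr rfl fun k _ => coeff_dexpTerm hF k n

lemma natCast_le_order_dexpTerm (hF : constantCoeff F = 0) (k : ℕ) :
    k ≤ (dexpTerm F k).order := by
  refine nat_le_order _ _ fun n hn => ?_
  rw [coeff_dexpTerm hF, Finset.filter_eq_empty_iff.2, Finset.sum_empty]
  exact fun K _ => (K.length_le.trans_lt hn).ne

lemma inv_factorial_smul_eulerDerivation_pow (F : A⟦X⟧) (k : ℕ) :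
    (factorial k : ℚ)⁻¹ • eulerDerivation ℚ A (F ^ k) =
      ∑ p ∈ antidiagonal k, ((factorial p.1 : ℚ)⁻¹ • F ^ p.1) * dexpTerm F p.2 := by
  rcases k with _ | k
  · simp [eulerDerivation_one, dexpTerm]
  · rw [leibniz_pow_succ_eq_sum_ad_neg _ (eulerDerivation_mul ℚ),
      Finset.Nat.sum_antidiagonal_succ', dexpTerm, mul_zero, zero_add, Finset.smul_sum]
    refine Finset.sum_congr rfl fun p hp => ?_
    rw [dexpTerm, smul_mul_smul_comm, ← Nat.cast_smul_eq_nsmul ℚ, smul_smul,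
      ← mem_antidiagonal.1 hp, add_assoc, ← Nat.choose_symm_add, Nat.cast_add_choose]
    field_simp

lemma exp_mul_dexp (hF : constantCoeff F = 0) :
    ncSubst F hF (exp ℚ) * dexp F = eulerDerivation ℚ A (ncSubst F hF (exp ℚ)) := by
  rw [ncSubst_apply, dexp, formalSum_mul_formalSum (fun r => natCast_le_order_smul_pow hF _ r)
    (natCast_le_order_dexpTerm hF)]
  ext n
  simp_rw [coeff_eulerDerivation, formalSum, coeff_mk, Finset.smul_sum, ← coeff_eulerDerivation ℚ,
    coeff_exp, Algebra.algebraMap_self_apply, one_div, map_smul,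
    inv_factorial_smul_eulerDerivation_pow]

end Dexp

section PowerSums

variable {A : Type*} [Ring A] {f ψ : A⟦X⟧}

lemma coeffProd_sub_one {n : ℕ} (K : Composition n) :
    coeffProd (f - 1) K.blocks = coeffProd f K.blocks := by
  refine congr_arg List.prod (List.map_congr_left fun k hk => ?_)
  rw [map_sub, PowerSeries.coeff_one, if_neg (K.blocks_pos hk).ne', sub_zero]

variable [Algebra ℚ A]

lemma coeff_ncLog (hf : constantCoeff f = 1) (n : ℕ) :
    coeff n (ncLog f hf) = (n : ℚ)⁻¹ • ∑ J : Composition n,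
      ((-1 : ℚ) ^ (J.length - 1) * n / J.length) • coeffProd f J.blocks := by
  rw [ncLog, coeff_ncSubst_eq_sum_composition, Finset.smul_sum]
  refine Finset.sum_congr rfl fun J _ => ?_
  rw [coeffProd_sub_one, smul_smul, coeff_log]
  congr 1
  rcases n.eq_zero_or_pos with rfl | hn
  · simp [J.length_eq_zero.2 rfl]
  · obtain ⟨l, hl⟩ := Nat.exists_eq_succ_of_ne_zero (J.length_pos_of_pos hn).ne'
    rw [hl, if_neg l.succ_ne_zero, Algebra.algebraMap_self_apply, Nat.succ_sub_one, pow_succ,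
      pow_succ]
    field_simp

lemma coeffProd_eq_inv_prod_smul {F : A⟦X⟧} {φ : ℕ → A}
    (hF : ∀ n, coeff n F = (n : ℚ)⁻¹ • φ n) (L : List ℕ) :
    coeffProd F L = (L.prod : ℚ)⁻¹ • (L.map φ).prod := by
  induction L with
  | nil => simp [coeffProd]
  | cons k L ih =>
    rw [coeffProd_cons, hF, ih, smul_mul_smul_comm, ← mul_inv, List.prod_cons, Nat.cast_mul,
      List.map_cons, List.prod_cons]

lemma eq_dexp_ncLog (hf : constantCoeff f = 1) (hψ : f * ψ = eulerDerivation ℚ A f) :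
    ψ = dexp (ncLog f hf) := by
  have isUnit_f : IsUnit f := isUnit_iff_constantCoeff.2 (hf ▸ isUnit_one)
  refine isUnit_f.mul_left_cancel (hψ.trans ?_)
  simpa only [exp_ncLog] using (exp_mul_dexp (constantCoeff_ncLog hf)).symm

lemma mk_mul_mk_eq_eulerDerivation {s ψ : ℕ → A}
    (hψ : ∀ n : ℕ, 1 ≤ n → (n : ℚ) • s n = ∑ k ∈ range n, s k * ψ (n - k)) :
    mk s * mk (fun n => if n = 0 then 0 else ψ n) = eulerDerivation ℚ A (mk s) := by
  ext n
  rw [coeff_mul, Finset.Nat.sum_antidiagonal_eq_sum_range_succ_mk, Finset.sum_range_succ,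
    coeff_eulerDerivation]
  simp only [coeff_mk, Nat.sub_self, if_true, mul_zero, add_zero]
  rcases n.eq_zero_or_pos with rfl | hn
  · simp
  · rw [← Nat.cast_smul_eq_nsmul ℚ, hψ n hn]
    refine Finset.sum_congr rfl fun k hk => ?_
    rw [if_neg (Nat.sub_ne_zero_of_lt (mem_range.1 hk))]

theorem psi_in_phi_basis_general {s φ ψ : ℕ → A} (hs : s 0 = 1)
    (hφ : ∀ n, 1 ≤ n → φ n = ∑ J : Composition n,
      ((-1 : ℚ) ^ (J.length - 1) * n / J.length) • (J.blocks.map s).prod)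
    (hψ : ∀ n : ℕ, 1 ≤ n → (n : ℚ) • s n = ∑ k ∈ range n, s k * ψ (n - k)) {n : ℕ} (hn : 1 ≤ n) :
    ψ n = ∑ K : Composition n,
      (cCoeff K.blocks / ((Nat.factorial K.length : ℚ) * (K.blocks.prod : ℚ))) •
        (K.blocks.map φ).prod := by
  have constantCoeff_mk_s : constantCoeff (mk s) = 1 := by
    rw [← coeff_zero_eq_constantCoeff_apply, coeff_mk, hs]
  have coeff_log_mk_s (m : ℕ) :
      coeff m (ncLog (mk s) constantCoeff_mk_s) = (m : ℚ)⁻¹ • φ m := by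
    rcases m.eq_zero_or_pos with rfl | hm
    · simp [constantCoeff_ncLog]
    · simp only [coeff_ncLog, hφ m hm, coeffProd, coeff_mk]
  calc ψ n = coeff n (mk fun m => if m = 0 then 0 else ψ m) := by
        rw [coeff_mk, if_neg (Nat.one_le_iff_ne_zero.1 hn)]
    _ = ∑ K : Composition n, (cCoeff K.blocks / (Nat.factorial K.length : ℚ)) •
          coeffProd (ncLog (mk s) constantCoeff_mk_s) K.blocks := by
        rw [eq_dexp_ncLog constantCoeff_mk_s (mk_mul_mk_eq_eulerDerivation hψ),
          coeff_dexp (constantCoeff_ncLog _)]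
    _ = _ := by
        simp_rw [coeffProd_eq_inv_prod_smul coeff_log_mk_s, smul_smul, ← div_eq_mul_inv,
          div_div]

end PowerSums

/-- **Expansion of the first-kind power sums in the second-kind power sums**
(continuous Baker–Campbell–Hausdorff formula): if `Ψ` satisfies the defining recursion
`n·S_n = ∑_{k=0}^{n−1} S_k Ψ_{n−k}`, then for every `n ≥ 1`,
`Ψ_n = ∑_{|K|=n} c_K Φ^K / (ℓ(K)!·π(K))` where `π(K)` is the product of the parts
of `K`. -/
theorem psi_in_phi_basis
    (Ψ : ℕ → Sym)
    (hΨ : ∀ n : ℕ, 1 ≤ n → (n : ℚ) • S n = ∑ k ∈ Finset.range n, S k * Ψ (n - k)) :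
    ∀ n : ℕ, 1 ≤ n →
      Ψ n = ∑ K : Composition n,
        (cCoeff K.blocks /
            ((Nat.factorial K.length : ℚ) * (K.blocks.prod : ℚ))) • PhiProd K.blocks := by
  exact fun _ => psi_in_phi_basis_general rfl (fun _ _ => rfl) hΨ

end

end NCSF
end

section
/- In the group algebra ℚ[Sₙ] (n ≥ 1), let θₙ := Σ_{k=0}^{n−1} (−1)^k Σ_{σ : Des(σ) = {1,2,…,k}} σ, the alternating sum of the sums of permutations whose descent set is exactly the initial segment {1,…,k} (the k = 0 term being the identity permutation, whose descent set is empty). Then θₙ · θₙ = n · θₙ (Dynkin's theorem; this is the group-algebra form of the internal-product identity Ψ_n ∗ Ψ_n = nΨ_n for noncommutative symmetric functions). -/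
open Finset

namespace Descents10

noncomputable section

/-- The descent set of a permutation `σ` of `{0,…,n}`: the set of `i ∈ Fin n`
(representing the position `i+1 ∈ {1,…,n}`) with `σ(i) > σ(i+1)`. -/
def Des {n : ℕ} (σ : Equiv.Perm (Fin (n + 1))) : Finset (Fin n) :=
  Finset.univ.filter fun i => σ i.succ < σ i.castSucc

/-- Dynkin's element `θ = ∑_{k=0}^{n−1} (−1)^k ∑_{Des(σ) = {1,…,k}} σ` in the group
algebra of the symmetric group on `n+1` letters. -/
def theta (n : ℕ) : MonoidAlgebra ℚ (Equiv.Perm (Fin (n + 1))) :=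
  ∑ k ∈ Finset.range (n + 1),
    ((-1 : ℚ) ^ k) •
      ∑ σ ∈ Finset.univ.filter
          (fun σ : Equiv.Perm (Fin (n + 1)) =>
            Des σ = Finset.univ.filter fun i : Fin n => (i : ℕ) < k),
        MonoidAlgebra.single σ (1 : ℚ)

/-!
The Dynkin operator `D` on the free associative algebra replaces each word by the left-normed
bracket of its letters. For a Lie element `p`, the identity `D (y * p) = ⁅D y, p⁆ + ε(y) D p`, with
`ε` the augmentation, propagates from letters to brackets, and it makes `D` a derivation of the free
Lie algebra fixing the letters. Hence `D` multiplies every bracketing of `n` letters by `n`.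

One-line notation embeds the group algebra into the words on `0, …, n`. The image of the Dynkin
element is the left-normed bracket of `0, …, n` in this order: inserting a new maximum into a
word creates an ascent followed by a descent unless it is put at one of the two ends, and these two
insertions are the two terms of the commutator with the new letter. Left multiplication by a
permutation relabels the letters, so right multiplication by the Dynkin element is `D`, which acts
on the Dynkin element itself by the scalar `n + 1`.
-/

section LeftNormed

variable {L L' : Type*} [LieRing L] [LieRing L']

/-- The left-normed bracket `⁅…⁅⁅x₁, x₂⁆, x₃⁆, …, xₙ⁆` of a list, with value `0` on `[]`. -/
def leftNormed : List L → L
  | [] => 0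
  | x :: l => l.foldl (⁅·, ·⁆) x

theorem leftNormed_singleton (x : L) : leftNormed [x] = x := rfl

theorem leftNormed_concat {l : List L} (hl : l ≠ []) (x : L) :
    leftNormed (l ++ [x]) = ⁅leftNormed l, x⁆ := by
  obtain ⟨y, l, rfl⟩ := List.exists_cons_of_ne_nil hl
  simp [leftNormed]

theorem list_sum_lie {M : Type*} [AddCommGroup M] [LieRingModule L M] (l : List L) (x : M) :
    ⁅l.sum, x⁆ = (l.map (⁅·, x⁆)).sum := by
  induction l with
  | nil => exact zero_lie x
  | cons y l ih => rw [List.sum_cons, add_lie, ih, List.map_cons, List.sum_cons]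

theorem map_leftNormed {R : Type*} [CommRing R] [LieAlgebra R L] [LieAlgebra R L']
    (f : L →ₗ⁅R⁆ L') (l : List L) : f (leftNormed l) = leftNormed (l.map f) := by
  induction l using List.reverseRecOn with
  | nil => exact map_zero f
  | append_singleton l x ih =>
    rcases eq_or_ne l [] with rfl | hl
    · rfl
    · rw [leftNormed_concat hl, LieHom.map_lie, ih, List.map_append, List.map_singleton,
        leftNormed_concat (by simpa using hl)]

theorem leftNormed_mem {R : Type*} [CommRing R] [LieAlgebra R L] (K : LieSubalgebra R L)
    {l : List L} (hl : ∀ x ∈ l, x ∈ K) : leftNormed l ∈ K := by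
  induction l using List.reverseRecOn with
  | nil => exact K.zero_mem
  | append_singleton l x ih =>
    have hx : x ∈ K := hl x (by simp)
    rcases eq_or_ne l [] with rfl | hne
    · exact hx
    · rw [leftNormed_concat hne]
      exact K.lie_mem (ih fun y hy => hl y (by simp [hy])) hx

end LeftNormed

section DynkinOperator

attribute [local instance] LieRing.ofAssociativeRing

variable {R X Y : Type*} [CommRing R]

/-- The free associative `R`-algebra on `X`, with the words in `X` as its distinguished basis. -/
abbrev WordAlgebra (R X : Type*) [CommRing R] := MonoidAlgebra R (FreeMonoid X)

variable (R) in
/-- A list of letters, as a basis element of the free associative algebra. -/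
def word (l : List X) : WordAlgebra R X := MonoidAlgebra.single (FreeMonoid.ofList l) 1

variable (R) in
/-- A free generator of the free associative algebra. -/
def letter (x : X) : WordAlgebra R X := word R [x]

theorem word_nil : word R ([] : List X) = 1 := rfl

theorem word_append (l l' : List X) : word R (l ++ l') = word R l * word R l' := by
  simp [word, MonoidAlgebra.single_mul_single]

theorem word_concat (l : List X) (x : X) : word R (l ++ [x]) = word R l * letter R x :=
  word_append l [x]

theorem word_cons (x : X) (l : List X) : word R (x :: l) = letter R x * word R l :=
  word_append [x] l

theorem WordAlgebra.linearMap_ext {M : Type*} [AddCommGroup M] [Module R M]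
    {f g : WordAlgebra R X →ₗ[R] M} (h : ∀ l, f (word R l) = g (word R l)) : f = g := by
  ext w : 2
  exact h w.toList

variable (R) in
/-- The action of a map of alphabets on words, letter by letter. -/
def mapLetters (f : X → Y) : WordAlgebra R X →ₐ[R] WordAlgebra R Y :=
  MonoidAlgebra.mapDomainAlgHom R R (FreeMonoid.map f)

theorem mapLetters_word (f : X → Y) (l : List X) :
    mapLetters R f (word R l) = word R (l.map f) := by
  simp [mapLetters, word, FreeMonoid.ofList_map]

theorem mapLetters_leftNormed (f : X → Y) (l : List X) :
    mapLetters R f (leftNormed (l.map (letter R))) = leftNormed ((l.map f).map (letter R)) := by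
  rw [← AlgHom.toLieHom_apply, map_leftNormed, List.map_map, List.map_map]
  congr 2
  ext1 x
  exact mapLetters_word f [x]

/-- The augmentation of the free associative algebra, reading off the coefficient of the empty
word. -/
def constantCoeff : WordAlgebra R X →ₐ[R] R :=
  MonoidAlgebra.lift R R (FreeMonoid X) (FreeMonoid.lift fun _ => 0)

theorem constantCoeff_word_of_ne_nil {l : List X} (hl : l ≠ []) :
    constantCoeff (word R l) = 0 := by
  obtain ⟨x, l, rfl⟩ := List.exists_cons_of_ne_nil hl
  simp [constantCoeff, word, FreeMonoid.lift_apply]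

variable (R X) in
/-- The free Lie algebra on `X`, realised as the Lie subalgebra of the free associative algebra
generated by the letters. -/
def lieElements : LieSubalgebra R (WordAlgebra R X) :=
  LieSubalgebra.lieSpan R _ (Set.range (letter R))

theorem letter_mem_lieElements (x : X) : letter R x ∈ lieElements R X :=
  LieSubalgebra.subset_lieSpan ⟨x, rfl⟩

theorem constantCoeff_of_mem_lieElements {p : WordAlgebra R X} (hp : p ∈ lieElements R X) :
    constantCoeff p = 0 := by
  induction hp using LieSubalgebra.lieSpan_induction with
  | mem p hp =>
    obtain ⟨x, rfl⟩ := hp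
    exact constantCoeff_word_of_ne_nil (List.cons_ne_nil x [])
  | zero => exact map_zero _
  | add p q _ _ hp hq => rw [map_add, hp, hq, add_zero]
  | smul r p _ hp => rw [map_smul, hp, smul_zero]
  | lie p q _ _ hp hq => rw [Ring.lie_def, map_sub, map_mul, map_mul, hp, hq, mul_zero, sub_zero]

/-- The Dynkin operator: the linear endomorphism of the free associative algebra sending a word
`x₁x₂⋯xₙ` to the left-normed bracket of its letters. -/
def dynkinOperator : WordAlgebra R X →ₗ[R] WordAlgebra R X :=
  (MonoidAlgebra.basis (FreeMonoid X) R).constr R fun w => leftNormed (w.toList.map (letter R))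

theorem dynkinOperator_word (l : List X) :
    dynkinOperator (word R l) = leftNormed (l.map (letter R)) := by
  rw [word, ← MonoidAlgebra.basis_apply, dynkinOperator, Module.Basis.constr_basis,
    FreeMonoid.toList_ofList]

theorem dynkinOperator_one : dynkinOperator (1 : WordAlgebra R X) = 0 :=
  dynkinOperator_word []

theorem dynkinOperator_letter (x : X) : dynkinOperator (letter R x) = letter R x :=
  dynkinOperator_word [x]

theorem dynkinOperator_mul_letter (y : WordAlgebra R X) (x : X) :
    dynkinOperator (y * letter R x) =
      ⁅dynkinOperator y, letter R x⁆ + constantCoeff y • letter R x := by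
  suffices h : dynkinOperator ∘ₗ LinearMap.mulRight R (letter R x) =
      (LinearMap.mulRight R (letter R x) - LinearMap.mulLeft R (letter R x)) ∘ₗ dynkinOperator +
        constantCoeff.toLinearMap.smulRight (letter R x) from LinearMap.congr_fun h y
  refine WordAlgebra.linearMap_ext fun l => ?_
  change dynkinOperator (word R l * letter R x) =
    ⁅dynkinOperator (word R l), letter R x⁆ + constantCoeff (word R l) • letter R x
  rcases eq_or_ne l [] with rfl | hl
  · rw [word_nil, one_mul, dynkinOperator_letter, dynkinOperator_one, zero_lie, map_one, one_smul,
      zero_add]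
  · rw [← word_concat, dynkinOperator_word, dynkinOperator_word, List.map_append,
      List.map_singleton, leftNormed_concat (by simpa using hl), constantCoeff_word_of_ne_nil hl,
      zero_smul, add_zero]

theorem dynkinOperator_mul_of_mem_lieElements {p : WordAlgebra R X} (hp : p ∈ lieElements R X)
    (y : WordAlgebra R X) :
    dynkinOperator (y * p) = ⁅dynkinOperator y, p⁆ + constantCoeff y • dynkinOperator p := by
  induction hp using LieSubalgebra.lieSpan_induction generalizing y with
  | mem p hp =>
    obtain ⟨x, rfl⟩ := hp
    rw [dynkinOperator_mul_letter, dynkinOperator_letter]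
  | zero => simp
  | add p q _ _ ihp ihq =>
    rw [mul_add, map_add, ihp, ihq, lie_add, map_add, smul_add]
    abel
  | smul r p _ ihp =>
    rw [mul_smul_comm, map_smul, ihp, lie_smul, map_smul, smul_add, smul_comm r]
  | lie p q hp hq ihp ihq =>
    have dynkin_mul_commutator (y : WordAlgebra R X) : dynkinOperator (y * (p * q - q * p)) =
        ⁅⁅dynkinOperator y, p⁆ + constantCoeff y • dynkinOperator p, q⁆ -
          ⁅⁅dynkinOperator y, q⁆ + constantCoeff y • dynkinOperator q, p⁆ := by
      rw [mul_sub, ← mul_assoc, ← mul_assoc, map_sub, ihq, ihp, ihp, ihq, map_mul, map_mul,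
        constantCoeff_of_mem_lieElements hp, constantCoeff_of_mem_lieElements hq]
      simp only [mul_zero, zero_smul, add_zero]
    have dynkin_commutator : dynkinOperator (p * q - q * p) =
        ⁅dynkinOperator p, q⁆ - ⁅dynkinOperator q, p⁆ := by
      simpa [dynkinOperator_one] using dynkin_mul_commutator 1
    rw [Ring.lie_def p q, dynkin_commutator, dynkin_mul_commutator, ← Ring.lie_def p q, leibniz_lie,
      ← lie_skew p]
    simp only [add_lie, smul_lie, smul_sub]
    abel

theorem dynkinOperator_lie {p q : WordAlgebra R X} (hp : p ∈ lieElements R X)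
    (hq : q ∈ lieElements R X) :
    dynkinOperator ⁅p, q⁆ = ⁅dynkinOperator p, q⁆ + ⁅p, dynkinOperator q⁆ := by
  rw [Ring.lie_def, map_sub, dynkinOperator_mul_of_mem_lieElements hq,
    dynkinOperator_mul_of_mem_lieElements hp, constantCoeff_of_mem_lieElements hp,
    constantCoeff_of_mem_lieElements hq, zero_smul, zero_smul, add_zero, add_zero,
    ← lie_skew p, sub_eq_add_neg]

theorem dynkinOperator_leftNormed (l : List X) :
    dynkinOperator (leftNormed (l.map (letter R))) =
      l.length • leftNormed (l.map (letter R)) := by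
  induction l using List.reverseRecOn with
  | nil => simp [leftNormed]
  | append_singleton l x ih =>
    rcases eq_or_ne l [] with rfl | hl
    · simp [leftNormed_singleton, dynkinOperator_letter]
    · have hmem : leftNormed (l.map (letter R)) ∈ lieElements R X :=
        leftNormed_mem _ (by simp [letter_mem_lieElements])
      rw [List.map_append, List.map_singleton, leftNormed_concat (by simpa using hl),
        dynkinOperator_lie hmem (letter_mem_lieElements x), ih, dynkinOperator_letter,
        nsmul_lie, List.length_append, List.length_singleton, succ_nsmul]

end DynkinOperator

section Valley

variable {X : Type*} [Preorder X]

/-- The descents of the word `w` are exactly its first `k` positions (counted from `0`); for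
linearly ordered letters, `w` decreases for `k` steps and weakly increases from then on. -/
def IsValley (k : ℕ) (w : List X) : Prop :=
  ∀ i (h : i + 1 < w.length), w[i + 1] < w[i] ↔ i < k

theorem isValley_ofFn {n k : ℕ} {f : Fin (n + 1) → X} :
    IsValley k (List.ofFn f) ↔ ∀ i : Fin n, f i.succ < f i.castSucc ↔ (i : ℕ) < k := by
  simp only [IsValley, List.length_ofFn, List.getElem_ofFn, add_lt_add_iff_right]
  exact (Fin.forall_iff (p := fun i : Fin n => f i.succ < f i.castSucc ↔ (i : ℕ) < k)).symm

theorem isValley_cons_max {m : X} {v : List X} (hm : ∀ x ∈ v, x < m) {k : ℕ} :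
    IsValley (k + 1) (m :: v) ↔ IsValley k v := by
  constructor
  · intro h i hi
    exact (h (i + 1) (by simpa using hi)).trans Nat.succ_lt_succ_iff
  · rintro h (_ | i) hi
    · simpa using hm _ (List.getElem_mem _)
    · simpa using h i (by simpa using hi)

theorem not_isValley_zero_cons_max {m : X} {v : List X} (hv : v ≠ []) (hm : ∀ x ∈ v, x < m) :
    ¬ IsValley 0 (m :: v) := fun h =>
  Nat.lt_irrefl 0 <| (h 0 (by simpa using List.length_pos_iff.2 hv)).1 <|
    by simpa using hm _ (List.getElem_mem _)

theorem isValley_concat_max {m : X} {v : List X} (hm : ∀ x ∈ v, x < m) {k : ℕ}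
    (hk : k < v.length) : IsValley k (v ++ [m]) ↔ IsValley k v := by
  constructor
  · intro h i hi
    simpa [List.getElem_append_left, hi, Nat.lt_of_succ_lt hi] using h i (by grind)
  · intro h i hi
    rcases Nat.lt_or_ge (i + 1) v.length with hi' | hi'
    · simpa [List.getElem_append_left, hi', Nat.lt_of_succ_lt hi'] using h i hi'
    · have := hm (v[i]'(by grind)) (List.getElem_mem _)
      grind

theorem not_isValley_length_concat_max {m : X} {v : List X} (hv : v ≠ []) (hm : ∀ x ∈ v, x < m) :
    ¬ IsValley v.length (v ++ [m]) := by
  intro h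
  have hpos : 0 < v.length := List.length_pos_iff.2 hv
  have last_lt : v[v.length - 1] < m := hm _ (List.getElem_mem _)
  have descent := h (v.length - 1) (by grind)
  grind

theorem not_isValley_insertIdx_max {m : X} {v : List X} (hm : ∀ x ∈ v, x < m) {i : ℕ}
    (hi : i + 1 < v.length) (k : ℕ) : ¬ IsValley k (v.insertIdx (i + 1) m) := by
  intro h
  have left_lt : v[i] < m := hm _ (List.getElem_mem _)
  have right_lt : v[i + 1] < m := hm _ (List.getElem_mem _)
  have ascent := h i (by grind)
  have descent := h (i + 1) (by grind)
  grind

open Classical in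
/-- The coefficient of a nonempty word `w` in the Dynkin element: `(-1) ^ k` if the descents of `w`
are exactly its first `k` positions, and `0` if its descents are not an initial segment. On `[]`
the sum is empty and the value is `0`. -/
def valleySign (R : Type*) [CommRing R] (w : List X) : R :=
  ∑ k ∈ range w.length, if IsValley k w then (-1) ^ k else 0

variable {R : Type*} [CommRing R]

theorem valleySign_singleton (x : X) : valleySign R [x] = 1 := by
  simp [valleySign, IsValley]

theorem valleySign_cons_max {m : X} {v : List X} (hv : v ≠ []) (hm : ∀ x ∈ v, x < m) :
    valleySign R (m :: v) = -valleySign R v := by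
  classical
  simp only [valleySign, List.length_cons, sum_range_succ', isValley_cons_max hm,
    if_neg (not_isValley_zero_cons_max hv hm), add_zero, ← sum_neg_distrib, pow_succ, mul_neg_one,
    neg_ite, neg_zero]

theorem valleySign_concat_max {m : X} {v : List X} (hv : v ≠ []) (hm : ∀ x ∈ v, x < m) :
    valleySign R (v ++ [m]) = valleySign R v := by
  classical
  simp only [valleySign, List.length_append, List.length_singleton, sum_range_succ,
    if_neg (not_isValley_length_concat_max hv hm), add_zero]
  refine sum_congr rfl fun k hk => ?_
  rw [isValley_concat_max hm (mem_range.1 hk)]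

theorem valleySign_insertIdx_max {m : X} {v : List X} (hm : ∀ x ∈ v, x < m) {i : ℕ}
    (hi : i + 1 < v.length) : valleySign R (v.insertIdx (i + 1) m) = 0 := by
  classical
  exact sum_eq_zero fun k _ => if_neg (not_isValley_insertIdx_max hm hi k)

end Valley

section Permutations

theorem sum_map_permutations'Aux {α M : Type*} [AddCommMonoid M] (F : List α → M) (x : α)
    (l : List α) : ((l.permutations'Aux x).map F).sum =
      ∑ i ∈ range (l.length + 1), F (l.insertIdx i x) := by
  induction l generalizing F with
  | nil => simp
  | cons y l ih =>
    rw [List.permutations'Aux, List.map_cons, List.sum_cons, List.map_map, ih, List.length_cons,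
      sum_range_succ' _ (l.length + 1), add_comm]
    rfl

theorem sum_map_permutations'_finRange {M : Type*} [AddCommMonoid M] (n : ℕ)
    (F : List (Fin n) → M) :
    ((List.finRange n).permutations'.map F).sum = ∑ σ : Equiv.Perm (Fin n), F (List.ofFn σ) := by
  have ofFn_injective : Function.Injective fun σ : Equiv.Perm (Fin n) => List.ofFn σ :=
    List.ofFn_injective.comp DFunLike.coe_injective
  have words_eq : (univ.val.map fun σ : Equiv.Perm (Fin n) => List.ofFn σ) =
      ((List.finRange n).permutations' : Multiset (List (Fin n))) := by
    refine Multiset.eq_of_le_of_card_le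
      ((Multiset.le_iff_subset (univ.nodup.map ofFn_injective)).2 fun w hw => ?_) ?_
    · obtain ⟨σ, -, rfl⟩ := Multiset.mem_map.1 hw
      rw [Multiset.mem_coe, List.mem_permutations', List.ofFn_eq_map]
      exact σ.map_finRange_perm
    · rw [Multiset.coe_card, Multiset.card_map,
        ← (List.permutations_perm_permutations' _).length_eq, List.length_permutations,
        List.length_finRange, card_val, card_univ, Fintype.card_perm, Fintype.card_fin]
  rw [← Multiset.sum_coe, ← Multiset.map_coe, ← words_eq, Multiset.map_map]
  rfl

variable {R X : Type*} [CommRing R] [Preorder X]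

attribute [local instance] LieRing.ofAssociativeRing

theorem sum_map_permutations'Aux_valleySign {m : X} {v : List X} (hv : v ≠ [])
    (hm : ∀ x ∈ v, x < m) :
    ((v.permutations'Aux m).map fun w => valleySign R w • word R w).sum =
      valleySign R v • ⁅word R v, letter R m⁆ := by
  obtain ⟨k, hk⟩ := Nat.exists_eq_succ_of_ne_zero (mt List.length_eq_zero_iff.1 hv)
  have middle : ∑ i ∈ range k, valleySign R (v.insertIdx (i + 1) m) •
      word R (v.insertIdx (i + 1) m) = 0 :=
    sum_eq_zero fun i hi => by
      rw [valleySign_insertIdx_max hm (by rw [hk]; exact Nat.succ_lt_succ (mem_range.1 hi)),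
        zero_smul]
  rw [sum_map_permutations'Aux, sum_range_succ, List.insertIdx_length_self, hk, sum_range_succ',
    middle, zero_add, List.insertIdx_zero, valleySign_cons_max hv hm, valleySign_concat_max hv hm,
    word_cons, word_concat, Ring.lie_def, smul_sub, neg_smul, neg_add_eq_sub]

theorem leftNormed_eq_sum_valleySign {l : List X} (hne : l ≠ []) (hl : l.SortedLT) :
    leftNormed (l.map (letter R)) =
      (l.permutations'.map fun w => valleySign R w • word R w).sum := by
  induction l using List.reverseRecOn with
  | nil => exact absurd rfl hne
  | append_singleton l m ih =>
    rcases eq_or_ne l [] with rfl | hne'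
    · simp [leftNormed_singleton, valleySign_singleton, letter]
    have hl' := List.pairwise_append.1 hl.pairwise
    have hm : ∀ x ∈ l, x < m := fun x hx => hl'.2.2 x hx m (List.mem_singleton_self m)
    have insert_max (v : List X) (hv : v ∈ l.permutations') :
        ((v.permutations'Aux m).map fun w => valleySign R w • word R w).sum =
          ⁅valleySign R v • word R v, letter R m⁆ := by
      have hvl : v.Perm l := List.mem_permutations'.1 hv
      have hv_ne : v ≠ [] := by
        rintro rfl
        exact hne' (List.nil_perm.1 hvl)
      rw [smul_lie]
      exact sum_map_permutations'Aux_valleySign hv_ne fun x hx => hm x (hvl.mem_iff.1 hx)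
    rw [List.map_append, List.map_singleton, leftNormed_concat (by simpa using hne'),
      ih hne' hl'.1.sortedLT, list_sum_lie, List.map_map,
      ((List.perm_append_singleton m l).permutations'.map _).sum_eq, List.permutations',
      List.map_flatMap, List.flatMap_def, List.sum_flatten, List.map_map]
    exact congrArg List.sum (List.map_congr_left fun v hv => (insert_max v hv).symm)

end Permutations

section DynkinElement

attribute [local instance] LieRing.ofAssociativeRing

variable (R : Type*) [CommRing R]

/-- The element `theta n`, with coefficients in an arbitrary commutative ring. -/
def dynkinElement (n : ℕ) : MonoidAlgebra R (Equiv.Perm (Fin (n + 1))) :=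
  ∑ k ∈ range (n + 1),
    ((-1 : R) ^ k) •
      ∑ σ with Des σ = univ.filter fun i : Fin n => (i : ℕ) < k, MonoidAlgebra.single σ (1 : R)

theorem dynkinElement_eq_sum_valleySign (n : ℕ) :
    dynkinElement R n = ∑ σ : Equiv.Perm (Fin (n + 1)),
      valleySign R (List.ofFn σ) • MonoidAlgebra.single σ (1 : R) := by
  classical
  have des_eq_iff (k : ℕ) (σ : Equiv.Perm (Fin (n + 1))) :
      Des σ = univ.filter (fun i : Fin n => (i : ℕ) < k) ↔ IsValley k (List.ofFn σ) := by
    rw [isValley_ofFn]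
    simp [Des, Finset.ext_iff]
  simp only [dynkinElement, valleySign, des_eq_iff, List.length_ofFn, smul_sum, sum_filter,
    sum_smul, smul_ite, ite_smul, smul_zero, zero_smul]
  exact sum_comm

/-- The linear map sending a permutation `σ` to its one-line notation `σ(0)σ(1)⋯σ(n-1)`. -/
def oneLine (n : ℕ) : MonoidAlgebra R (Equiv.Perm (Fin n)) →ₗ[R] WordAlgebra R (Fin n) :=
  MonoidAlgebra.mapDomainLinearMap R R fun σ => FreeMonoid.ofList (List.ofFn σ)

variable {R} {n : ℕ}

theorem oneLine_single (σ : Equiv.Perm (Fin n)) :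
    oneLine R n (MonoidAlgebra.single σ 1) = word R (List.ofFn σ) :=
  MonoidAlgebra.mapDomainLinearMap_single _ _ _

theorem oneLine_injective : Function.Injective (oneLine R n) :=
  MonoidAlgebra.mapDomain_injective <|
    FreeMonoid.ofList.injective.comp <| List.ofFn_injective.comp DFunLike.coe_injective

theorem oneLine_single_mul (σ : Equiv.Perm (Fin n)) (y : MonoidAlgebra R (Equiv.Perm (Fin n))) :
    oneLine R n (MonoidAlgebra.single σ 1 * y) = mapLetters R σ (oneLine R n y) := by
  suffices h : oneLine R n ∘ₗ LinearMap.mulLeft R (MonoidAlgebra.single σ 1) =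
      (mapLetters R σ).toLinearMap ∘ₗ oneLine R n from LinearMap.congr_fun h y
  ext τ : 2
  simp [MonoidAlgebra.single_mul_single, oneLine_single, mapLetters_word, List.map_ofFn,
    Function.comp_def]

theorem oneLine_dynkinElement (n : ℕ) :
    oneLine R (n + 1) (dynkinElement R n) =
      leftNormed ((List.finRange (n + 1)).map (letter R)) := by
  rw [leftNormed_eq_sum_valleySign (by simp) (List.sortedLT_finRange _),
    sum_map_permutations'_finRange, dynkinElement_eq_sum_valleySign, map_sum]
  simp only [map_smul, oneLine_single]

theorem oneLine_mul_dynkinElement (x : MonoidAlgebra R (Equiv.Perm (Fin (n + 1)))) :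
    oneLine R (n + 1) (x * dynkinElement R n) = dynkinOperator (oneLine R (n + 1) x) := by
  suffices h : oneLine R (n + 1) ∘ₗ LinearMap.mulRight R (dynkinElement R n) =
      dynkinOperator ∘ₗ oneLine R (n + 1) from LinearMap.congr_fun h x
  ext σ : 2
  change oneLine R (n + 1) (MonoidAlgebra.single σ 1 * dynkinElement R n) =
    dynkinOperator (oneLine R (n + 1) (MonoidAlgebra.single σ 1))
  rw [oneLine_single_mul, oneLine_dynkinElement, mapLetters_leftNormed, oneLine_single,
    dynkinOperator_word, List.ofFn_eq_map]

variable (R n) in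
theorem dynkin_idempotent_general :
    dynkinElement R n * dynkinElement R n = (n + 1 : R) • dynkinElement R n := by
  apply oneLine_injective
  rw [oneLine_mul_dynkinElement, map_smul, oneLine_dynkinElement, dynkinOperator_leftNormed,
    List.length_finRange, ← Nat.cast_smul_eq_nsmul R, Nat.cast_succ]

end DynkinElement

/-- **Dynkin's theorem** (group-algebra form of `Ψ_n ∗ Ψ_n = n Ψ_n`): in `ℚ[S_{n+1}]`,
the element `θ = ∑_{k} (−1)^k ∑_{Des(σ)={1,…,k}} σ` satisfies `θ·θ = (n+1)·θ`. -/
theorem dynkin_idempotent (n : ℕ) :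
    theta n * theta n = ((n + 1 : ℚ)) • theta n :=
  dynkin_idempotent_general ℚ n

end

end Descents10
end

section
/- In the group algebra ℚ[Sₙ] (n ≥ 1), let φₙ := Σ_{σ ∈ Sₙ} (−1)^{d(σ)} C(n−1, d(σ))^{−1} σ, where d(σ) is the number of descents of σ and C(a,b) is the binomial coefficient. Then φₙ · φₙ = n · φₙ; equivalently, (1/n)φₙ is an idempotent of ℚ[Sₙ] (the first Eulerian idempotent; this is the group-algebra form of the internal-product identity Φ_n ∗ Φ_n = nΦ_n). -/
open Finset

namespace Descents11

noncomputable section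

/-- The descent set of a permutation `σ` of `{0,…,n}`: the set of `i ∈ Fin n`
(representing the position `i+1 ∈ {1,…,n}`) with `σ(i) > σ(i+1)`. -/
def Des {n : ℕ} (σ : Equiv.Perm (Fin (n + 1))) : Finset (Fin n) :=
  Finset.univ.filter fun i => σ i.succ < σ i.castSucc

/-- The first Eulerian element
`φ = ∑_{σ} (−1)^{d(σ)} C(n−1, d(σ))⁻¹ σ` in the group algebra of the symmetric group
on `n+1` letters (`d(σ)` = number of descents). -/
def phi (n : ℕ) : MonoidAlgebra ℚ (Equiv.Perm (Fin (n + 1))) :=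
  ∑ σ : Equiv.Perm (Fin (n + 1)),
    ((-1 : ℚ) ^ (Des σ).card / (Nat.choose n (Des σ).card : ℚ)) •
      MonoidAlgebra.single σ (1 : ℚ)

open Polynomial
open scoped Nat

/-!
Summing the sorting permutations of all words `w : Fin (n + 1) → Fin p` gives an element `S p` of
the group algebra. Sorting by `w` and then by `v` is sorting by a word of pairs, so
`S p * S q = S (p * q)`. On the other hand, the words with sorting permutation `σ` number
`C(p + a, n + 1)`, where `a` is the number of ascents of `σ`, so `S p` is a polynomial
`∑ k, p ^ k • e k` in `p`. Comparing coefficients in `S p * S q = S (p * q)` shows that the `e k`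
are orthogonal idempotents, and `phi n = (n + 1) • e 1`.
-/

section PolynomialFamilies

variable {K : Type*} [Field K] [CharZero K] {N : ℕ}

theorem eq_of_forall_sum_natCast_pow_smul_eq {V : Type*} [AddCommGroup V] [Module K V]
    {a b : Fin N → V}
    (h : ∀ p : ℕ, ∑ i : Fin N, (p : K) ^ (i : ℕ) • a i = ∑ i : Fin N, (p : K) ^ (i : ℕ) • b i) :
    a = b := by
  ext i
  rw [← sub_eq_zero, ← Module.forall_dual_apply_eq_zero_iff K]
  intro f
  have vandermonde (p : Fin N) : ∑ i : Fin N, ((p : ℕ) : K) ^ (i : ℕ) * f (a i - b i) = 0 := by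
    simpa [smul_sub, mul_sub, sub_eq_zero] using congrArg f (h p)
  exact congrFun (Matrix.eq_zero_of_forall_index_sum_pow_mul_eq_zero
    (Nat.cast_injective.comp Fin.val_injective) vandermonde) i

theorem orthogonalIdempotents_of_sum_natCast_pow_smul_mul {A : Type*} [Ring A] [Algebra K A]
    {a : Fin N → A}
    (h : ∀ p q : ℕ,
      (∑ i : Fin N, (p : K) ^ (i : ℕ) • a i) * ∑ i : Fin N, (q : K) ^ (i : ℕ) • a i =
        ∑ i : Fin N, ((p * q : ℕ) : K) ^ (i : ℕ) • a i) :
    OrthogonalIdempotents a := by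
  have mul_sum_eq (q : ℕ) :
      (fun i => a i * ∑ j : Fin N, (q : K) ^ (j : ℕ) • a j) =
        fun i : Fin N => (q : K) ^ (i : ℕ) • a i :=
    eq_of_forall_sum_natCast_pow_smul_eq (K := K) fun p => by
      simpa only [sum_mul, smul_mul_assoc, Nat.cast_mul, mul_pow, mul_smul] using h p q
  have mul_eq (i : Fin N) : (fun j => a i * a j) = Pi.single i (a i) :=
    eq_of_forall_sum_natCast_pow_smul_eq (K := K) fun q => by
      simpa [mul_sum, Pi.single_apply] using congrFun (mul_sum_eq q) i
  exact ⟨fun i => (congrFun (mul_eq i) i).trans (Pi.single_eq_same i _),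
    fun i j hij => by simpa [hij.symm] using congrFun (mul_eq i) j⟩

end PolynomialFamilies

section SortingPermutations

variable {N : ℕ} {α β : Type*} [LinearOrder α] [LinearOrder β]

theorem eq_sort_iff_strictMono_toLex {σ : Equiv.Perm (Fin N)} {w : Fin N → α} :
    σ = Tuple.sort w ↔ StrictMono fun i => toLex (w (σ i), σ i) :=
  Tuple.eq_sort_iff'

theorem sort_comp_of_strictMono {e : α → β} (he : StrictMono e) (w : Fin N → α) :
    Tuple.sort (e ∘ w) = Tuple.sort w :=
  (Tuple.eq_sort_iff.2 ⟨he.monotone.comp (Tuple.monotone_sort w), fun i j hij h =>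
    (Tuple.eq_sort_iff.1 rfl).2 i j hij (he.injective h)⟩).symm

theorem sort_mul_sort (w : Fin N → α) (v : Fin N → β) :
    Tuple.sort w * Tuple.sort v =
      Tuple.sort fun i => toLex (v ((Tuple.sort w).symm i), w i) := by
  have hw := eq_sort_iff_strictMono_toLex.1 (Eq.refl (Tuple.sort w))
  have hv := eq_sort_iff_strictMono_toLex.1 (Eq.refl (Tuple.sort v))
  rw [eq_sort_iff_strictMono_toLex]
  intro i j hij
  simp only [Prod.Lex.toLex_lt_toLex, Equiv.Perm.mul_apply, Equiv.symm_apply_apply]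
  rcases Prod.Lex.toLex_lt_toLex.1 (hv hij) with v_lt | ⟨v_eq, sort_lt⟩
  · exact .inl (.inl v_lt)
  rcases Prod.Lex.toLex_lt_toLex.1 (hw sort_lt) with w_lt | ⟨w_eq, lt⟩
  · exact .inl (.inr ⟨v_eq, w_lt⟩)
  · exact .inr ⟨congrArg toLex (Prod.ext v_eq w_eq), lt⟩

end SortingPermutations

section SortSum

variable (K : Type*) [Semiring K] (N : ℕ)

/-- The sum, in the group algebra, of the sorting permutations of all words of length `N` over the
ordered alphabet `α`. It depends only on the size `p` of `α`, and is the element `S p` of the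
argument above. -/
def sortSum (α : Type*) [LinearOrder α] [Fintype α] : MonoidAlgebra K (Equiv.Perm (Fin N)) :=
  ∑ w : Fin N → α, MonoidAlgebra.single (Tuple.sort w) 1

variable {α β : Type*} [LinearOrder α] [LinearOrder β] [Fintype α] [Fintype β]

theorem sortSum_congr (e : α ≃o β) : sortSum K N α = sortSum K N β :=
  Fintype.sum_equiv ((Equiv.refl _).arrowCongr e.toEquiv) _ _ fun w =>
    congrArg (MonoidAlgebra.single · 1) (sort_comp_of_strictMono e.strictMono w).symm

theorem sortSum_mul_sortSum : sortSum K N α * sortSum K N β = sortSum K N (β ×ₗ α) := by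
  calc sortSum K N α * sortSum K N β
      = ∑ w : Fin N → α, ∑ v : Fin N → β, MonoidAlgebra.single
          (Tuple.sort fun i => toLex (v ((Tuple.sort w).symm i), w i)) 1 := by
        simp only [sortSum, sum_mul_sum, MonoidAlgebra.single_mul_single, sort_mul_sort, one_mul]
    _ = ∑ w : Fin N → α, ∑ v : Fin N → β, MonoidAlgebra.single
          (Tuple.sort fun i => toLex (v i, w i)) 1 :=
        sum_congr rfl fun w _ => Fintype.sum_equiv
          ((Tuple.sort w).arrowCongr (Equiv.refl β)) _ _ fun _ => rfl
    _ = ∑ vw : (Fin N → β) × (Fin N → α), MonoidAlgebra.single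
          (Tuple.sort fun i => toLex (vw.1 i, vw.2 i)) 1 := by
        rw [sum_comm, ← Fintype.sum_prod_type']
    _ = sortSum K N (β ×ₗ α) :=
        Fintype.sum_equiv
          ((Equiv.arrowProdEquivProdArrow (Fin N) (fun _ => β) fun _ => α).symm.trans
            ((Equiv.refl _).arrowCongr toLex)) _ _ fun _ => rfl

theorem sortSum_fin_mul_sortSum_fin (p q : ℕ) :
    sortSum K N (Fin p) * sortSum K N (Fin q) = sortSum K N (Fin (p * q)) := by
  have card_lex : Fintype.card (Fin q ×ₗ Fin p) = p * q := by
    rw [Fintype.card_lex, Fintype.card_prod, Fintype.card_fin, Fintype.card_fin, mul_comm]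
  rw [sortSum_mul_sortSum, sortSum_congr K N (Fintype.orderIsoFinOfCardEq _ card_lex)]

end SortSum

section Counting

variable {n : ℕ}

/-- `a` is weakly increasing, and strictly increasing at each position in `D`: for `D = Des σ` this
is the `P`-partition condition for `σ`. -/
def MonotoneStrictAt {α : Type*} [Preorder α] (D : Finset (Fin n)) (a : Fin (n + 1) → α) : Prop :=
  ∀ i, a i.castSucc ≤ a i.succ ∧ (i ∈ D → a i.castSucc < a i.succ)

theorem eq_sort_iff_monotoneStrictAt {α : Type*} [LinearOrder α] {σ : Equiv.Perm (Fin (n + 1))}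
    {w : Fin (n + 1) → α} : σ = Tuple.sort w ↔ MonotoneStrictAt (Des σ) (w ∘ σ) := by
  rw [eq_sort_iff_strictMono_toLex, Fin.strictMono_iff_lt_succ]
  refine forall_congr' fun i => ?_
  have σ_ne : σ i.castSucc ≠ σ i.succ := σ.injective.ne Fin.castSucc_lt_succ.ne
  have not_descent : ¬ σ i.succ < σ i.castSucc ↔ σ i.castSucc < σ i.succ :=
    not_lt.trans σ_ne.le_iff_lt
  simp only [Prod.Lex.toLex_lt_toLex, ← not_descent, Des, mem_filter, mem_univ, true_and,
    Function.comp_apply, le_iff_lt_or_eq]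
  tauto

/-- The number of positions before `i` that are not in `D`. Adding it to a `MonotoneStrictAt D` word
makes the word strictly increasing. -/
def weakSteps (D : Finset (Fin n)) : Fin (n + 1) → ℕ :=
  Fin.partialSum fun j => if j ∈ D then 0 else 1

variable (D : Finset (Fin n))

theorem weakSteps_zero : weakSteps D 0 = 0 :=
  Fin.partialSum_zero _

theorem weakSteps_succ (i : Fin n) :
    weakSteps D i.succ = weakSteps D i.castSucc + if i ∈ D then 0 else 1 :=
  Fin.partialSum_succ _ i

theorem weakSteps_last : weakSteps D (Fin.last n) = #Dᶜ := by
  have sum_eq : weakSteps D (Fin.last n) = ∑ j : Fin n, if j ∈ D then 0 else 1 := by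
    rw [weakSteps, Fin.partialSum, Fin.val_last, List.take_of_length_le (by simp), List.sum_ofFn]
  simp [sum_eq, sum_ite, filter_not, compl_eq_univ_sdiff]

theorem monotone_weakSteps : Monotone (weakSteps D) :=
  Fin.monotone_iff_le_succ.2 fun i => by simp [weakSteps_succ]

theorem monotoneStrictAt_iff_strictMono_add_weakSteps {p : ℕ} {a : Fin (n + 1) → Fin p} :
    MonotoneStrictAt D a ↔ StrictMono fun i => (a i : ℕ) + weakSteps D i := by
  rw [Fin.strictMono_iff_lt_succ]
  refine forall_congr' fun i => ?_
  simp only [weakSteps_succ, Fin.le_def, Fin.lt_def]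
  split_ifs with hi <;> simp only [hi, true_imp_iff, false_imp_iff, and_true] <;> omega

section StrictMono

variable {g : Fin (n + 1) → ℕ} (hg : StrictMono g)
include hg

theorem weakSteps_le_of_strictMono (i : Fin (n + 1)) : weakSteps D i ≤ g i := by
  induction i using Fin.induction with
  | zero => simp [weakSteps_zero]
  | succ i ih =>
    have := hg i.castSucc_lt_succ
    rw [weakSteps_succ]
    split_ifs <;> omega

theorem monotone_sub_weakSteps_of_strictMono : Monotone fun i => g i - weakSteps D i := by
  refine Fin.monotone_iff_le_succ.2 fun i => ?_
  have := hg i.castSucc_lt_succ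
  rw [weakSteps_succ]
  split_ifs <;> omega

theorem sub_weakSteps_lt_of_strictMono {p : ℕ} (hp : g (Fin.last n) < p + #Dᶜ) (i : Fin (n + 1)) :
    g i - weakSteps D i < p := by
  have le_last := monotone_sub_weakSteps_of_strictMono D hg (Fin.le_last i)
  have := weakSteps_le_of_strictMono D hg (Fin.last n)
  simp only [weakSteps_last] at le_last this
  omega

end StrictMono

/-- Adding `weakSteps D` identifies the words over `Fin p` satisfying `MonotoneStrictAt D` with the
strictly increasing words over an alphabet enlarged by `#Dᶜ` letters. -/
def monotoneStrictAtEquiv (p : ℕ) :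
    {a : Fin (n + 1) → Fin p // MonotoneStrictAt D a} ≃ (Fin (n + 1) ↪o Fin (p + #Dᶜ)) where
  toFun a := OrderEmbedding.ofStrictMono
    (fun i => ⟨a.1 i + weakSteps D i, add_lt_add_of_lt_of_le (a.1 i).isLt
      (weakSteps_last D ▸ monotone_weakSteps D i.le_last)⟩)
    ((monotoneStrictAt_iff_strictMono_add_weakSteps D).1 a.2)
  invFun g := ⟨fun i => ⟨g i - weakSteps D i,
      sub_weakSteps_lt_of_strictMono D g.strictMono (g (Fin.last n)).isLt i⟩, by
    have g_strictMono : StrictMono fun i => (g i : ℕ) := g.strictMono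
    simpa only [monotoneStrictAt_iff_strictMono_add_weakSteps,
      Nat.sub_add_cancel (weakSteps_le_of_strictMono D g_strictMono _)] using g_strictMono⟩
  left_inv a := by
    ext i
    exact Nat.add_sub_cancel _ _
  right_inv g := by
    ext i
    exact Nat.sub_add_cancel (weakSteps_le_of_strictMono D (g := fun i => g i) g.strictMono i)

theorem card_monotoneStrictAt (p : ℕ) :
    Nat.card {a : Fin (n + 1) → Fin p // MonotoneStrictAt D a} = (p + #Dᶜ).choose (n + 1) := by
  rw [Nat.card_congr ((monotoneStrictAtEquiv D p).trans Set.powersetCard.ofFinEmbEquiv),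
    Set.powersetCard.card, Nat.card_fin]

theorem card_filter_sort_eq (p : ℕ) (σ : Equiv.Perm (Fin (n + 1))) :
    #{w : Fin (n + 1) → Fin p | Tuple.sort w = σ} = (p + #(Des σ)ᶜ).choose (n + 1) := by
  rw [← card_monotoneStrictAt, ← Fintype.card_subtype, ← Nat.card_eq_fintype_card]
  exact Nat.card_congr ((σ.symm.arrowCongr (Equiv.refl _)).subtypeEquiv fun _ =>
    eq_comm.trans eq_sort_iff_monotoneStrictAt)

end Counting

theorem sortSum_fin_eq_sum_choose (K : Type*) [Semiring K] (n p : ℕ) :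
    sortSum K (n + 1) (Fin p) = ∑ σ : Equiv.Perm (Fin (n + 1)),
      MonoidAlgebra.single σ ((p + #(Des σ)ᶜ).choose (n + 1) : K) := by
  rw [sortSum, ← sum_fiberwise univ Tuple.sort]
  refine sum_congr rfl fun σ _ => ?_
  calc ∑ w : Fin (n + 1) → Fin p with Tuple.sort w = σ, MonoidAlgebra.single (Tuple.sort w) (1 : K)
      = ∑ w : Fin (n + 1) → Fin p with Tuple.sort w = σ, MonoidAlgebra.single σ (1 : K) :=
        sum_congr rfl fun w hw => by rw [(mem_filter.1 hw).2]
    _ = MonoidAlgebra.single σ ((p + #(Des σ)ᶜ).choose (n + 1) : K) := by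
        rw [sum_const, card_filter_sort_eq, MonoidAlgebra.smul_single, nsmul_one]

section BinomialPolynomial

theorem descPochhammer_eval_neg_one (R : Type*) [Ring R] (d : ℕ) :
    (descPochhammer R d).eval (-1) = (-1) ^ d * (d ! : R) := by
  have h := ascPochhammer_eval_neg_eq_descPochhammer R (-1) d
  rw [neg_neg, ascPochhammer_eval_one] at h
  rw [h, ← mul_assoc, ← pow_add, Even.neg_one_pow ⟨d, rfl⟩, one_mul]

theorem descPochhammer_comp_X_add_natCast (R : Type*) [CommRing R] (a d : ℕ) :
    (descPochhammer R (a + d + 1)).comp (X + (a : R[X])) =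
      (descPochhammer R a).comp (X + (a : R[X])) * (descPochhammer R d).comp (X - 1) * X := by
  rw [add_assoc, ← descPochhammer_mul, mul_comp, comp_assoc, sub_comp, X_comp, natCast_comp,
    add_sub_cancel_right, comp_X, descPochhammer_succ_left, mul_assoc, mul_comm X]

variable (K : Type*) [Field K]

/-- The polynomial `x ↦ C(x + a, m)`. This reading needs `m !` to be invertible in `K`. -/
def chooseAddPoly (m a : ℕ) : K[X] :=
  C (m ! : K)⁻¹ * (descPochhammer K m).comp (X + (a : K[X]))

theorem natDegree_chooseAddPoly_le (m a : ℕ) : (chooseAddPoly K m a).natDegree ≤ m := by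
  refine (natDegree_C_mul_le _ _).trans (natDegree_comp_le.trans ?_)
  rw [descPochhammer_natDegree, ← C_eq_natCast, natDegree_X_add_C, mul_one]

variable [CharZero K]

theorem eval_natCast_chooseAddPoly (m a p : ℕ) :
    (chooseAddPoly K m a).eval (p : K) = (p + a).choose m := by
  rw [Nat.cast_choose_eq_descPochhammer_div, chooseAddPoly, div_eq_inv_mul]
  simp

theorem coeff_one_chooseAddPoly (a d : ℕ) :
    (chooseAddPoly K (a + d + 1) a).coeff 1 = (-1) ^ d / ((a + d + 1) * (a + d).choose d) := by
  have eval_self : (descPochhammer K a).eval (a : K) = a ! := by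
    rw [descPochhammer_eval_eq_descFactorial, Nat.descFactorial_self]
  have coeff_one : (chooseAddPoly K (a + d + 1) a).coeff 1 =
      ((a + d + 1)! : K)⁻¹ * (a ! * ((-1) ^ d * d !)) := by
    rw [chooseAddPoly, coeff_C_mul, descPochhammer_comp_X_add_natCast, coeff_mul_X,
      coeff_zero_eq_eval_zero]
    simp [eval_self, descPochhammer_eval_neg_one]
  rw [coeff_one, ← Nat.choose_symm_add, Nat.cast_add_choose, Nat.factorial_succ]
  have factorial_ne_zero : ((a + d)! : K) ≠ 0 := Nat.cast_ne_zero.2 (Nat.factorial_ne_zero _)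
  push_cast
  field_simp

end BinomialPolynomial

section EulerianIdempotents

/-- The coefficient of `p ^ k` in `sortSum K (n + 1) (Fin p)`, seen as a polynomial in `p`. In
characteristic zero and for `1 ≤ k ≤ n + 1`, this is the `k`-th Eulerian idempotent of the symmetric
group on `n + 1` letters. -/
def eulerianElement (K : Type*) [Field K] (n k : ℕ) :
    MonoidAlgebra K (Equiv.Perm (Fin (n + 1))) :=
  ∑ σ : Equiv.Perm (Fin (n + 1)),
    MonoidAlgebra.single σ ((chooseAddPoly K (n + 1) #(Des σ)ᶜ).coeff k)

variable (K : Type*) [Field K] [CharZero K] (n : ℕ)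

theorem sortSum_fin_eq_sum_pow_smul_eulerianElement (p : ℕ) :
    sortSum K (n + 1) (Fin p) =
      ∑ k : Fin (n + 2), (p : K) ^ (k : ℕ) • eulerianElement K n k := by
  simp only [eulerianElement, smul_sum, MonoidAlgebra.smul_single]
  rw [sortSum_fin_eq_sum_choose, sum_comm]
  refine sum_congr rfl fun σ _ => ?_
  rw [← eval_natCast_chooseAddPoly, eval_eq_sum_range'
    (Nat.lt_succ_of_le (natDegree_chooseAddPoly_le K (n + 1) _)), ← Fin.sum_univ_eq_sum_range
    fun k => (chooseAddPoly K (n + 1) #(Des σ)ᶜ).coeff k * (p : K) ^ k]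
  simp only [mul_comm, smul_eq_mul]
  exact map_sum (MonoidAlgebra.singleAddHom σ) _ _

theorem orthogonalIdempotents_eulerianElement :
    OrthogonalIdempotents fun k : Fin (n + 2) => eulerianElement K n k :=
  orthogonalIdempotents_of_sum_natCast_pow_smul_mul (K := K) fun p q => by
    simpa only [sortSum_fin_eq_sum_pow_smul_eulerianElement] using
      sortSum_fin_mul_sortSum_fin K (n + 1) p q

theorem phi_eq_smul_eulerianElement_one : phi n = (n + 1 : ℚ) • eulerianElement ℚ n 1 := by
  rw [phi, eulerianElement, smul_sum]
  refine sum_congr rfl fun σ _ => ?_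
  have card_eq : #(Des σ)ᶜ + #(Des σ) = n := by rw [card_compl_add_card, Fintype.card_fin]
  have coeff_eq := coeff_one_chooseAddPoly ℚ #(Des σ)ᶜ #(Des σ)
  rw [← Nat.cast_add, card_eq] at coeff_eq
  rw [coeff_eq, MonoidAlgebra.smul_single, MonoidAlgebra.smul_single, smul_eq_mul, smul_eq_mul]
  field_simp

end EulerianIdempotents

/-- **The first Eulerian idempotent** (group-algebra form of `Φ_n ∗ Φ_n = n Φ_n`):
in `ℚ[S_{n+1}]`, the element `φ = ∑_σ (−1)^{d(σ)} C(n−1,d(σ))⁻¹ σ` satisfies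
`φ·φ = (n+1)·φ`; equivalently, `φ/(n+1)` is idempotent. -/
theorem eulerian_idempotent (n : ℕ) :
    phi n * phi n = ((n + 1 : ℚ)) • phi n := by
  have idem : eulerianElement ℚ n 1 * eulerianElement ℚ n 1 = eulerianElement ℚ n 1 :=
    (orthogonalIdempotents_eulerianElement ℚ n).idem 1
  rw [phi_eq_smul_eulerianElement_one, smul_mul_smul_comm, idem, smul_smul]

end

end Descents11
end

section
/- In the group algebra ℚ[Sₙ] (n ≥ 1), let θₙ := Σ_{k=0}^{n−1} (−1)^k Σ_{σ : Des(σ) = {1,…,k}} σ (Dynkin's element) and φₙ := Σ_{σ ∈ Sₙ} (−1)^{d(σ)} C(n−1, d(σ))^{−1} σ. Then φₙ · θₙ = n · φₙ and θₙ · φₙ = n · θₙ (the group-algebra form of the internal-product identities Ψ_n ∗ Φ_n = nΦ_n and Φ_n ∗ Ψ_n = nΨ_n). -/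
open Finset

namespace Descents12

noncomputable section

/-- The descent set of a permutation `σ` of `{0,…,n}`: the set of `i ∈ Fin n`
(representing the position `i+1 ∈ {1,…,n}`) with `σ(i) > σ(i+1)`. -/
def Des {n : ℕ} (σ : Equiv.Perm (Fin (n + 1))) : Finset (Fin n) :=
  Finset.univ.filter fun i => σ i.succ < σ i.castSucc

/-- Dynkin's element `θ = ∑_{k=0}^{n−1} (−1)^k ∑_{Des(σ)={1,…,k}} σ` in `ℚ[S_{n+1}]`. -/
def theta (n : ℕ) : MonoidAlgebra ℚ (Equiv.Perm (Fin (n + 1))) :=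
  ∑ k ∈ Finset.range (n + 1),
    ((-1 : ℚ) ^ k) •
      ∑ σ ∈ Finset.univ.filter
          (fun σ : Equiv.Perm (Fin (n + 1)) =>
            Des σ = Finset.univ.filter fun i : Fin n => (i : ℕ) < k),
        MonoidAlgebra.single σ (1 : ℚ)

/-- The first Eulerian element `φ = ∑_σ (−1)^{d(σ)} C(n−1,d(σ))⁻¹ σ` in `ℚ[S_{n+1}]`. -/
def phi (n : ℕ) : MonoidAlgebra ℚ (Equiv.Perm (Fin (n + 1))) :=
  ∑ σ : Equiv.Perm (Fin (n + 1)),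
    ((-1 : ℚ) ^ (Des σ).card / (Nat.choose n (Des σ).card : ℚ)) •
      MonoidAlgebra.single σ (1 : ℚ)

/-!
An element `x` of `ℚ[S_{n+1}]` killed on the right by every
`B_S = ∑_{Des σ ⊆ S} σ` with `S ≠ ∅` satisfies `x · ∑_{Des σ = T} σ = (-1)^{|T|} x` by
inclusion–exclusion, whence `x θ = x φ = (n + 1) x`. So it suffices that `θ` and `φ` are such
elements. Both are assembled from the stable sorting permutations `sort f` of functions `f`
on the letters, and `sort f · B_S` is the sum of the words that become sorted by `f` once they are
cut at the positions in `S`.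

For `θ`, the functions are `a ↦ ±a`, with minus signs on a set `L` of nonzero letters. Whether a
word with `S ≠ ∅` occurs depends on `L` only through the maxima of the adjacent pairs not cut by
`S`; these are fewer than `n`, so toggling in `L` a nonzero letter that is no such maximum cancels
all terms in pairs.

For `φ`, the coefficient of `σ` is `n + 1` times the linear coefficient in `m` of the polynomial
`C(m + n - d(σ), n + 1)` counting the `f` with values in `{0, …, m - 1}` and `sort f = σ`. The
coefficient of a word in `φ · B_S` is therefore `n + 1` times the linear coefficient of the
polynomial counting the `f` that sort its pieces independently. For `S ≠ ∅` there are at least two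
nonempty pieces, so this polynomial is divisible by `m²`.
-/

variable {n : ℕ}

section DescentSums

lemma mem_Des {σ : Equiv.Perm (Fin (n + 1))} {i : Fin n} :
    i ∈ Des σ ↔ σ i.succ < σ i.castSucc := by
  simp [Des]

lemma notMem_Des {σ : Equiv.Perm (Fin (n + 1))} {i : Fin n} :
    i ∉ Des σ ↔ σ i.castSucc < σ i.succ := by
  have hne : σ i.castSucc ≠ σ i.succ := σ.injective.ne Fin.castSucc_lt_succ.ne
  rw [mem_Des, not_lt, hne.le_iff_lt]

lemma Des_eq_empty_iff {σ : Equiv.Perm (Fin (n + 1))} : Des σ = ∅ ↔ σ = 1 := by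
  rw [← Equiv.Perm.monotone_iff, Fin.monotone_iff_le_succ, eq_empty_iff_forall_notMem]
  simp only [mem_Des, not_lt]

lemma card_Des_le (σ : Equiv.Perm (Fin (n + 1))) : #(Des σ) ≤ n :=
  card_finset_fin_le _

/-- The sum of the permutations with descent set exactly `T`: the ribbon basis of the descent
algebra. -/
def descentClassSum (T : Finset (Fin n)) : MonoidAlgebra ℚ (Equiv.Perm (Fin (n + 1))) :=
  ∑ σ with Des σ = T, MonoidAlgebra.single σ 1

/-- The sum of the permutations with descent set contained in `S`: the complete basis of the
descent algebra. -/
def descentSubsetSum (S : Finset (Fin n)) : MonoidAlgebra ℚ (Equiv.Perm (Fin (n + 1))) :=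
  ∑ σ with Des σ ⊆ S, MonoidAlgebra.single σ 1

lemma descentSubsetSum_empty : descentSubsetSum (∅ : Finset (Fin n)) = 1 := by
  simp [descentSubsetSum, Des_eq_empty_iff, sum_filter, MonoidAlgebra.one_def]

lemma sum_powerset_descentClassSum (S : Finset (Fin n)) :
    ∑ T ∈ S.powerset, descentClassSum T = descentSubsetSum S := by
  simp only [descentClassSum, descentSubsetSum, sum_fiberwise_eq_sum_filter, mem_powerset]

lemma theta_eq_sum_descentClassSum (n : ℕ) :
    theta n = ∑ k ∈ range (n + 1), (-1 : ℚ) ^ k • descentClassSum {i : Fin n | (i : ℕ) < k} :=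
  rfl

lemma phi_eq_sum_descentClassSum (n : ℕ) :
    phi n = ∑ T : Finset (Fin n), ((-1 : ℚ) ^ #T / n.choose #T) • descentClassSum T := by
  simp only [phi, descentClassSum, smul_sum]
  rw [← sum_fiberwise univ Des]
  refine sum_congr rfl fun T _ => sum_congr rfl fun σ hσ => ?_
  rw [(mem_filter.mp hσ).2]

lemma single_mul_descentSubsetSum (σ : Equiv.Perm (Fin (n + 1))) (S : Finset (Fin n)) :
    MonoidAlgebra.single σ (1 : ℚ) * descentSubsetSum S =
      ∑ π : Equiv.Perm (Fin (n + 1)) with Des (σ⁻¹ * π) ⊆ S, MonoidAlgebra.single π (1 : ℚ) := by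
  simp only [descentSubsetSum, mul_sum, MonoidAlgebra.single_mul_single, mul_one]
  exact sum_equiv (Equiv.mulLeft σ) (by simp) fun _ _ => rfl

lemma sum_smul_single_mul_descentSubsetSum (c : Equiv.Perm (Fin (n + 1)) → ℚ)
    (S : Finset (Fin n)) :
    (∑ σ, c σ • MonoidAlgebra.single σ (1 : ℚ)) * descentSubsetSum S =
      ∑ π, (∑ σ with Des (σ⁻¹ * π) ⊆ S, c σ) • MonoidAlgebra.single π (1 : ℚ) := by
  simp only [sum_mul, smul_mul_assoc, single_mul_descentSubsetSum, smul_sum, sum_smul, sum_filter,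
    smul_ite, smul_zero, ite_smul, zero_smul]
  exact sum_comm

end DescentSums

section Primitive

/-- The group-algebra counterpart of being a primitive (Lie) element: right multiplication by every
nontrivial element of the complete basis of the descent algebra kills `x`. -/
def IsPrimitive (x : MonoidAlgebra ℚ (Equiv.Perm (Fin (n + 1)))) : Prop :=
  ∀ S : Finset (Fin n), S.Nonempty → x * descentSubsetSum S = 0

lemma eq_zero_of_sum_powerset_eq_zero {ι M : Type*} [AddCommMonoid M]
    {g : Finset ι → M} (hg : ∀ T : Finset ι, ∑ S ∈ T.powerset, g S = 0) (T : Finset ι) :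
    g T = 0 := by
  induction T using Finset.strongInduction with
  | H T ih =>
    rw [← hg T]
    exact (sum_eq_single_of_mem T (mem_powerset_self T) fun S hS hne =>
      ih S ((mem_powerset.mp hS).ssubset_of_ne hne)).symm

variable {x : MonoidAlgebra ℚ (Equiv.Perm (Fin (n + 1)))}

lemma IsPrimitive.mul_descentClassSum (hx : IsPrimitive x) (T : Finset (Fin n)) :
    x * descentClassSum T = (-1 : ℚ) ^ #T • x := by
  refine sub_eq_zero.mp (eq_zero_of_sum_powerset_eq_zero
    (g := fun T => x * descentClassSum T - (-1 : ℚ) ^ #T • x) (fun T => ?_) T)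
  have hsign : ∑ S ∈ T.powerset, (-1 : ℚ) ^ #S = if T = ∅ then 1 else 0 := by
    exact_mod_cast sum_powerset_neg_one_pow_card (x := T)
  rw [sum_sub_distrib, ← mul_sum, sum_powerset_descentClassSum, ← sum_smul, hsign]
  rcases T.eq_empty_or_nonempty with rfl | hT
  · simp [descentSubsetSum_empty]
  · simp [hx T hT, hT.ne_empty]

lemma IsPrimitive.mul_theta (hx : IsPrimitive x) : x * theta n = (n + 1 : ℚ) • x := by
  have hterm : ∀ k ∈ range (n + 1),
      x * ((-1 : ℚ) ^ k • descentClassSum {i : Fin n | (i : ℕ) < k}) = x := fun k hk => by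
    have hcard : #{i : Fin n | (i : ℕ) < k} = k := by
      rw [Fin.card_filter_val_lt, min_eq_right (by grind)]
    rw [mul_smul_comm, hx.mul_descentClassSum, hcard, smul_smul, ← mul_pow]
    simp
  rw [theta_eq_sum_descentClassSum, mul_sum, sum_congr rfl hterm, sum_const, card_range,
    ← Nat.cast_smul_eq_nsmul ℚ, Nat.cast_succ]

lemma sum_inv_choose_card (n : ℕ) :
    ∑ T : Finset (Fin n), (n.choose #T : ℚ)⁻¹ = n + 1 := by
  have hterm : ∀ k ∈ range (n + 1), n.choose k • (n.choose k : ℚ)⁻¹ = 1 := fun k hk => by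
    have hne : (n.choose k : ℚ) ≠ 0 := by
      exact_mod_cast (Nat.choose_pos (Nat.lt_succ_iff.mp (mem_range.mp hk))).ne'
    rw [nsmul_eq_mul, mul_inv_cancel₀ hne]
  rw [← powerset_univ, sum_powerset_apply_card fun k => (n.choose k : ℚ)⁻¹, card_univ,
    Fintype.card_fin, sum_congr rfl hterm]
  simp

lemma IsPrimitive.mul_phi (hx : IsPrimitive x) : x * phi n = (n + 1 : ℚ) • x := by
  have hterm (T : Finset (Fin n)) :
      x * (((-1 : ℚ) ^ #T / n.choose #T) • descentClassSum T) = (n.choose #T : ℚ)⁻¹ • x := by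
    rw [mul_smul_comm, hx.mul_descentClassSum, smul_smul, div_mul_eq_mul_div, ← mul_pow]
    simp
  rw [phi_eq_sum_descentClassSum, mul_sum]
  simp only [hterm]
  rw [← sum_smul, sum_inv_choose_card]

end Primitive

section Sorting

variable {α : Type*} [LinearOrder α]

/-- Along the word `π`, cut after the positions in `S`, the letters of each piece are listed by
increasing value of `f`, ties being broken by the size of the letter. -/
def IsSortedOff (S : Finset (Fin n)) (f : Fin (n + 1) → α) (π : Equiv.Perm (Fin (n + 1))) :
    Prop :=
  ∀ i ∉ S, toLex (f (π i.castSucc), π i.castSucc) < toLex (f (π i.succ), π i.succ)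

instance (S : Finset (Fin n)) (f : Fin (n + 1) → α) (π : Equiv.Perm (Fin (n + 1))) :
    Decidable (IsSortedOff S f π) :=
  inferInstanceAs (Decidable (∀ i ∉ S, _ < _))

lemma sort_inv_lt_sort_inv_iff (f : Fin n → α) {a b : Fin n} :
    (Tuple.sort f)⁻¹ a < (Tuple.sort f)⁻¹ b ↔ toLex (f a, a) < toLex (f b, b) :=
  (Tuple.graphEquiv₂ f).symm.lt_iff_lt (x := Tuple.graphEquiv₁ f a) (y := Tuple.graphEquiv₁ f b)

lemma Des_sort_inv_mul_subset_iff {S : Finset (Fin n)} {f : Fin (n + 1) → α}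
    {π : Equiv.Perm (Fin (n + 1))} :
    Des ((Tuple.sort f)⁻¹ * π) ⊆ S ↔ IsSortedOff S f π := by
  simp only [subset_iff, IsSortedOff]
  refine forall_congr' fun i => ?_
  rw [← not_imp_not, notMem_Des, Equiv.Perm.mul_apply, Equiv.Perm.mul_apply,
    sort_inv_lt_sort_inv_iff]

lemma isSortedOff_empty_iff {f : Fin (n + 1) → α} {π : Equiv.Perm (Fin (n + 1))} :
    IsSortedOff ∅ f π ↔ Tuple.sort f = π := by
  rw [← Des_sort_inv_mul_subset_iff, subset_empty, Des_eq_empty_iff, inv_mul_eq_one]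

lemma single_sort_mul_descentSubsetSum (f : Fin (n + 1) → α) (S : Finset (Fin n)) :
    MonoidAlgebra.single (Tuple.sort f) (1 : ℚ) * descentSubsetSum S =
      ∑ π with IsSortedOff S f π, MonoidAlgebra.single π (1 : ℚ) := by
  simp only [single_mul_descentSubsetSum, Des_sort_inv_mul_subset_iff]

end Sorting

section Dynkin

/-- The letter `a`, with a minus sign if `a ∈ L`. Sorting by this key lists the letters of `L` in
decreasing order and then the others in increasing order; for `0 ∉ L` these arrangements are
the permutations occurring in Dynkin's element. -/
def signedKey (L : Finset (Fin (n + 1))) (a : Fin (n + 1)) : ℤ :=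
  if a ∈ L then -(a : ℤ) else a

lemma toLex_signedKey_lt_iff {L : Finset (Fin (n + 1))} {a b : Fin (n + 1)} (hab : a < b) :
    toLex (signedKey L a, a) < toLex (signedKey L b, b) ↔ b ∉ L := by
  rw [Fin.lt_def] at hab
  simp only [Prod.Lex.toLex_lt_toLex, signedKey]
  split_ifs <;> grind

lemma toLex_signedKey_gt_iff {L : Finset (Fin (n + 1))} {a b : Fin (n + 1)} (hab : a < b) :
    toLex (signedKey L b, b) < toLex (signedKey L a, a) ↔ b ∈ L := by
  rw [← not_iff_not, ← toLex_signedKey_lt_iff hab, not_lt, le_iff_lt_or_eq]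
  simp [hab.ne]

lemma isSortedOff_signedKey_iff {S : Finset (Fin n)} {L : Finset (Fin (n + 1))}
    {π : Equiv.Perm (Fin (n + 1))} :
    IsSortedOff S (signedKey L) π ↔
      ∀ i ∉ S, (i ∈ Des π ↔ max (π i.castSucc) (π i.succ) ∈ L) := by
  refine forall₂_congr fun i _ => ?_
  by_cases hi : i ∈ Des π
  · have hlt := mem_Des.mp hi
    simp only [hi, true_iff, max_eq_left hlt.le, toLex_signedKey_gt_iff hlt]
  · have hlt := notMem_Des.mp hi
    simp only [hi, false_iff, max_eq_right hlt.le, toLex_signedKey_lt_iff hlt]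

lemma sort_signedKey_inv_lt_inv_zero_iff {L : Finset (Fin (n + 1))} (hL : 0 ∉ L)
    {a : Fin (n + 1)} :
    (Tuple.sort (signedKey L))⁻¹ a < (Tuple.sort (signedKey L))⁻¹ 0 ↔ a ∈ L := by
  rw [sort_inv_lt_sort_inv_iff]
  rcases (Fin.zero_le a).eq_or_lt with rfl | ha
  · simp [hL]
  · exact toLex_signedKey_gt_iff ha

lemma sort_signedKey_inv_zero {L : Finset (Fin (n + 1))} (hL : 0 ∉ L) :
    ((Tuple.sort (signedKey L))⁻¹ 0 : ℕ) = #L := by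
  have hmap : L.map (Tuple.sort (signedKey L))⁻¹.toEmbedding =
      Iio ((Tuple.sort (signedKey L))⁻¹ 0) := by
    ext p
    rw [mem_map_equiv, ← sort_signedKey_inv_lt_inv_zero_iff hL, mem_Iio]
    simp
  rw [← Fin.card_Iio, ← hmap, card_map]

lemma mem_Des_sort_signedKey_iff {L : Finset (Fin (n + 1))} (hL : 0 ∉ L) {i : Fin n} :
    i ∈ Des (Tuple.sort (signedKey L)) ↔ (i : ℕ) < #L := by
  set σ := Tuple.sort (signedKey L) with hσ
  have hmem (p : Fin (n + 1)) : σ p ∈ L ↔ (p : ℕ) < #L := by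
    rw [← sort_signedKey_inv_lt_inv_zero_iff hL, ← hσ, Equiv.Perm.inv_def, Equiv.symm_apply_apply,
      Fin.lt_def, ← Equiv.Perm.inv_def, sort_signedKey_inv_zero hL]
  have hDes := isSortedOff_signedKey_iff.mp (isSortedOff_empty_iff.mpr hσ.symm) i (notMem_empty i)
  refine ⟨fun hi => ?_, fun hi => by_contra fun hdes => ?_⟩
  · have hmax := hDes.mp hi
    rwa [max_eq_left (mem_Des.mp hi).le, hmem] at hmax
  · have hlt := notMem_Des.mp hdes
    have hmax := mt hDes.mpr hdes
    rw [max_eq_right hlt.le, hmem, Fin.val_succ] at hmax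
    have hzero : i.succ = σ⁻¹ 0 := Fin.ext (by
      rw [Fin.val_succ, sort_signedKey_inv_zero hL]; omega)
    rw [hzero, Equiv.Perm.inv_def, Equiv.apply_symm_apply] at hlt
    exact Fin.not_lt_zero _ hlt

/-- The letters in the first `k` positions of the word `σ`. -/
def prefixLetters (σ : Equiv.Perm (Fin (n + 1))) (k : ℕ) : Finset (Fin (n + 1)) :=
  ({p | (p : ℕ) < k} : Finset (Fin (n + 1))).map σ.toEmbedding

variable {σ : Equiv.Perm (Fin (n + 1))} {k : ℕ}

lemma mem_prefixLetters {a : Fin (n + 1)} : a ∈ prefixLetters σ k ↔ (σ⁻¹ a : ℕ) < k := by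
  simp [prefixLetters, mem_map_equiv]

lemma card_prefixLetters (hk : k ≤ n) : #(prefixLetters σ k) = k := by
  rw [prefixLetters, card_map, Fin.card_filter_val_lt, min_eq_right (Nat.le_succ_of_le hk)]

lemma zero_notMem_prefixLetters (hσ : ∀ i, i ∈ Des σ ↔ (i : ℕ) < k) (hk : k ≤ n) :
    0 ∉ prefixLetters σ k := by
  rw [mem_prefixLetters]
  intro h
  have hlt := mem_Des.mp ((hσ ⟨σ⁻¹ 0, h.trans_le hk⟩).mpr h)
  simp at hlt

lemma sort_signedKey_prefixLetters (hσ : ∀ i, i ∈ Des σ ↔ (i : ℕ) < k) :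
    Tuple.sort (signedKey (prefixLetters σ k)) = σ := by
  rw [← isSortedOff_empty_iff, isSortedOff_signedKey_iff]
  intro i _
  by_cases hi : i ∈ Des σ
  · simp [hi, max_eq_left (mem_Des.mp hi).le, mem_prefixLetters, (hσ i).mp hi]
  · have hik := mt (hσ i).mpr hi
    simp only [hi, max_eq_right (notMem_Des.mp hi).le, mem_prefixLetters, Equiv.Perm.inv_def,
      Equiv.symm_apply_apply, Fin.val_succ, false_iff, not_lt]
    omega

lemma prefixLetters_sort_signedKey {L : Finset (Fin (n + 1))} (hL : 0 ∉ L) :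
    prefixLetters (Tuple.sort (signedKey L)) #L = L := by
  ext a
  rw [mem_prefixLetters, ← sort_signedKey_inv_zero hL, ← Fin.lt_def,
    sort_signedKey_inv_lt_inv_zero_iff hL]

lemma descentClassSum_filter_lt (hk : k ≤ n) :
    descentClassSum {i : Fin n | (i : ℕ) < k} =
      ∑ L ∈ powersetCard k (univ.erase (0 : Fin (n + 1))),
        MonoidAlgebra.single (Tuple.sort (signedKey L)) 1 := by
  have hDes {σ : Equiv.Perm (Fin (n + 1))} :
      σ ∈ univ.filter (fun τ => Des τ = univ.filter fun i : Fin n => (i : ℕ) < k) ↔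
        ∀ i, i ∈ Des σ ↔ (i : ℕ) < k := by
    simp [Finset.ext_iff]
  have hpow {L : Finset (Fin (n + 1))} :
      L ∈ powersetCard k (univ.erase 0) ↔ 0 ∉ L ∧ #L = k := by
    simp [mem_powersetCard, subset_erase]
  refine sum_nbij' (prefixLetters · k) (fun L => Tuple.sort (signedKey L)) (fun σ hσ => ?_)
    (fun L hL => ?_) (fun σ hσ => ?_) (fun L hL => ?_) (fun σ hσ => ?_)
  · exact hpow.mpr ⟨zero_notMem_prefixLetters (hDes.mp hσ) hk, card_prefixLetters hk⟩
  · obtain ⟨h0, rfl⟩ := hpow.mp hL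
    exact hDes.mpr fun i => mem_Des_sort_signedKey_iff h0
  · exact sort_signedKey_prefixLetters (hDes.mp hσ)
  · obtain ⟨h0, rfl⟩ := hpow.mp hL
    exact prefixLetters_sort_signedKey h0
  · rw [sort_signedKey_prefixLetters (hDes.mp hσ)]

lemma theta_eq_sum_sort_signedKey (n : ℕ) :
    theta n = ∑ L ∈ (univ.erase (0 : Fin (n + 1))).powerset,
      (-1 : ℚ) ^ #L • MonoidAlgebra.single (Tuple.sort (signedKey L)) 1 := by
  rw [theta_eq_sum_descentClassSum, sum_powerset, card_erase_of_mem (mem_univ _), card_univ,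
    Fintype.card_fin, Nat.add_sub_cancel]
  refine sum_congr rfl fun k hk => ?_
  rw [descentClassSum_filter_lt (Nat.lt_succ_iff.mp (mem_range.mp hk)), smul_sum]
  exact sum_congr rfl fun L hL => by rw [(mem_powersetCard.mp hL).2]

lemma exists_ne_zero_forall_max_ne {S : Finset (Fin n)} (hS : S.Nonempty)
    (π : Equiv.Perm (Fin (n + 1))) :
    ∃ a ≠ 0, ∀ i ∉ S, max (π i.castSucc) (π i.succ) ≠ a := by
  have hcard : #(Sᶜ.image fun i => max (π i.castSucc) (π i.succ)) <
      #(univ.erase (0 : Fin (n + 1))) := by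
    refine card_image_le.trans_lt ?_
    rw [card_compl, Fintype.card_fin, card_erase_of_mem (mem_univ _), card_univ, Fintype.card_fin]
    have := hS.card_pos
    have := card_finset_fin_le S
    omega
  obtain ⟨a, ha, hmax⟩ := exists_mem_notMem_of_card_lt_card hcard
  exact ⟨a, ne_of_mem_erase ha, fun i hi h =>
    hmax (mem_image.mpr ⟨i, mem_compl.mpr hi, h⟩)⟩

lemma isSortedOff_signedKey_insert_iff {S : Finset (Fin n)} {π : Equiv.Perm (Fin (n + 1))}
    {a : Fin (n + 1)} (ha : ∀ i ∉ S, max (π i.castSucc) (π i.succ) ≠ a)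
    (L : Finset (Fin (n + 1))) :
    IsSortedOff S (signedKey (insert a L)) π ↔ IsSortedOff S (signedKey L) π := by
  simp only [isSortedOff_signedKey_iff, mem_insert]
  exact forall₂_congr fun i hi => by rw [or_iff_right (ha i hi)]

lemma sum_neg_one_pow_card_isSortedOff_signedKey {S : Finset (Fin n)} (hS : S.Nonempty)
    (π : Equiv.Perm (Fin (n + 1))) :
    ∑ L ∈ (univ.erase (0 : Fin (n + 1))).powerset with IsSortedOff S (signedKey L) π,
      (-1 : ℚ) ^ #L = 0 := by
  obtain ⟨a, ha0, ha⟩ := exists_ne_zero_forall_max_ne hS π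
  have haL : ∀ L ∈ ((univ.erase (0 : Fin (n + 1))).erase a).powerset, a ∉ L := fun L hL h =>
    notMem_erase a _ (mem_powerset.mp hL h)
  rw [sum_filter, ← insert_erase (mem_erase.mpr ⟨ha0, mem_univ a⟩),
    sum_powerset_insert (notMem_erase a _), ← sum_add_distrib]
  refine sum_eq_zero fun L hL => ?_
  simp only [isSortedOff_signedKey_insert_iff ha, card_insert_of_notMem (haL L hL), pow_succ]
  split_ifs <;> simp

lemma isPrimitive_theta : IsPrimitive (theta n) := by
  intro S hS
  rw [theta_eq_sum_sort_signedKey]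
  simp only [sum_mul, smul_mul_assoc, single_sort_mul_descentSubsetSum, smul_sum, sum_filter,
    smul_ite, smul_zero]
  rw [sum_comm]
  refine sum_eq_zero fun π _ => ?_
  rw [← sum_filter, ← sum_smul, sum_neg_one_pow_card_isSortedOff_signedKey hS, zero_smul]

end Dynkin

section ShiftedChoose

open Polynomial Nat

/-- The binomial coefficient `C(X + e, e + d + 1)` as a polynomial in `X`, with the `e + d + 1`
factors of its numerator grouped as `(X + e)⋯(X + 1)`, `X` and `(X - 1)⋯(X - d)`. -/
def shiftedChoose (e d : ℕ) : ℚ[X] :=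
  X * (C ((e + d + 1)! : ℚ)⁻¹ *
    ((descPochhammer ℚ e).comp (X + C (e : ℚ)) * (descPochhammer ℚ d).comp (X - 1)))

lemma eval_shiftedChoose (e d x : ℕ) :
    (shiftedChoose e d).eval (x : ℚ) = (x + e).choose (e + d + 1) := by
  have hfactors : (shiftedChoose e d).eval (x : ℚ) =
      ((e + d + 1)! : ℚ)⁻¹ *
        ((descPochhammer ℚ e).eval ((x + e : ℕ) : ℚ) *
          (descPochhammer ℚ (d + 1)).eval (x : ℚ)) := by
    simp only [shiftedChoose, descPochhammer_succ_left, eval_mul, eval_comp, eval_add, eval_X,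
      eval_C, cast_add]
    ring
  have hdesc : (x + e).descFactorial e * x.descFactorial (d + 1) =
      (x + e).descFactorial (e + d + 1) := by
    have := Nat.descFactorial_mul_descFactorial (n := x + e) (le_add_right e (d + 1))
    rwa [Nat.add_sub_cancel, Nat.add_sub_cancel_left, mul_comm] at this
  rw [hfactors, descPochhammer_eval_eq_descFactorial, descPochhammer_eval_eq_descFactorial,
    ← cast_mul, hdesc, descFactorial_eq_factorial_mul_choose, cast_mul,
    inv_mul_cancel_left₀ (by positivity)]

lemma X_dvd_shiftedChoose (e d : ℕ) : X ∣ shiftedChoose e d :=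
  dvd_mul_right _ _

lemma eval_neg_one_descPochhammer (R : Type*) [Ring R] (d : ℕ) :
    (descPochhammer R d).eval (-1) = (-1) ^ d * d ! := by
  have h := ascPochhammer_eval_neg_eq_descPochhammer R (-1) d
  rw [neg_neg, ascPochhammer_eval_one] at h
  rw [h, ← mul_assoc, ← pow_add, Even.neg_one_pow ⟨d, rfl⟩, one_mul]

lemma coeff_one_shiftedChoose (e d : ℕ) :
    (e + d + 1) * (shiftedChoose e d).coeff 1 = (-1) ^ d / (e + d).choose d := by
  have hcoeff : (shiftedChoose e d).coeff 1 = ((e + d + 1)! : ℚ)⁻¹ * (e ! * ((-1) ^ d * d !)) := by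
    rw [shiftedChoose, coeff_X_mul, coeff_zero_eq_eval_zero]
    simp [eval_neg_one_descPochhammer, descPochhammer_eval_eq_descFactorial, descFactorial_self]
  have hchoose : ((e + d)! : ℚ) = (e + d).choose d * e ! * d ! := by
    exact_mod_cast (Nat.add_choose_mul_factorial_mul_factorial e d).symm
  have : ((e + d).choose d : ℚ) ≠ 0 := by
    exact_mod_cast (choose_pos (Nat.le_add_left d e)).ne'
  rw [hcoeff, factorial_succ, cast_mul, hchoose]
  push_cast
  field_simp

end ShiftedChoose

section BrokenChains

variable {S D : Finset ℕ} {m x : ℕ}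

/-- The values of `g` increase weakly, strictly at the positions in `D`, except that at the
positions in `S` there is no condition. -/
def IsBrokenChain (S D : Finset ℕ) (g : Fin (n + 1) → Fin m) : Prop :=
  ∀ i : Fin n, (i : ℕ) ∉ S →
    g i.castSucc < g i.succ ∨ g i.castSucc = g i.succ ∧ (i : ℕ) ∉ D

instance (S D : Finset ℕ) (g : Fin (n + 1) → Fin m) : Decidable (IsBrokenChain S D g) :=
  inferInstanceAs (Decidable (∀ i : Fin n, (i : ℕ) ∉ S → _))

/-- The number of broken chains of length `n + 1` in `Fin m` whose last value is less than `x`. -/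
def brokenChainCount (S D : Finset ℕ) (n m x : ℕ) : ℕ :=
  #{g : Fin (n + 1) → Fin m | IsBrokenChain S D g ∧ (g (Fin.last n) : ℕ) < x}

lemma isBrokenChain_snoc_iff {g : Fin (n + 1) → Fin m} {j : Fin m} :
    IsBrokenChain S D (Fin.snoc g j : Fin (n + 2) → Fin m) ↔
      IsBrokenChain S D g ∧
        (g (Fin.last n) : ℕ) < if n ∈ S then m else if n ∈ D then (j : ℕ) else j + 1 := by
  simp only [IsBrokenChain, Fin.forall_fin_succ' (n := n), Fin.snoc_castSucc, Fin.succ_castSucc,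
    Fin.val_castSucc, Fin.succ_last, Fin.snoc_last, Fin.val_last]
  refine and_congr_right fun _ => ?_
  rw [Fin.lt_def, Fin.ext_iff]
  split_ifs <;> grind

lemma brokenChainCount_zero (hx : x ≤ m) : brokenChainCount S D 0 m x = x := by
  have hcard : brokenChainCount S D 0 m x = #{a : Fin m | (a : ℕ) < x} :=
    card_equiv (Equiv.funUnique (Fin 1) (Fin m)) (by simp [IsBrokenChain])
  rw [hcard, Fin.card_filter_val_lt, min_eq_right hx]

lemma brokenChainCount_succ (hx : x ≤ m) :
    brokenChainCount S D (n + 1) m x =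
      ∑ j ∈ range x,
        brokenChainCount S D n m (if n ∈ S then m else if n ∈ D then j else j + 1) := by
  rw [brokenChainCount, card_eq_sum_card_fiberwise (f := fun g => (g (Fin.last (n + 1)) : ℕ))
    (t := range x) fun g hg => by simpa using (mem_filter.mp hg).2.2]
  refine sum_congr rfl fun j hj => ?_
  have hjx := mem_range.mp hj
  lift j to Fin m using hjx.trans_le hx
  refine (card_nbij' (fun g => Fin.snoc g j) Fin.init (fun g hg => ?_) (fun g hg => ?_)
    (fun g _ => Fin.init_snoc _ _) fun g hg => ?_).symm
  · simpa [isBrokenChain_snoc_iff, hjx] using hg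
  · obtain rfl : g (Fin.last (n + 1)) = j := Fin.ext (mem_filter.mp hg).2
    have hchain := (mem_filter.mp (mem_filter.mp hg).1).2.1
    rw [← Fin.snoc_init_self g, isBrokenChain_snoc_iff] at hchain
    simpa using hchain
  · obtain rfl : g (Fin.last (n + 1)) = j := Fin.ext (mem_filter.mp hg).2
    exact Fin.snoc_init_self g

lemma sum_range_add_choose {e k : ℕ} (h : e ≤ k) (x : ℕ) :
    ∑ j ∈ range x, (j + e).choose k = (x + e).choose (k + 1) := by
  induction x with
  | zero => rw [sum_range_zero, Nat.choose_eq_zero_of_lt (by omega)]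
  | succ x ih => rw [sum_range_succ, ih, add_right_comm, Nat.choose_succ_succ, add_comm]

lemma brokenChainCount_empty (hx : x ≤ m) :
    brokenChainCount ∅ D n m x = (x + #{i ∈ range n | i ∉ D}).choose (n + 1) := by
  induction n generalizing x with
  | zero => simp [brokenChainCount_zero hx]
  | succ n ih =>
    have hcard : #{i ∈ range n | i ∉ D} ≤ n := (card_filter_le _ _).trans_eq (card_range n)
    rw [brokenChainCount_succ hx, range_add_one, filter_insert]
    by_cases hD : n ∈ D
    · rw [if_neg (not_not.mpr hD), ← sum_range_add_choose (by omega)]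
      refine sum_congr rfl fun j hj => ?_
      have := mem_range.mp hj
      rw [if_neg (notMem_empty n), if_pos hD, ih (by omega)]
    · rw [if_pos hD, card_insert_of_notMem (by simp), ← sum_range_add_choose (by omega)]
      refine sum_congr rfl fun j hj => ?_
      have := mem_range.mp hj
      rw [if_neg (notMem_empty n), if_neg hD, ih (by omega), add_right_comm, add_assoc]

open Polynomial in
/-- `Q` collects one binomial for each completed piece, and the last piece has `e` weak and `d`
strict steps. -/
lemma exists_brokenChainCount_eq (S D : Finset ℕ) (n : ℕ) :
    ∃ (Q : ℚ[X]) (e d : ℕ),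
      (∀ m x, x ≤ m →
        (brokenChainCount S D n m x : ℚ) = Q.eval (m : ℚ) * (x + e).choose (e + d + 1)) ∧
      ((∃ i ∈ S, i < n) → X ∣ Q) := by
  induction n with
  | zero => exact ⟨1, 0, 0, fun m x hx => by simp [brokenChainCount_zero hx], by simp⟩
  | succ n ih =>
    obtain ⟨Q, e, d, hcount, hdvd⟩ := ih
    by_cases hS : n ∈ S
    · refine ⟨Q * shiftedChoose e d, 0, 0, fun m x hx => ?_,
        fun _ => (X_dvd_shiftedChoose e d).mul_left Q⟩
      simp only [brokenChainCount_succ hx, hS, if_true, sum_const, card_range, eval_mul,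
        eval_shiftedChoose, ← hcount m m le_rfl]
      simp [mul_comm]
    have hdvd' : (∃ i ∈ S, i < n + 1) → X ∣ Q := fun ⟨i, hi, hin⟩ =>
      hdvd ⟨i, hi, lt_of_le_of_ne (Nat.lt_succ_iff.mp hin) (by rintro rfl; exact hS hi)⟩
    by_cases hD : n ∈ D
    · refine ⟨Q, e, d + 1, fun m x hx => ?_, hdvd'⟩
      rw [brokenChainCount_succ hx, ← add_assoc e d 1, ← sum_range_add_choose (by omega),
        Nat.cast_sum, Nat.cast_sum, mul_sum]
      refine sum_congr rfl fun j hj => ?_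
      have := mem_range.mp hj
      rw [if_neg hS, if_pos hD, hcount m j (by omega)]
    · refine ⟨Q, e + 1, d, fun m x hx => ?_, hdvd'⟩
      rw [brokenChainCount_succ hx, add_right_comm e 1 d, ← sum_range_add_choose (by omega),
        Nat.cast_sum, Nat.cast_sum, mul_sum]
      refine sum_congr rfl fun j hj => ?_
      have := mem_range.mp hj
      rw [if_neg hS, if_neg hD, hcount m (j + 1) (by omega), add_right_comm, add_assoc]

end BrokenChains

section Eulerian

variable {m : ℕ} {S : Finset (Fin n)} {π : Equiv.Perm (Fin (n + 1))}

lemma isSortedOff_iff_isBrokenChain {f : Fin (n + 1) → Fin m} :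
    IsSortedOff S f π ↔
      IsBrokenChain (S.map Fin.valEmbedding) ((Des π).map Fin.valEmbedding) (f ∘ π) := by
  refine forall_congr' fun i => ?_
  rw [Prod.Lex.toLex_lt_toLex]
  simp [Fin.val_inj, notMem_Des]

lemma card_isSortedOff (m : ℕ) (S : Finset (Fin n)) (π : Equiv.Perm (Fin (n + 1))) :
    #{f : Fin (n + 1) → Fin m | IsSortedOff S f π} =
      brokenChainCount (S.map Fin.valEmbedding) ((Des π).map Fin.valEmbedding) n m m :=
  card_equiv (Equiv.arrowCongr π.symm (Equiv.refl _)) fun f => by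
    simp only [mem_filter_univ, isSortedOff_iff_isBrokenChain, Fin.is_lt, and_true]
    rfl

lemma card_sort_eq (m : ℕ) (σ : Equiv.Perm (Fin (n + 1))) :
    (#{f : Fin (n + 1) → Fin m | Tuple.sort f = σ} : ℚ) =
      (shiftedChoose (n - #(Des σ)) #(Des σ)).eval (m : ℚ) := by
  have hasc : #{i ∈ range n | i ∉ (Des σ).map Fin.valEmbedding} = n - #(Des σ) := by
    rw [filter_notMem_eq_sdiff, card_sdiff_of_subset, card_range, card_map]
    intro i hi
    obtain ⟨a, -, rfl⟩ := mem_map.mp hi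
    exact mem_range.mpr a.isLt
  simp only [← isSortedOff_empty_iff, card_isSortedOff, map_empty, brokenChainCount_empty le_rfl,
    hasc, eval_shiftedChoose, Nat.sub_add_cancel (card_Des_le σ)]

lemma sum_card_sort_eq (m : ℕ) (S : Finset (Fin n)) (π : Equiv.Perm (Fin (n + 1))) :
    ∑ σ with Des (σ⁻¹ * π) ⊆ S, #{f : Fin (n + 1) → Fin m | Tuple.sort f = σ} =
      #{f : Fin (n + 1) → Fin m | IsSortedOff S f π} := by
  rw [card_eq_sum_card_fiberwise (f := Tuple.sort) (t := {σ | Des (σ⁻¹ * π) ⊆ S}) fun f hf => by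
    simpa [Des_sort_inv_mul_subset_iff] using hf]
  refine sum_congr rfl fun σ hσ => ?_
  rw [filter_filter]
  congr 1
  refine filter_congr fun f _ => (and_iff_right_of_imp ?_).symm
  rintro rfl
  exact Des_sort_inv_mul_subset_iff.mp (mem_filter.mp hσ).2

open Polynomial in
lemma X_sq_dvd_sum_shiftedChoose (hS : S.Nonempty) (π : Equiv.Perm (Fin (n + 1))) :
    X ^ 2 ∣ ∑ σ with Des (σ⁻¹ * π) ⊆ S, shiftedChoose (n - #(Des σ)) #(Des σ) := by
  obtain ⟨Q, e, d, hcount, hdvd⟩ :=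
    exists_brokenChainCount_eq (S.map Fin.valEmbedding) ((Des π).map Fin.valEmbedding) n
  have hpoly : ∑ σ with Des (σ⁻¹ * π) ⊆ S, shiftedChoose (n - #(Des σ)) #(Des σ) =
      Q * shiftedChoose e d := by
    refine eq_of_infinite_eval_eq _ _
      ((Set.infinite_range_of_injective (Nat.cast_injective (R := ℚ))).mono ?_)
    rintro _ ⟨m, rfl⟩
    rw [Set.mem_ofPred_eq, eval_finsetSum, eval_mul, eval_shiftedChoose, ← hcount m m le_rfl,
      ← card_isSortedOff, ← sum_card_sort_eq, Nat.cast_sum]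
    exact sum_congr rfl fun σ _ => (card_sort_eq m σ).symm
  obtain ⟨i, hi⟩ := hS
  rw [hpoly, sq]
  exact mul_dvd_mul (hdvd ⟨i, mem_map_of_mem _ hi, i.isLt⟩) (X_dvd_shiftedChoose e d)

lemma phi_eq_sum_coeff_shiftedChoose (n : ℕ) :
    phi n = ∑ σ : Equiv.Perm (Fin (n + 1)),
      ((n + 1) * (shiftedChoose (n - #(Des σ)) #(Des σ)).coeff 1) •
        MonoidAlgebra.single σ (1 : ℚ) := by
  refine sum_congr rfl fun σ _ => ?_
  have hcoeff := coeff_one_shiftedChoose (n - #(Des σ)) #(Des σ)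
  rw [← Nat.cast_add, Nat.sub_add_cancel (card_Des_le σ)] at hcoeff
  rw [hcoeff]

lemma isPrimitive_phi : IsPrimitive (phi n) := by
  intro S hS
  rw [phi_eq_sum_coeff_shiftedChoose, sum_smul_single_mul_descentSubsetSum]
  refine sum_eq_zero fun π _ => ?_
  rw [← mul_sum, ← Polynomial.finsetSum_coeff,
    Polynomial.X_pow_dvd_iff.mp (X_sq_dvd_sum_shiftedChoose hS π) 1 one_lt_two, mul_zero, zero_smul]

end Eulerian

/-- Group-algebra form of the internal-product identities `Ψ_n ∗ Φ_n = n Φ_n` and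
`Φ_n ∗ Ψ_n = n Ψ_n`: in `ℚ[S_{n+1}]`, `φ·θ = (n+1)·φ` and `θ·φ = (n+1)·θ`. -/
theorem phi_theta_products (n : ℕ) :
    phi n * theta n = ((n + 1 : ℚ)) • phi n ∧
    theta n * phi n = ((n + 1 : ℚ)) • theta n := by
  exact ⟨isPrimitive_phi.mul_theta, isPrimitive_theta.mul_phi⟩

end

end Descents12
end

section
/- Let n ≥ 1 and let ζ ∈ ℂ be a primitive n-th root of unity. Then Klyachko's element κₙ(ζ) := (1/n) Σ_{σ ∈ Sₙ} ζ^{maj(σ)} σ of the group algebra ℂ[Sₙ] is idempotent: κₙ(ζ) · κₙ(ζ) = κₙ(ζ). -/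
open Finset

namespace Descents13

noncomputable section

/-- The descent set of a permutation `σ` of `{0,…,n}`: the set of `i ∈ Fin n`
(representing the position `i+1 ∈ {1,…,n}`) with `σ(i) > σ(i+1)`. -/
def Des {n : ℕ} (σ : Equiv.Perm (Fin (n + 1))) : Finset (Fin n) :=
  Finset.univ.filter fun i => σ i.succ < σ i.castSucc

/-- The major index `maj(σ) = ∑_{i ∈ Des(σ)} i` (positions counted `1,…,n`). -/
def maj {n : ℕ} (σ : Equiv.Perm (Fin (n + 1))) : ℕ :=
  ∑ i ∈ Des σ, ((i : ℕ) + 1)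

/-- Klyachko's element `κ(ζ) = (1/n) ∑_{σ ∈ Sₙ} ζ^{maj(σ)} σ` of `ℂ[S_{n+1}]`
(here the symmetric group on `n+1` letters). -/
def klyachko (n : ℕ) (ζ : ℂ) : MonoidAlgebra ℂ (Equiv.Perm (Fin (n + 1))) :=
  ((n + 1 : ℂ))⁻¹ •
    ∑ σ : Equiv.Perm (Fin (n + 1)),
      (ζ ^ maj σ) • MonoidAlgebra.single σ (1 : ℂ)

/-!
Let `c` be the shift `i ↦ i + 1` modulo `n + 1`, and `cdes σ` the number of cyclic descents of `σ`.
Modulo `n + 1` the major index is the sum over all cyclic descents, whence `maj (c σ) ≡ maj σ - 1`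
and `maj (σ c) ≡ maj σ - cdes σ`. In the convolution `∑_σ ζ^{maj σ} ζ^{maj (σ⁻¹ τ)}`, replacing `σ`
by `σ c` therefore multiplies the summand by `ζ^{1 - cdes σ}` and preserves `cdes`, so that the
summands with `cdes σ ≢ 1` cancel. The permutations with `cdes σ ≡ 1` are the `n + 1` powers of `c`,
and each of them contributes `ζ^{maj τ}`.
-/

-- The sum `s` over each fibre `g = r` satisfies `c * s = r * s`, so it vanishes unless `r = c`.
theorem sum_eq_sum_filter_of_mul_eq_mul_comp {ι R : Type*} [Fintype ι] [DecidableEq R] [Ring R]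
    [NoZeroDivisors R] {f g : ι → R} {c : R} (e : Equiv.Perm ι)
    (hf : ∀ i, c * f i = g i * f (e i)) (hg : ∀ i, g (e i) = g i) :
    ∑ i, f i = ∑ i with g i = c, f i := by
  have h_fiber (r : R) (hr : r ≠ c) : ∑ i with g i = r, f i = 0 := by
    have h_mul : c * ∑ i with g i = r, f i = r * ∑ i with g i = r, f i :=
      calc c * ∑ i with g i = r, f i = ∑ i with g i = r, r * f (e i) := by
            rw [mul_sum]
            exact sum_congr rfl fun i hi => by rw [hf, (mem_filter.mp hi).2]
        _ = ∑ i with g i = r, r * f i := sum_equiv e (by simp [hg]) fun _ _ => rfl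
        _ = r * ∑ i with g i = r, f i := (mul_sum ..).symm
    exact (mul_eq_mul_right_iff.mp h_mul).resolve_left hr.symm
  calc ∑ i, f i = ∑ r ∈ univ.image g, ∑ i with g i = r, f i :=
        (sum_fiberwise_of_maps_to (fun _ => mem_image_of_mem g) f).symm
    _ = ∑ i with g i = c, f i := sum_eq_single c (fun r _ hr => h_fiber r hr) fun hc => by
        have h_ne : ∀ i ∈ univ, g i ≠ c := fun i hi hgi => hc (hgi ▸ mem_image_of_mem g hi)
        rw [filter_false_of_mem h_ne, sum_empty]

section CyclicDescents

open scoped Fin.CommRing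

variable {n : ℕ}

/-- The cyclic descent set of `σ`, in which the last position is followed by the first one. -/
def cDes (σ : Equiv.Perm (Fin (n + 1))) : Finset (Fin (n + 1)) :=
  univ.filter fun i => σ (i + 1) < σ i

theorem castSucc_mem_cDes {σ : Equiv.Perm (Fin (n + 1))} {i : Fin n} :
    i.castSucc ∈ cDes σ ↔ i ∈ Des σ := by
  simp [cDes, Des, Fin.coeSucc_eq_succ]

theorem des_eq_empty_iff {σ : Equiv.Perm (Fin (n + 1))} : Des σ = ∅ ↔ σ = 1 := by
  simp [Des, filter_eq_empty_iff, ← Fin.monotone_iff_le_succ, Equiv.Perm.monotone_iff]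

theorem maj_one : maj (1 : Equiv.Perm (Fin (n + 1))) = 0 := by
  rw [maj, des_eq_empty_iff.mpr rfl, sum_empty]

theorem mem_cDes_mul_addRight {σ : Equiv.Perm (Fin (n + 1))} {i k : Fin (n + 1)} :
    i ∈ cDes (σ * Equiv.addRight k) ↔ i + k ∈ cDes σ := by
  simp [cDes, add_right_comm]

theorem map_addRight_cDes_mul_addRight (σ : Equiv.Perm (Fin (n + 1))) (k : Fin (n + 1)) :
    (cDes (σ * Equiv.addRight k)).map (Equiv.addRight k).toEmbedding = cDes σ := by
  ext i
  simp [mem_map_equiv, mem_cDes_mul_addRight]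

theorem card_cDes_mul_addRight (σ : Equiv.Perm (Fin (n + 1))) (k : Fin (n + 1)) :
    #(cDes (σ * Equiv.addRight k)) = #(cDes σ) := by
  rw [← map_addRight_cDes_mul_addRight σ k, card_map]

-- The descent possibly gained at the last position has weight `n + 1 = 0`.
theorem natCast_maj_eq_sum_cDes (σ : Equiv.Perm (Fin (n + 1))) :
    (maj σ : Fin (n + 1)) = ∑ i ∈ cDes σ, (i + 1) := by
  simp [maj, Des, cDes, sum_filter, Fin.sum_univ_castSucc, Fin.coeSucc_eq_succ]

theorem natCast_maj_mul_addRight (σ : Equiv.Perm (Fin (n + 1))) (k : Fin (n + 1)) :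
    (maj (σ * Equiv.addRight k) : Fin (n + 1)) = maj σ - #(cDes σ) * k := by
  rw [natCast_maj_eq_sum_cDes, natCast_maj_eq_sum_cDes, ← map_addRight_cDes_mul_addRight σ k]
  simp [sum_add_distrib, add_right_comm]

theorem ite_add_one_lt_add_one_add_ite {M : Type*} [AddCommMonoid M] (a b : Fin (n + 1)) (x : M) :
    ((if b + 1 < a + 1 then x else 0) + if a = Fin.last n then x else 0) =
      (if b < a then x else 0) + if b = Fin.last n then x else 0 := by
  induction a using Fin.lastCases <;> induction b using Fin.lastCases <;>
    simp [Fin.coeSucc_eq_succ, Fin.castSucc_ne_last, Fin.lt_iff_le_and_ne, Fin.le_last,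
      (Fin.succ_ne_zero _).symm]

-- Adding `1` to the values moves the cyclic descent at the position `p` of the largest value to
-- position `p - 1`; all other cyclic descents stay.
theorem natCast_maj_addRight_one_mul (σ : Equiv.Perm (Fin (n + 1))) :
    (maj (Equiv.addRight 1 * σ) : Fin (n + 1)) = maj σ - 1 := by
  set p := σ.symm (Fin.last n)
  have h_last : ∑ i, (if σ i = Fin.last n then i + 1 else 0) = p + 1 := by
    simp [p, ← Equiv.eq_symm_apply]
  have h_last_succ : ∑ i, (if σ (i + 1) = Fin.last n then i + 1 else 0) = p := by
    refine (Equiv.sum_comp (Equiv.addRight 1) fun i => if σ i = Fin.last n then i else 0).trans ?_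
    simp [p, ← Equiv.eq_symm_apply]
  have h_sum : (maj (Equiv.addRight 1 * σ) + (p + 1) : Fin (n + 1)) = maj σ + p := by
    nth_rw 1 [← h_last]
    rw [← h_last_succ, natCast_maj_eq_sum_cDes, natCast_maj_eq_sum_cDes, cDes, cDes, sum_filter,
      sum_filter, ← sum_add_distrib, ← sum_add_distrib]
    exact sum_congr rfl fun i _ => ite_add_one_lt_add_one_add_ite (σ i) (σ (i + 1)) (i + 1)
  linear_combination h_sum

theorem natCast_maj_addRight_mul (σ : Equiv.Perm (Fin (n + 1))) (k : Fin (n + 1)) :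
    (maj (Equiv.addRight k * σ) : Fin (n + 1)) = maj σ - k := by
  induction k using Fin.induction with
  | zero => simp
  | succ i ih =>
    rw [← Fin.coeSucc_eq_succ, Equiv.addRight_add, mul_assoc, natCast_maj_addRight_one_mul, ih,
      sub_sub]

theorem natCast_maj_addRight (k : Fin (n + 1)) :
    (maj (Equiv.addRight k) : Fin (n + 1)) = -k := by
  simpa [maj_one] using natCast_maj_addRight_mul 1 k

theorem card_cDes_lt (σ : Equiv.Perm (Fin (n + 1))) : #(cDes σ) < n + 1 := by
  simpa using card_lt_univ_of_notMem (s := cDes σ) (x := σ.symm 0) (by simp [cDes])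

-- Left and right translation by `1` change the major index of the identity equally.
theorem natCast_card_cDes_addRight (k : Fin (n + 1)) :
    (#(cDes (Equiv.addRight k)) : Fin (n + 1)) = 1 := by
  have h := natCast_maj_mul_addRight (1 : Equiv.Perm (Fin (n + 1))) 1
  rw [one_mul, natCast_maj_addRight, maj_one, Nat.cast_zero, mul_one, zero_sub, neg_inj] at h
  rw [← one_mul (Equiv.addRight k), card_cDes_mul_addRight, ← h]

theorem exists_addRight_eq_of_card_cDes_eq_one {σ : Equiv.Perm (Fin (n + 1))} (h : #(cDes σ) = 1) :
    ∃ k, Equiv.addRight k = σ := by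
  obtain ⟨p, hp⟩ := card_eq_one.mp h
  have h_one : σ * Equiv.addRight (p + 1) = 1 := by
    rw [← des_eq_empty_iff, eq_empty_iff_forall_notMem]
    intro i hi
    rw [← castSucc_mem_cDes, mem_cDes_mul_addRight, hp, mem_singleton] at hi
    apply Fin.succ_ne_zero i
    rw [← Fin.coeSucc_eq_succ]
    linear_combination hi
  exact ⟨-(p + 1), by rw [eq_inv_of_mul_eq_one_left h_one, Equiv.neg_addRight]⟩

theorem natCast_card_cDes_eq_one_iff {σ : Equiv.Perm (Fin (n + 1))} :
    (#(cDes σ) : Fin (n + 1)) = 1 ↔ ∃ k, Equiv.addRight k = σ := by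
  refine ⟨fun h => ?_, ?_⟩
  · obtain rfl | hn := n.eq_zero_or_pos
    · exact ⟨0, Equiv.ext fun _ => Subsingleton.elim (α := Fin 1) _ _⟩
    · have h_modEq : #(cDes σ) ≡ 1 [MOD n + 1] :=
        (CharP.natCast_eq_natCast (Fin (n + 1)) (n + 1)).mp (by simpa using h)
      exact exists_addRight_eq_of_card_cDes_eq_one
        (h_modEq.eq_of_lt_of_lt (card_cDes_lt σ) (Nat.succ_lt_succ hn))
  · rintro ⟨k, rfl⟩
    exact natCast_card_cDes_addRight k

end CyclicDescents

section Powers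

open scoped Fin.CommRing

variable {M : Type*} [CommMonoid M] {n : ℕ} {ζ : M}

theorem pow_eq_pow_iff_natCast_fin_eq (hζ : IsPrimitiveRoot ζ (n + 1)) {a b : ℕ} :
    ζ ^ a = ζ ^ b ↔ (a : Fin (n + 1)) = b := by
  rw [CharP.natCast_eq_natCast _ (n + 1)]
  refine ⟨fun h => ?_, fun h => pow_eq_pow_of_modEq h hζ.pow_eq_one⟩
  rw [← pow_mod_orderOf, ← pow_mod_orderOf ζ b, ← hζ.eq_orderOf] at h
  exact hζ.pow_inj (Nat.mod_lt _ n.succ_pos) (Nat.mod_lt _ n.succ_pos) h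

theorem pow_card_cDes_eq_self_iff (hζ : IsPrimitiveRoot ζ (n + 1))
    {σ : Equiv.Perm (Fin (n + 1))} :
    ζ ^ #(cDes σ) = ζ ↔ ∃ k, Equiv.addRight k = σ := by
  simpa [natCast_card_cDes_eq_one_iff] using
    pow_eq_pow_iff_natCast_fin_eq hζ (a := #(cDes σ)) (b := 1)

theorem pow_maj_addRight_mul_pow_maj (hζ : IsPrimitiveRoot ζ (n + 1)) (k : Fin (n + 1))
    (τ : Equiv.Perm (Fin (n + 1))) :
    ζ ^ maj (Equiv.addRight k) * ζ ^ maj ((Equiv.addRight k)⁻¹ * τ) = ζ ^ maj τ := by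
  have h := natCast_maj_addRight_mul ((Equiv.addRight k)⁻¹ * τ) k
  rw [mul_inv_cancel_left] at h
  rw [← pow_add, pow_eq_pow_iff_natCast_fin_eq hζ, Nat.cast_add, natCast_maj_addRight, h]
  ring

theorem mul_pow_maj_mul_pow_maj (hζ : IsPrimitiveRoot ζ (n + 1)) (σ τ : Equiv.Perm (Fin (n + 1))) :
    ζ * (ζ ^ maj σ * ζ ^ maj (σ⁻¹ * τ)) = ζ ^ #(cDes σ) *
      (ζ ^ maj (σ * Equiv.addRight 1) * ζ ^ maj ((σ * Equiv.addRight 1)⁻¹ * τ)) := by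
  have h := natCast_maj_addRight_mul ((σ * Equiv.addRight 1)⁻¹ * τ) 1
  rw [mul_inv_rev, mul_assoc, mul_inv_cancel_left] at h
  rw [← pow_add, ← pow_succ', ← pow_add, ← pow_add, pow_eq_pow_iff_natCast_fin_eq hζ]
  push_cast
  rw [natCast_maj_mul_addRight, mul_inv_rev, mul_assoc, h]
  ring

end Powers

theorem addRight_injective {A : Type*} [AddGroup A] :
    Function.Injective (Equiv.addRight : A → Equiv.Perm A) :=
  fun a b h => by simpa using Equiv.congr_fun h 0

theorem sum_pow_maj_mul_pow_maj {R : Type*} [CommRing R] [IsDomain R] {n : ℕ} {ζ : R}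
    (hζ : IsPrimitiveRoot ζ (n + 1)) (τ : Equiv.Perm (Fin (n + 1))) :
    ∑ σ, ζ ^ maj σ * ζ ^ maj (σ⁻¹ * τ) = (n + 1) * ζ ^ maj τ := by
  classical
  have h_filter : ({σ | ζ ^ #(cDes σ) = ζ} : Finset (Equiv.Perm (Fin (n + 1)))) =
      univ.image Equiv.addRight := by
    ext σ
    simp [pow_card_cDes_eq_self_iff hζ]
  calc ∑ σ, ζ ^ maj σ * ζ ^ maj (σ⁻¹ * τ)
      = ∑ σ with ζ ^ #(cDes σ) = ζ, ζ ^ maj σ * ζ ^ maj (σ⁻¹ * τ) :=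
        sum_eq_sum_filter_of_mul_eq_mul_comp (Equiv.mulRight (Equiv.addRight 1))
          (mul_pow_maj_mul_pow_maj hζ · τ) fun σ => congrArg (ζ ^ ·) (card_cDes_mul_addRight σ 1)
    _ = ∑ k, ζ ^ maj (Equiv.addRight k) * ζ ^ maj ((Equiv.addRight k)⁻¹ * τ) := by
        rw [h_filter, sum_image addRight_injective.injOn]
    _ = ∑ _k : Fin (n + 1), ζ ^ maj τ :=
        sum_congr rfl fun k _ => pow_maj_addRight_mul_pow_maj hζ k τ
    _ = (n + 1) * ζ ^ maj τ := by simp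

/-- The unnormalised Klyachko element `∑_σ ζ^{maj σ} σ`, over an arbitrary coefficient ring. -/
def majSum {R : Type*} [Semiring R] (n : ℕ) (ζ : R) :
    MonoidAlgebra R (Equiv.Perm (Fin (n + 1))) :=
  ∑ σ : Equiv.Perm (Fin (n + 1)), (ζ ^ maj σ) • MonoidAlgebra.single σ (1 : R)

theorem coeff_majSum {R : Type*} [Semiring R] {n : ℕ} (ζ : R) (σ : Equiv.Perm (Fin (n + 1))) :
    (majSum n ζ).coeff σ = ζ ^ maj σ := by
  simp [majSum, MonoidAlgebra.coeff_sum, Finsupp.single_apply]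

theorem majSum_mul_self {R : Type*} [CommRing R] [IsDomain R] {n : ℕ} {ζ : R}
    (hζ : IsPrimitiveRoot ζ (n + 1)) :
    majSum n ζ * majSum n ζ = (n + 1 : R) • majSum n ζ := by
  ext τ
  rw [MonoidAlgebra.coeff_mul_apply_left, Finsupp.sum_fintype _ _ fun _ => zero_mul _,
    MonoidAlgebra.coeff_smul_apply]
  simp only [coeff_majSum, smul_eq_mul, sum_pow_maj_mul_pow_maj hζ]

theorem klyachko_idempotent_general {K : Type*} [Field K] {n : ℕ} {ζ : K}
    (hζ : IsPrimitiveRoot ζ (n + 1)) :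
    IsIdempotentElem ((n + 1 : K)⁻¹ • majSum n ζ) := by
  have h_ne : (n + 1 : K) ≠ 0 := by exact_mod_cast hζ.neZero'.out
  rw [IsIdempotentElem, smul_mul_smul_comm, majSum_mul_self hζ, smul_smul, mul_assoc,
    inv_mul_cancel₀ h_ne, mul_one]

/-- **Klyachko's idempotent**: if `ζ ∈ ℂ` is a primitive `(n+1)`-st root of unity, then
`κ(ζ) = (1/(n+1)) ∑_σ ζ^{maj σ} σ` is an idempotent of the group algebra
`ℂ[S_{n+1}]`. -/
theorem klyachko_idempotent (n : ℕ) (ζ : ℂ) (hζ : IsPrimitiveRoot ζ (n + 1)) :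
    klyachko n ζ * klyachko n ζ = klyachko n ζ :=
  klyachko_idempotent_general hζ

end

end Descents13
end

section
/- Work in the free associative algebra over the polynomial ring ℚ[q] on the generators S_n. For a composition I = (i₁,…,i_r) let maj(I) := Σ_{k=1}^{r−1} (i₁+⋯+i_k) and let PS(I) := {i₁, i₁+i₂, …, i₁+⋯+i_r} be the set of its partial sums. Then for every n ≥ 1: Σ_{|I|=n} q^{maj(I)} R_I = Σ_{|I|=n} q^{maj(I)} ( Π_{m ∈ {1,…,n} \ PS(I)} (1 − q^m) ) S^I. (This is the weight-n component of the factorization k(q) = ⋯σ(q²)σ(q)σ(1) of the generating series of the functions K_n(q) = Σ_{|I|=n} q^{maj(I)} R_I, i.e. of K_n(q)/(q)_n.) -/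
open Finset Polynomial

namespace NCSF15

noncomputable section

/-- The free associative algebra `ℚ[q]⟨S₁,S₂,S₃,…⟩` (scalars extended to `ℚ[q]`),
the generator of index `n : ℕ` representing `S (n+1)`. -/
abbrev SymQ : Type := FreeAlgebra (Polynomial ℚ) ℕ

/-- The complete homogeneous noncommutative symmetric functions. -/
def S : ℕ → SymQ
  | 0 => 1
  | n + 1 => FreeAlgebra.ι (Polynomial ℚ) n

/-- `S^I = S_{i₁} ⋯ S_{i_r}`. -/
def SProd (L : List ℕ) : SymQ := (L.map S).prod

/-- The set `PS(I)` of partial sums `i₁ + ⋯ + i_k` (`1 ≤ k ≤ length`) of a list. -/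
def psums (L : List ℕ) : Finset ℕ :=
  (Finset.range L.length).image fun k => (L.take (k + 1)).sum

/-- The noncommutative ribbon Schur function `R_I = ∑_{J ⪯ I} (−1)^{ℓ(I)−ℓ(J)} S^J`. -/
def Ribbon (L : List ℕ) : SymQ :=
  ∑ J : Composition L.sum,
    if psums J.blocks ⊆ psums L then
      (((-1 : Polynomial ℚ) ^ (L.length - J.length))) • SProd J.blocks
    else 0

/-- The major index `maj(I) = ∑_{k=1}^{r−1} (i₁+⋯+i_k)` of a composition. -/
def majC (L : List ℕ) : ℕ :=
  ∑ k ∈ Finset.range (L.length - 1), (L.take (k + 1)).sum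

/-!
A composition of `n` is determined by its descent set `D(I) = PS(I) \ {n}`, an arbitrary subset of
`{1, …, n - 1}`, and in these terms `maj(I) = ∑_{m ∈ D(I)} m` and
`R_I = ∑_{D(J) ⊆ D(I)} (-1)^{#(D(I) \ D(J))} S^J`. Hence, for any weights `x_m` in place of `q^m`,
the coefficient of `S^J` in `∑_I (∏_{m ∈ D(I)} x_m) R_I` is the sum over all `u` with
`D(J) ⊆ u ⊆ {1, …, n - 1}` of `(-1)^{#(u \ D(J))} ∏_{m ∈ u} x_m`. This is `∏_{m ∈ D(J)} x_m` times
the expansion of the product of the `1 - x_m` over the remaining `m`.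
-/

section Finset

variable {ι R : Type*} [DecidableEq ι] [CommRing R]

theorem sum_powerset_prod_mul_neg_one_pow {s t : Finset ι} (hts : t ⊆ s) (x : ι → R) :
    ∑ u ∈ s.powerset, (∏ i ∈ u, x i) * (if t ⊆ u then (-1) ^ #(u \ t) else 0) =
      (∏ i ∈ t, x i) * ∏ i ∈ s \ t, (1 - x i) := by
  simp only [mul_ite, mul_zero, prod_sub, prod_const_one, mul_one, mul_sum]
  rw [← sum_filter]
  refine sum_nbij' (· \ t) (t ∪ ·) (by grind) (by grind) (by grind) (by grind) fun u hu => ?_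
  rw [← prod_sdiff (mem_filter.1 hu).2]
  ring

end Finset

section Composition

variable {n : ℕ}

theorem injOn_sizeUpTo_succ (I : Composition n) :
    Set.InjOn (fun k => I.sizeUpTo (k + 1)) (range I.length) := by
  intro i hi j hj hij
  have hb : I.boundary (Fin.succ ⟨i, mem_range.1 hi⟩) = I.boundary (Fin.succ ⟨j, mem_range.1 hj⟩) :=
    Fin.ext hij
  simpa using I.boundary.injective hb

theorem map_valEmbedding_boundaries (I : Composition n) :
    I.boundaries.map Fin.valEmbedding = (range (I.length + 1)).image I.sizeUpTo := by
  ext m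
  have hle : ∀ k ≤ I.length, I.sizeUpTo k = m → m ≤ n := fun k _ hk => hk ▸ I.sizeUpTo_le k
  simpa [Composition.boundaries, Composition.boundary, Fin.exists_iff] using hle

theorem psums_blocks_eq_image_sizeUpTo (I : Composition n) :
    psums I.blocks = (range I.length).image fun k => I.sizeUpTo (k + 1) :=
  rfl

theorem psums_blocks_eq_erase_zero (I : Composition n) :
    psums I.blocks = (I.boundaries.map Fin.valEmbedding).erase 0 := by
  have hzero : 0 ∉ psums I.blocks := by
    rw [psums_blocks_eq_image_sizeUpTo, mem_image]
    rintro ⟨k, hk, h⟩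
    exact (Nat.zero_le _ |>.trans_lt (I.sizeUpTo_strict_mono (mem_range.1 hk))).ne' h
  have hinsert : I.boundaries.map Fin.valEmbedding = insert 0 (psums I.blocks) := by
    rw [map_valEmbedding_boundaries, range_add_one', image_insert, I.sizeUpTo_zero, map_eq_image,
      image_image]
    rfl
  rw [hinsert, erase_insert hzero]

theorem psums_blocks_subset_Icc (I : Composition n) : psums I.blocks ⊆ Icc 1 n := by
  intro m hm
  obtain ⟨hm₀, hm⟩ := mem_erase.1 (psums_blocks_eq_erase_zero I ▸ hm)
  obtain ⟨j, -, rfl⟩ := mem_map.1 hm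
  exact mem_Icc.2 ⟨Nat.one_le_iff_ne_zero.2 hm₀, Fin.is_le j⟩

theorem self_mem_psums_blocks (I : Composition n) (hn : n ≠ 0) : n ∈ psums I.blocks := by
  rw [psums_blocks_eq_erase_zero, mem_erase]
  exact ⟨hn, mem_map.2 ⟨Fin.last n, I.toCompositionAsSet.getLast_mem, rfl⟩⟩

theorem card_psums_blocks (I : Composition n) : #(psums I.blocks) = I.length := by
  rw [psums_blocks_eq_image_sizeUpTo, card_image_of_injOn (injOn_sizeUpTo_succ I), card_range]

theorem psums_blocks_injective :
    Function.Injective fun I : Composition n => psums I.blocks := by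
  intro I J hIJ
  simp only [psums_blocks_eq_erase_zero] at hIJ
  have hzero (K : Composition n) : 0 ∈ K.boundaries.map Fin.valEmbedding :=
    mem_map.2 ⟨0, K.toCompositionAsSet.zero_mem, rfl⟩
  have hb : I.boundaries = J.boundaries := by
    rw [← Finset.map_inj (f := Fin.valEmbedding), ← insert_erase (hzero I), hIJ,
      insert_erase (hzero J)]
  exact (compositionEquiv n).injective (CompositionAsSet.ext hb)

/-- The descent set `{i₁, i₁ + i₂, …, i₁ + ⋯ + i_{r-1}}` of a composition `I` of `n`, that is
`PS(I)` without `n`. It encodes compositions of `n` as subsets of `{1, …, n - 1}`. -/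
def descents (I : Composition n) : Finset ℕ := (psums I.blocks).erase n

theorem descents_subset_Ico (I : Composition n) : descents I ⊆ Ico 1 n := by
  have hIcc := psums_blocks_subset_Icc I
  grind [descents]

theorem Icc_sdiff_psums_blocks (I : Composition n) :
    Icc 1 n \ psums I.blocks = Ico 1 n \ descents I := by
  have hself := self_mem_psums_blocks I
  grind [descents]

theorem psums_blocks_subset_iff_descents_subset {I J : Composition n} :
    psums J.blocks ⊆ psums I.blocks ↔ descents J ⊆ descents I := by
  refine ⟨erase_subset_erase n, fun h m hm => ?_⟩
  have hm₁ : 1 ≤ m := (mem_Icc.1 (psums_blocks_subset_Icc J hm)).1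
  obtain rfl | hmn := eq_or_ne m n
  · exact self_mem_psums_blocks I (Nat.one_le_iff_ne_zero.1 hm₁)
  · exact mem_of_mem_erase (h (mem_erase.2 ⟨hmn, hm⟩))

theorem length_sub_length_eq_card_sdiff_descents {I J : Composition n}
    (h : descents J ⊆ descents I) :
    I.length - J.length = #(descents I \ descents J) := by
  have hsdiff : psums I.blocks \ psums J.blocks = descents I \ descents J := by
    have hself := self_mem_psums_blocks J
    have hIcc := psums_blocks_subset_Icc I
    grind [descents]
  rw [← hsdiff, card_sdiff_of_subset (psums_blocks_subset_iff_descents_subset.2 h),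
    card_psums_blocks, card_psums_blocks]

theorem descents_injective : Function.Injective (descents (n := n)) := fun _ _ h =>
  psums_blocks_injective <|
    (psums_blocks_subset_iff_descents_subset.2 h.le).antisymm
      (psums_blocks_subset_iff_descents_subset.2 h.ge)

theorem exists_descents_eq {s : Finset ℕ} (hs : s ⊆ Ico 1 n) :
    ∃ I : Composition n, descents I = s := by
  let c : CompositionAsSet n :=
    { boundaries := {j | j = 0 ∨ j = Fin.last n ∨ (j : ℕ) ∈ s}
      zero_mem := by simp
      getLast_mem := by simp }
  refine ⟨c.toComposition, ?_⟩
  ext m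
  rw [descents, psums_blocks_eq_erase_zero, c.toComposition_boundaries]
  have hsm (hm : m ∈ s) : 1 ≤ m ∧ m < n := mem_Ico.1 (hs hm)
  simp only [c, mem_erase, mem_map, mem_filter, mem_univ, true_and, Fin.valEmbedding_apply,
    Fin.exists_iff, Fin.ext_iff, Fin.val_zero, Fin.val_last]
  grind

theorem sum_descents {M : Type*} [AddCommMonoid M] (f : Finset ℕ → M) :
    ∑ I : Composition n, f (descents I) = ∑ s ∈ (Ico 1 n).powerset, f s :=
  Finset.sum_nbij descents (fun I _ => mem_powerset.2 (descents_subset_Ico I))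
    descents_injective.injOn
    (fun _ hs => by simpa using exists_descents_eq (mem_powerset.1 hs)) fun _ _ => rfl

theorem descents_eq_image_sizeUpTo (I : Composition n) :
    descents I = (range (I.length - 1)).image fun k => I.sizeUpTo (k + 1) := by
  have hinj := injOn_sizeUpTo_succ I
  have hn := I.sizeUpTo_length
  rw [descents, psums_blocks_eq_image_sizeUpTo]
  generalize I.length = r at hinj hn ⊢
  rcases r with _ | l
  · rfl
  · have hn_notMem : n ∉ (range l).image fun k => I.sizeUpTo (k + 1) := by
      rw [mem_image]
      rintro ⟨k, hk, hkn⟩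
      have hkl : k = l := hinj (by grind) (by grind) (hkn.trans hn.symm)
      exact (mem_range.1 hk).ne hkl
    rw [range_add_one, image_insert, hn, erase_insert hn_notMem, Nat.add_sub_cancel]

theorem majC_blocks_eq_sum_descents (I : Composition n) : majC I.blocks = ∑ m ∈ descents I, m := by
  rw [descents_eq_image_sizeUpTo, sum_image]
  · rfl
  · exact (injOn_sizeUpTo_succ I).mono (by grind)

end Composition

theorem ribbon_blocks_eq_sum {n : ℕ} (I : Composition n) :
    Ribbon I.blocks = ∑ J : Composition n,
      (if descents J ⊆ descents I then (-1 : Polynomial ℚ) ^ #(descents I \ descents J) else 0) •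
        SProd J.blocks := by
  have hcast {m : ℕ} (h : I.blocks.sum = m) : Ribbon I.blocks = ∑ J : Composition m,
      if psums J.blocks ⊆ psums I.blocks then
        ((-1 : Polynomial ℚ) ^ (I.blocks.length - J.length)) • SProd J.blocks else 0 := by
    subst h; rfl
  rw [hcast I.blocks_sum]
  refine sum_congr rfl fun J _ => ?_
  rw [ite_smul, zero_smul]
  refine if_ctx_congr psums_blocks_subset_iff_descents_subset (fun h => ?_) fun _ => rfl
  rw [I.blocks_length, length_sub_length_eq_card_sdiff_descents h]

theorem K_n_factorization_general (n : ℕ) (x : ℕ → Polynomial ℚ) :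
    ∑ I : Composition n, (∏ m ∈ descents I, x m) • Ribbon I.blocks =
      ∑ I : Composition n,
        ((∏ m ∈ descents I, x m) * ∏ m ∈ Icc 1 n \ psums I.blocks, (1 - x m)) •
          SProd I.blocks := by
  simp only [ribbon_blocks_eq_sum, smul_sum, smul_smul]
  rw [sum_comm]
  refine sum_congr rfl fun J _ => ?_
  rw [← sum_smul, sum_descents fun s =>
      (∏ m ∈ s, x m) * if descents J ⊆ s then (-1) ^ #(s \ descents J) else 0,
    sum_powerset_prod_mul_neg_one_pow (descents_subset_Ico J), Icc_sdiff_psums_blocks]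

/-- **Weight-`n` component of the factorization `k(q) = ⋯σ(q²)σ(q)σ(1)`** of the
generating series of `K_n(q)/(q)_n`: for every `n ≥ 1`,
`∑_{|I|=n} q^{maj(I)} R_I
  = ∑_{|I|=n} q^{maj(I)} (∏_{m ∈ {1,…,n} ∖ PS(I)} (1 − q^m)) S^I`. -/
theorem K_n_factorization :
    ∀ n : ℕ, 1 ≤ n →
      (∑ I : Composition n, ((X : Polynomial ℚ) ^ majC I.blocks) • Ribbon I.blocks) =
        ∑ I : Composition n,
          (((X : Polynomial ℚ) ^ majC I.blocks) *
              ∏ m ∈ Finset.Icc 1 n \ psums I.blocks, (1 - (X : Polynomial ℚ) ^ m)) •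
            SProd I.blocks := by
  intro n _
  simpa only [majC_blocks_eq_sum_descents, ← prod_pow_eq_pow_sum] using
    K_n_factorization_general n (X ^ ·)

end

end NCSF15
end

section
/- Let Sym[t] denote polynomials in a central (commuting) variable t with coefficients in Sym. For every n ≥ 1: Σ_{|I|=n} t^{ℓ(I)} R_I = Σ_{|I|=n} (1−t)^{n−ℓ(I)} t^{ℓ(I)} S^I, the sums being over all compositions I of n. (This identity is the weight-n component of the generating-series identity A(t) = (1−t)(1 − tσ(1−t))^{−1} for the noncommutative Eulerian polynomials Aₙ(t) = Σ_k t^k A(n,k), where A(n,k) = Σ_{|I|=n, ℓ(I)=k} R_I.) -/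
/-!
Send a composition of `n` to its set of boundaries in `Fin (n + 1)`. The compositions refining `J`
then form the Boolean interval from the boundaries of `J` to the full set, which adds
`n - ℓ(J)` free points. Expanding the ribbons and exchanging the two sums, the coefficient of `S^J`
becomes `∑ (-1)^(ℓ(I) - ℓ(J)) t^ℓ(I)` over the `I` refining `J`, that is `t^ℓ(J)` times
`∑ (-t)^(ℓ(I) - ℓ(J))`, and the last sum is `(1 - t)^(n - ℓ(J))` by the binomial theorem.
-/

open Finset

namespace NCSF

noncomputable section

section BooleanInterval

variable {α R : Type*} [Semiring R]

theorem sum_powerset_pow_card (s : Finset α) (x : R) :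
    ∑ A ∈ s.powerset, x ^ #A = (x + 1) ^ #s := by
  rw [sum_powerset_apply_card (x ^ ·), (Commute.one_right x).add_pow]
  simp only [one_pow, mul_one, nsmul_eq_mul, Nat.cast_comm]

theorem sum_Icc_pow_card_sub_card [DecidableEq α] {s u : Finset α} (hsu : s ⊆ u) (x : R) :
    ∑ A ∈ Icc s u, x ^ (#A - #s) = (x + 1) ^ (#u - #s) := by
  have disjoint_of_mem {B : Finset α} (hB : B ∈ (u \ s).powerset) : Disjoint s B :=
    (subset_sdiff.mp (mem_powerset.mp hB)).2.symm
  have union_injOn : Set.InjOn (s ∪ ·) ((u \ s).powerset : Set (Finset α)) :=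
    fun A hA B hB (hAB : s ∪ A = s ∪ B) ↦ by
      rw [← union_sdiff_cancel_left (disjoint_of_mem hA), hAB,
        union_sdiff_cancel_left (disjoint_of_mem hB)]
  rw [Icc_eq_image_powerset hsu, sum_image union_injOn, ← card_sdiff_of_subset hsu,
    ← sum_powerset_pow_card]
  refine sum_congr rfl fun B hB ↦ ?_
  rw [card_union_of_disjoint (disjoint_of_mem hB), Nat.add_sub_cancel_left]

end BooleanInterval

section Refinement

variable {n : ℕ}

theorem boundaries_injective : Function.Injective (Composition.boundaries (n := n)) :=
  fun _ _ h ↦ (compositionEquiv n).injective (CompositionAsSet.ext h)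

theorem exists_boundaries_eq {A : Finset (Fin (n + 1))} (zero_mem : 0 ∈ A)
    (last_mem : Fin.last n ∈ A) : ∃ I : Composition n, I.boundaries = A :=
  ⟨_, CompositionAsSet.toComposition_boundaries ⟨A, zero_mem, last_mem⟩⟩

theorem image_boundaries_refinements (J : Composition n) :
    ({I : Composition n | J.boundaries ⊆ I.boundaries} : Finset _).image Composition.boundaries =
      Icc J.boundaries univ := by
  ext A
  simp only [mem_image, mem_filter_univ, mem_Icc, subset_univ, and_true]
  constructor
  · rintro ⟨I, hJI, rfl⟩
    exact hJI
  · intro hJA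
    obtain ⟨I, rfl⟩ := exists_boundaries_eq (hJA J.toCompositionAsSet.zero_mem)
      (hJA J.toCompositionAsSet.getLast_mem)
    exact ⟨I, hJA, rfl⟩

theorem sum_refinements_pow_length_sub_length {R : Type*} [Semiring R] (J : Composition n)
    (x : R) :
    ∑ I : Composition n with J.boundaries ⊆ I.boundaries, x ^ (I.length - J.length) =
      (x + 1) ^ (n - J.length) := by
  have h := sum_Icc_pow_card_sub_card (subset_univ J.boundaries) x
  rw [← image_boundaries_refinements, sum_image boundaries_injective.injOn] at h
  simpa only [Composition.card_boundaries_eq_succ_length, card_univ, Fintype.card_fin,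
    Nat.add_sub_add_right] using h

theorem length_le_of_boundaries_subset {I J : Composition n}
    (hJI : J.boundaries ⊆ I.boundaries) : J.length ≤ I.length := by
  simpa only [Composition.card_boundaries_eq_succ_length, Nat.add_le_add_iff_right]
    using card_le_card hJI

theorem sum_refinements_neg_one_pow_mul_pow {R : Type*} [Ring R] (J : Composition n) (t : R) :
    ∑ I : Composition n with J.boundaries ⊆ I.boundaries,
        (-1) ^ (I.length - J.length) * t ^ I.length =
      (1 - t) ^ (n - J.length) * t ^ J.length := by
  rw [← neg_add_eq_sub, ← sum_refinements_pow_length_sub_length, sum_mul]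
  refine sum_congr rfl fun I hI ↦ ?_
  have hJI := length_le_of_boundaries_subset (mem_filter_univ I |>.mp hI)
  rw [neg_pow t, mul_assoc, ← pow_add, Nat.sub_add_cancel hJI]

end Refinement

section Ribbon

variable {n : ℕ}

theorem psums_blocks (I : Composition n) :
    psums I.blocks = (range I.length).image fun k ↦ I.sizeUpTo (k + 1) :=
  rfl

theorem map_boundaries_val (I : Composition n) :
    I.boundaries.map Fin.valEmbedding = insert 0 (psums I.blocks) := by
  ext j
  simp [Composition.boundaries, Composition.boundary, psums_blocks, Fin.exists_fin_succ,
    Fin.exists_iff, eq_comm]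

theorem zero_notMem_psums (I : Composition n) : 0 ∉ psums I.blocks := by
  rw [psums_blocks, mem_image]
  rintro ⟨k, hk, hsum⟩
  exact Nat.ne_zero_of_lt (I.sizeUpTo_strict_mono (mem_range.mp hk)) hsum

theorem psums_subset_iff_boundaries_subset (I J : Composition n) :
    psums J.blocks ⊆ psums I.blocks ↔ J.boundaries ⊆ I.boundaries := by
  rw [← map_subset_map (f := Fin.valEmbedding), map_boundaries_val, map_boundaries_val,
    insert_subset_insert_iff (zero_notMem_psums J)]

theorem ribbon_blocks (I : Composition n) :
    Ribbon I.blocks = ∑ J : Composition n with J.boundaries ⊆ I.boundaries,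
      (-1 : ℤ) ^ (I.length - J.length) • SProd J.blocks := by
  obtain ⟨L, blocks_pos, rfl⟩ := I
  rw [Ribbon, sum_filter]
  refine sum_congr rfl fun J _ ↦ ?_
  simp only [psums_subset_iff_boundaries_subset ⟨L, blocks_pos, rfl⟩ J,
    ← Int.cast_smul_eq_zsmul ℚ, Int.cast_pow, Int.cast_neg, Int.cast_one]

end Ribbon

theorem eulerian_generating_identity_general {R M : Type*} [Ring R] [AddCommGroup M] [Module R M]
    (t : R) (φ : Sym →+ M) (n : ℕ) :
    ∑ I : Composition n, t ^ I.length • φ (Ribbon I.blocks) =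
      ∑ I : Composition n, ((1 - t) ^ (n - I.length) * t ^ I.length) • φ (SProd I.blocks) :=
  calc
    _ = ∑ I : Composition n, ∑ J : Composition n with J.boundaries ⊆ I.boundaries,
          ((-1) ^ (I.length - J.length) * t ^ I.length) • φ (SProd J.blocks) := by
      refine sum_congr rfl fun I _ ↦ ?_
      rw [ribbon_blocks, map_sum, smul_sum]
      refine sum_congr rfl fun J _ ↦ ?_
      rw [map_zsmul, smul_comm, ← Int.cast_smul_eq_zsmul R, smul_smul]
      norm_cast
    _ = ∑ J : Composition n, (∑ I : Composition n with J.boundaries ⊆ I.boundaries,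
          (-1) ^ (I.length - J.length) * t ^ I.length) • φ (SProd J.blocks) := by
      simp only [sum_smul]
      exact sum_comm' (by simp)
    _ = _ := by simp only [sum_refinements_neg_one_pow_mul_pow]

/-- **Weight-`n` component of the generating identity
`A(t) = (1−t)(1 − tσ(1−t))⁻¹` for the noncommutative Eulerian polynomials**:
in `Sym[t]` (polynomials in a central variable `t` with coefficients in `Sym`),
for every `n ≥ 1`,
`∑_{|I|=n} t^{ℓ(I)} R_I = ∑_{|I|=n} (1−t)^{n−ℓ(I)} t^{ℓ(I)} S^I`. -/
theorem eulerian_generating_identity :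
    ∀ n : ℕ, 1 ≤ n →
      (∑ I : Composition n,
          (Polynomial.X : Polynomial Sym) ^ I.length * Polynomial.C (Ribbon I.blocks)) =
        ∑ I : Composition n,
          (1 - (Polynomial.X : Polynomial Sym)) ^ (n - I.length) *
            (Polynomial.X : Polynomial Sym) ^ I.length * Polynomial.C (SProd I.blocks) := by
  intro n _
  exact eulerian_generating_identity_general (Polynomial.X : Polynomial Sym)
    (Polynomial.C : Sym →+* Polynomial Sym).toAddMonoidHom n

end

end NCSF
end

section
/- In Sym, let (2^j) denote the composition with j parts equal to 2 and (1,2^j) the composition consisting of a part 1 followed by j parts equal to 2, with the conventions R_{(2^0)} := 1 and R_{(1,2^0)} = S₁. Then: (i) for every n ≥ 1, Σ_{i=0}^{n} (−1)^i S_{2i} · R_{(2^{n−i})} = 0 (equivalently, the noncommutative secant SEC := COS^{−1}, where COS := Σ_{i≥0} (−1)^i S_{2i} t^{2i}, equals 1 + Σ_{n≥1} R_{(2^n)} t^{2n}); and (ii) for every n ≥ 0, Σ_{i=0}^{n} (−1)^i R_{(1,2^{n−i})} · S_{2i} = (−1)^n S_{2n+1} (equivalently, the noncommutative right tangent TAN_r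 := SIN·COS^{−1}, where SIN := Σ_{i≥0} (−1)^i S_{2i+1} t^{2i+1}, equals Σ_{n≥0} R_{(1,2^n)} t^{2n+1}). -/
open Finset

namespace NCSF

noncomputable section

/-!
Ribbons multiply by `R_{I,a} R_{b,J} = R_{I,a,b,J} + R_{I,a+b,J}`: a coarsening of `(I,a,b,J)`
either keeps the cut between `a` and `b` or removes it. Since `S_n = R_n`, each term of the two
alternating sums thus splits into two ribbons, and the sums telescope.
-/

theorem psums_nil : psums [] = ∅ := rfl

theorem psums_cons (a : ℕ) (L : List ℕ) :
    psums (a :: L) = insert a ((psums L).image (a + ·)) := by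
  ext x
  simp only [psums, mem_image, mem_range, mem_insert, List.length_cons, Nat.exists_lt_succ_left]
  simp [eq_comm (a := x)]

theorem pos_of_mem_psums {L : List ℕ} (hL : ∀ i ∈ L, 0 < i) {x : ℕ} (hx : x ∈ psums L) :
    0 < x := by
  cases L with
  | nil => simp [psums_nil] at hx
  | cons a L =>
    have ha : 0 < a := hL a List.mem_cons_self
    simp only [psums_cons, mem_insert, mem_image] at hx
    omega

theorem le_of_mem_psums_cons {a x : ℕ} {L : List ℕ} (hx : x ∈ psums (a :: L)) : a ≤ x := by
  simp only [psums_cons, mem_insert, mem_image] at hx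
  omega

theorem notMem_image_add_psums {L : List ℕ} (hL : ∀ i ∈ L, 0 < i) (a : ℕ) :
    a ∉ (psums L).image (a + ·) := by
  simp only [mem_image, not_exists, not_and]
  intro y hy
  have := pos_of_mem_psums hL hy
  omega

theorem card_psums_le_length (L : List ℕ) : #(psums L) ≤ L.length :=
  card_image_le.trans_eq (card_range _)

theorem card_psums {L : List ℕ} (hL : ∀ i ∈ L, 0 < i) : #(psums L) = L.length := by
  induction L with
  | nil => rfl
  | cons a L ih =>
    have hL' := (List.forall_mem_cons.1 hL).2
    rw [psums_cons, card_insert_of_notMem (notMem_image_add_psums hL' a),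
      card_image_of_injective _ (add_right_injective a), ih hL', List.length_cons]

theorem psums_cons_subset_psums_cons_iff {J L : List ℕ} (hJ : ∀ i ∈ J, 0 < i) (a : ℕ) :
    psums (a :: J) ⊆ psums (a :: L) ↔ psums J ⊆ psums L := by
  rw [psums_cons, psums_cons, insert_subset_insert_iff (notMem_image_add_psums hJ a),
    image_subset_image_iff (add_right_injective a)]

theorem psums_add_cons {b : ℕ} (hb : 0 < b) (a : ℕ) (L : List ℕ) :
    psums ((a + b) :: L) = (psums (a :: b :: L)).erase a := by
  have ha : a ∉ psums ((a + b) :: L) := fun h => by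
    have := le_of_mem_psums_cons h
    omega
  rw [psums_cons a, psums_cons b, image_insert, image_image]
  simp only [Function.comp_def, ← add_assoc]
  rw [← psums_cons, erase_insert ha]

/-- The compositions `J ⪯ L` indexing the sum that defines `Ribbon L`, encoded as lists of
positive parts so that they can be compared across different values of `|L|`. -/
def coarsenings (L : List ℕ) : Finset (List ℕ) :=
  ((univ : Finset (Composition L.sum)).image Composition.blocks).filter fun J => psums J ⊆ psums L

theorem mem_coarsenings {L J : List ℕ} :
    J ∈ coarsenings L ↔ (∀ i ∈ J, 0 < i) ∧ J.sum = L.sum ∧ psums J ⊆ psums L := by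
  simp only [coarsenings, mem_filter, mem_image, mem_univ, true_and]
  constructor
  · rintro ⟨⟨c, rfl⟩, hsub⟩
    exact ⟨fun _ => c.blocks_pos, c.blocks_sum, hsub⟩
  · rintro ⟨hpos, hsum, hsub⟩
    exact ⟨⟨⟨J, hpos _, hsum⟩, rfl⟩, hsub⟩

theorem length_le_of_mem_coarsenings {L J : List ℕ} (hJ : J ∈ coarsenings L) :
    J.length ≤ L.length := by
  obtain ⟨hpos, -, hsub⟩ := mem_coarsenings.1 hJ
  calc J.length = #(psums J) := (card_psums hpos).symm
    _ ≤ #(psums L) := card_le_card hsub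
    _ ≤ L.length := card_psums_le_length L

theorem coarsenings_nil : coarsenings [] = {[]} := by
  ext J
  rw [mem_singleton]
  constructor
  · intro hJ
    exact List.length_eq_zero_iff.1 (Nat.le_zero.1 (length_le_of_mem_coarsenings hJ))
  · rintro rfl
    simp [mem_coarsenings]

theorem coarsenings_singleton {a : ℕ} (ha : 0 < a) : coarsenings [a] = {[a]} := by
  ext J
  rw [mem_singleton]
  constructor
  · intro hJ
    have hlen := length_le_of_mem_coarsenings hJ
    obtain ⟨-, hsum, -⟩ := mem_coarsenings.1 hJ
    match J with
    | [] => simp at hsum; omega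
    | [c] => simpa using hsum
    | _ :: _ :: _ => simp at hlen
  · rintro rfl
    simpa [mem_coarsenings] using ha

theorem filter_mem_psums_coarsenings {a : ℕ} (ha : 0 < a) (L : List ℕ) :
    (coarsenings (a :: L)).filter (a ∈ psums ·) = (coarsenings L).image (List.cons a) := by
  ext J
  simp only [mem_filter, mem_image, mem_coarsenings]
  constructor
  · rintro ⟨⟨hpos, hsum, hsub⟩, haJ⟩
    cases J with
    | nil => simp [psums_nil] at haJ
    | cons c J =>
      obtain rfl : c = a := le_antisymm (le_of_mem_psums_cons haJ)
        (le_of_mem_psums_cons (hsub (by simp [psums_cons])))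
      have hpos' := (List.forall_mem_cons.1 hpos).2
      exact ⟨J, ⟨hpos', by simpa using hsum, (psums_cons_subset_psums_cons_iff hpos' c).1 hsub⟩,
        rfl⟩
  · rintro ⟨J, ⟨hpos, hsum, hsub⟩, rfl⟩
    exact ⟨⟨List.forall_mem_cons.2 ⟨ha, hpos⟩, by simp [hsum],
      (psums_cons_subset_psums_cons_iff hpos a).2 hsub⟩, by simp [psums_cons]⟩

theorem filter_notMem_psums_coarsenings {b : ℕ} (hb : 0 < b) (a : ℕ) (L : List ℕ) :
    (coarsenings (a :: b :: L)).filter (a ∉ psums ·) = coarsenings ((a + b) :: L) := by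
  ext J
  simp only [mem_filter, mem_coarsenings, psums_add_cons hb, subset_erase, List.sum_cons,
    add_assoc, and_assoc]

theorem ribbon_eq_sum_coarsenings (L : List ℕ) :
    Ribbon L = ∑ J ∈ coarsenings L, ((-1 : ℚ) ^ (L.length - J.length)) • SProd J := by
  rw [coarsenings, sum_filter, sum_image fun _ _ _ _ => Composition.ext]
  rfl

theorem S_zero : S 0 = 1 := rfl

theorem ribbon_nil : Ribbon [] = 1 := by
  simp [ribbon_eq_sum_coarsenings, coarsenings_nil, SProd]

theorem ribbon_singleton {a : ℕ} (ha : 0 < a) : Ribbon [a] = S a := by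
  simp [ribbon_eq_sum_coarsenings, coarsenings_singleton ha, SProd]

theorem ribbon_cons_cons {a b : ℕ} (ha : 0 < a) (hb : 0 < b) (L : List ℕ) :
    Ribbon (a :: b :: L) = S a * Ribbon (b :: L) - Ribbon ((a + b) :: L) := by
  have hkeep : ∑ J ∈ coarsenings (a :: b :: L) with a ∈ psums J,
      ((-1 : ℚ) ^ ((a :: b :: L).length - J.length)) • SProd J = S a * Ribbon (b :: L) := by
    rw [filter_mem_psums_coarsenings ha, sum_image List.cons_injective.injOn,
      ribbon_eq_sum_coarsenings, mul_sum]
    simp [SProd]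
  have hmerge : ∑ J ∈ coarsenings (a :: b :: L) with a ∉ psums J,
      ((-1 : ℚ) ^ ((a :: b :: L).length - J.length)) • SProd J = -Ribbon ((a + b) :: L) := by
    rw [filter_notMem_psums_coarsenings hb, ribbon_eq_sum_coarsenings, ← sum_neg_distrib]
    refine sum_congr rfl fun J hJ => ?_
    have hlen : J.length ≤ ((a + b) :: L).length := length_le_of_mem_coarsenings hJ
    have hsucc : (a :: b :: L).length - J.length = ((a + b) :: L).length - J.length + 1 :=
      Nat.succ_sub hlen
    rw [hsucc, pow_succ, mul_neg_one, neg_smul]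
  rw [ribbon_eq_sum_coarsenings (a :: b :: L),
    ← sum_filter_add_sum_filter_not _ (a ∈ psums ·), hkeep, hmerge, sub_eq_add_neg]

theorem ribbon_append_mul_ribbon_cons {a b : ℕ} (ha : 0 < a) (hb : 0 < b) (J : List ℕ) :
    ∀ I : List ℕ, (∀ i ∈ I, 0 < i) →
      Ribbon (I ++ [a]) * Ribbon (b :: J) =
        Ribbon (I ++ a :: b :: J) + Ribbon (I ++ (a + b) :: J)
  | [], _ => by
    simp only [List.nil_append, ribbon_singleton ha, ribbon_cons_cons ha hb, sub_add_cancel]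
  | [c], hI => by
    have hc : 0 < c := hI c List.mem_cons_self
    have hca : 0 < c + a := Nat.add_pos_left hc a
    simp only [List.cons_append, List.nil_append, ribbon_cons_cons hc ha,
      ribbon_cons_cons hc (Nat.add_pos_left ha b), ribbon_cons_cons ha hb,
      ribbon_cons_cons hca hb, ribbon_singleton ha, ribbon_singleton hca, add_assoc]
    noncomm_ring
  | c :: e :: I, hI => by
    obtain ⟨hc, he, hI⟩ : 0 < c ∧ 0 < e ∧ ∀ i ∈ I, 0 < i := by
      simpa only [List.forall_mem_cons] using hI
    have hkeep := ribbon_append_mul_ribbon_cons ha hb J (e :: I) (List.forall_mem_cons.2 ⟨he, hI⟩)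
    have hmerge := ribbon_append_mul_ribbon_cons ha hb J ((c + e) :: I)
      (List.forall_mem_cons.2 ⟨Nat.add_pos_left hc e, hI⟩)
    simp only [List.cons_append] at hkeep hmerge ⊢
    simp only [ribbon_cons_cons hc he, sub_mul, mul_assoc, hkeep, hmerge]
    noncomm_ring
termination_by I => I.length

theorem alternating_sum_range_succ {R M : Type*} [Ring R] [AddCommGroup M] [Module R M]
    (f : ℕ → M) (n : ℕ) :
    ∑ i ∈ range (n + 1), ((-1 : R) ^ i) • f i =
      f 0 - ∑ i ∈ range n, ((-1 : R) ^ i) • f (i + 1) := by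
  rw [sum_range_succ', sub_eq_neg_add, ← sum_neg_distrib]
  simp only [pow_succ, mul_neg_one, neg_smul, pow_zero, one_smul]

section AlternatingSums

variable {a c d : ℕ}

theorem sum_S_mul_ribbon_replicate (hd : 0 < d) (m : ℕ) (ha : 0 < a) :
    ∑ i ∈ range (m + 1), ((-1 : ℚ) ^ i) • (S (a + d * i) * Ribbon (List.replicate (m - i) d)) =
      Ribbon (a :: List.replicate m d) := by
  induction m generalizing a with
  | zero => simp [ribbon_singleton ha, ribbon_nil]
  | succ m ih =>
    have htail := ih (Nat.add_pos_left ha d)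
    rw [alternating_sum_range_succ, List.replicate_succ, ribbon_cons_cons ha hd, ← htail]
    simp [mul_add, add_assoc, add_comm d, List.replicate_succ]

theorem sum_ribbon_cons_replicate_mul_S (ha : 0 < a) (hd : 0 < d) (m : ℕ) (hc : 0 < c) :
    ∑ i ∈ range (m + 1),
        ((-1 : ℚ) ^ i) • (Ribbon (a :: List.replicate (m - i) d) * S (c + d * i)) =
      Ribbon (a :: List.replicate m d ++ [c]) + ((-1 : ℚ) ^ m) • S (a + c + d * m) := by
  induction m generalizing c with
  | zero =>
    simp [ribbon_singleton ha, ribbon_cons_cons ha hc, ribbon_singleton hc,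
      ribbon_singleton (Nat.add_pos_left ha c)]
  | succ m ih =>
    have hpos : ∀ i ∈ a :: List.replicate m d, 0 < i := by simp [ha, hd]
    have hhead : Ribbon (a :: List.replicate (m + 1) d) * S c =
        Ribbon (a :: List.replicate (m + 1) d ++ [c]) +
          Ribbon (a :: List.replicate m d ++ [d + c]) := by
      simpa [List.replicate_succ', ribbon_singleton hc]
        using ribbon_append_mul_ribbon_cons hd hc [] (a :: List.replicate m d) hpos
    have htail := ih (Nat.add_pos_left hd c)
    have hindex (i : ℕ) : c + d * (i + 1) = d + c + d * i := by ring
    have hdegree : a + (d + c) + d * m = a + c + d * (m + 1) := by ring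
    simp only [alternating_sum_range_succ, Nat.add_sub_add_right, hindex, htail, hdegree,
      mul_zero, add_zero, Nat.sub_zero, hhead, pow_succ, mul_neg_one, neg_smul]
    abel

end AlternatingSums

theorem secant_and_tangent_general {a d : ℕ} (ha : 0 < a) (hd : 0 < d) :
    (∀ n : ℕ, 1 ≤ n →
      ∑ i ∈ range (n + 1), ((-1 : ℚ) ^ i) • (S (d * i) * Ribbon (List.replicate (n - i) d)) = 0) ∧
    (∀ n : ℕ,
      ∑ i ∈ range (n + 1),
        ((-1 : ℚ) ^ i) • (Ribbon (a :: List.replicate (n - i) d) * S (d * i)) =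
          ((-1 : ℚ) ^ n) • S (d * n + a)) := by
  have hindex (i : ℕ) : d * (i + 1) = d + d * i := by ring
  constructor
  · rintro (_ | m) hn
    · contradiction
    · rw [alternating_sum_range_succ]
      simp only [Nat.add_sub_add_right, hindex, sum_S_mul_ribbon_replicate hd m hd]
      simp only [mul_zero, S_zero, one_mul, Nat.sub_zero, List.replicate_succ, sub_self]
  · rintro (_ | m)
    · simp [ribbon_singleton ha, S_zero]
    · have hdegree : a + d + d * m = d + d * m + a := by ring
      rw [alternating_sum_range_succ]
      simp only [Nat.add_sub_add_right, hindex, sum_ribbon_cons_replicate_mul_S ha hd m hd]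
      simp only [mul_zero, S_zero, mul_one, Nat.sub_zero, List.replicate_succ', List.cons_append,
        hdegree, sub_add_cancel_left, pow_succ, mul_neg_one, neg_smul]

/-- **Noncommutative secant and tangent** (here `(2^j)` is the composition with `j`
parts equal to `2` and `(1,2^j)` has a part `1` followed by `j` parts `2`;
`R_{(2^0)} = 1` and `R_{(1,2^0)} = S₁`):
(i) for every `n ≥ 1`, `∑_{i=0}^{n} (−1)^i S_{2i} R_{(2^{n−i})} = 0`, which expresses
that `SEC = COS⁻¹` equals `1 + ∑_{n≥1} R_{(2^n)} t^{2n}`;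
(ii) for every `n ≥ 0`, `∑_{i=0}^{n} (−1)^i R_{(1,2^{n−i})} S_{2i} = (−1)^n S_{2n+1}`,
which expresses that `TAN_r = SIN·COS⁻¹` equals `∑_{n≥0} R_{(1,2^n)} t^{2n+1}`. -/
theorem secant_and_tangent :
    (∀ n : ℕ, 1 ≤ n →
      ∑ i ∈ Finset.range (n + 1),
        ((-1 : ℚ) ^ i) • (S (2 * i) * Ribbon (List.replicate (n - i) 2)) = 0) ∧
    (∀ n : ℕ,
      ∑ i ∈ Finset.range (n + 1),
        ((-1 : ℚ) ^ i) • (Ribbon (1 :: List.replicate (n - i) 2) * S (2 * i)) =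
          ((-1 : ℚ) ^ n) • S (2 * n + 1)) :=
  secant_and_tangent_general one_pos two_pos

end

end NCSF
end

section
/- Let n ≥ 1 and let U(glₙ) be the universal enveloping algebra over ℚ of the Lie algebra of n×n matrices over ℚ, and let e_{ij} ∈ U(glₙ) be the image of the elementary matrix unit E_{ij}. For 1 ≤ m ≤ n set f^{(m)}_{ij} := e_{ij} − (m−1)δ_{ij}·1 and, for k ≥ 1, Λ_k(ε_m) := (−1)^{k−1} Σ_{i₁,…,i_{k−1} ∈ {1,…,m−1}} f^{(m)}_{m i₁} f^{(m)}_{i₁ i₂} ⋯ f^{(m)}_{i_{k−1} m} (so for k = 1, Λ₁(ε_m) = e_{mm} − (m−1), and Λ_k(ε_m) = 0 for k > m). Then all these elements commute pairwise: Λ_k(ε_m)·Λ_{k'}(ε_{m'}) = Λ_{k'}(ε_{m'})·Λ_k(ε_m) for all k, k' ≥ 1 and all 1 ≤ m, m' ≤ n; that is, they generate a commutative subalgebra of U(glₙ) (the Gelfand–Zetlin subalgebra). -/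
open Finset

namespace GZ

noncomputable section

attribute [local instance 100] LieRing.ofAssociativeRing

variable (n : ℕ)

/-- `U(glₙ)`: the universal enveloping algebra over `ℚ` of the Lie algebra of `n×n`
matrices over `ℚ` (with bracket `[X,Y] = XY − YX`). -/
abbrev Ugl : Type := UniversalEnvelopingAlgebra ℚ (Matrix (Fin n) (Fin n) ℚ)

/-- The image `e_{ij}` in `U(glₙ)` of the elementary matrix unit `E_{ij}`. -/
def e (i j : Fin n) : Ugl n :=
  UniversalEnvelopingAlgebra.ι ℚ (Matrix.single i j (1 : ℚ))

/-- `f^{(m)}_{ij} = e_{ij} − (m−1)δ_{ij}`, where the paper's index `m ∈ {1,…,n}` is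
represented by `m : Fin n` (so that the paper's `m` is `(m : ℕ) + 1`). -/
def f (m : Fin n) (i j : Fin n) : Ugl n :=
  e n i j - if i = j then ((m : ℕ) : ℚ) • (1 : Ugl n) else 0

/-- The product `f_{c₀c₁} f_{c₁c₂} ⋯ f_{c_{k−1}c_k}` along a chain of indices. -/
def chainProd (m : Fin n) : List (Fin n) → Ugl n
  | [] => 1
  | [_] => 1
  | a :: b :: rest => f n m a b * chainProd m (b :: rest)

/-- The elementary symmetric function
`Λ_k(ε_m) = (−1)^{k−1} ∑_{i₁,…,i_{k−1} ∈ {1,…,m−1}} f_{m i₁} f_{i₁ i₂} ⋯ f_{i_{k−1} m}`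
(with `f = f^{(m)}`), the paper's index `m` being `(m : ℕ) + 1`; for `k = 1` this is
`e_{mm} − (m−1)`. -/
def Lam (k : ℕ) (m : Fin n) : Ugl n :=
  ((-1 : ℚ) ^ (k - 1)) •
    ∑ v ∈ (Finset.univ : Finset (Fin (k - 1) → Fin n)).filter
        (fun v => ∀ t, (v t : ℕ) < (m : ℕ)),
      chainProd n m (m :: (List.ofFn v ++ [m]))

/-!
Write `A` for the block of `E - (m - 1) I` with indices `≤ m` and `x` for its last index. Up to
sign, `Λ_k(ε_m)` is the sum over the paths of length `k` from `x` to `x` that avoid `x` in between.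
Decomposing an arbitrary path at its first return to `x` expresses these sums through the entries
`(A ^ l) x x`. The powers `B` of `A` satisfy `[A_{ij}, B_{pq}] = δ_{jp} B_{iq} - δ_{iq} B_{pj}`, so
`(A ^ l) x x` commutes with every `A_{ab}`, `a, b ≠ x`, which settles the case of different `m`.
For equal `m`, expanding `[A ^ k, B]` by the Leibniz rule writes the commutator of `(A ^ k) x x` and
`(A ^ l) x x` as a sum of commutators of the same kind with smaller `k`.
-/

section Ring

variable {R U ι κ : Type*} [CommRing R] [Ring U] [Algebra R U]

theorem lie_mul_eq (x y z : U) : ⁅x, y * z⁆ = ⁅x, y⁆ * z + y * ⁅x, z⁆ := by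
  simp only [Ring.lie_def]
  noncomm_ring

theorem mul_lie_eq (x y z : U) : ⁅x * y, z⁆ = x * ⁅y, z⁆ + ⁅x, z⁆ * y := by
  simp only [Ring.lie_def]
  noncomm_ring

theorem algebraMap_lie (r : R) (x : U) : ⁅algebraMap R U r, x⁆ = 0 :=
  commute_iff_lie_eq.1 (Algebra.commutes r x)

theorem lie_algebraMap (r : R) (x : U) : ⁅x, algebraMap R U r⁆ = 0 :=
  commute_iff_lie_eq.1 (Algebra.commutes r x).symm

variable [DecidableEq ι] [DecidableEq κ]

theorem single_lie_single [Fintype ι] (i j p q : ι) :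
    ⁅Matrix.single i j (1 : U), Matrix.single p q (1 : U)⁆ =
      (if j = p then Matrix.single i q 1 else 0) - (if i = q then Matrix.single p j 1 else 0) := by
  rw [Ring.lie_def]
  congr 1
  · split_ifs with h
    · rw [h, Matrix.single_mul_single_same, one_mul]
    · exact Matrix.single_mul_single_of_ne _ _ _ _ h _
  · split_ifs with h
    · rw [h, Matrix.single_mul_single_same, one_mul]
    · exact Matrix.single_mul_single_of_ne _ _ _ _ (Ne.symm h) _

/-- A matrix whose entries satisfy the commutation relations of the matrix units of `gl`. -/
def IsGlMatrix (A : Matrix ι ι U) : Prop :=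
  ∀ i j p q, ⁅A i j, A p q⁆ = (if j = p then A i q else 0) - (if i = q then A p j else 0)

theorem IsGlMatrix.submatrix {A : Matrix κ κ U} (hA : IsGlMatrix A) {g : ι → κ}
    (hg : Function.Injective g) : IsGlMatrix (A.submatrix g g) := fun i j p q => by
  simpa only [Matrix.submatrix_apply, hg.eq_iff] using hA (g i) (g j) (g p) (g q)

variable [Fintype ι] {A B : Matrix ι ι U}

/-- The matrices `B` that transform under `ad A_{ij}` like the matrix of generators of `gl` itself:
`[A_{ij}, B_{pq}] = δ_{jp} B_{iq} - δ_{iq} B_{pj}`. -/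
def glTensors (A : Matrix ι ι U) : Subring (Matrix ι ι U) where
  carrier := {B | ∀ i j p q,
    ⁅A i j, B p q⁆ = (if j = p then B i q else 0) - (if i = q then B p j else 0)}
  zero_mem' i j p q := by simp
  one_mem' i j p q := by
    have h : ⁅A i j, (1 : Matrix ι ι U) p q⁆ = 0 := by
      rw [Matrix.one_apply]
      split_ifs <;> simp [Ring.lie_def]
    rw [h]
    simp only [Matrix.one_apply]
    grind
  add_mem' {B C} hB hC i j p q := by
    simp only [Matrix.add_apply, lie_add, hB i j p q, hC i j p q]
    split_ifs <;> abel
  neg_mem' {B} hB i j p q := by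
    simp only [Matrix.neg_apply, lie_neg, hB i j p q]
    split_ifs <;> abel
  mul_mem' {B C} hB hC i j p q := by
    simp only [Matrix.mul_apply, lie_sum, lie_mul_eq, hB i j p _, hC i j _ q, sub_mul, mul_sub,
      ite_mul, mul_ite, zero_mul, mul_zero, sum_add_distrib, sum_sub_distrib, sum_ite_irrel,
      sum_ite_eq, mem_univ, if_true, sum_const_zero]
    abel

theorem IsGlMatrix.mem_glTensors (hA : IsGlMatrix A) : A ∈ glTensors A := hA

theorem sub_algebraMap_apply (A : Matrix ι ι U) (r : R) (i j : ι) :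
    (A - algebraMap R (Matrix ι ι U) r) i j = A i j - algebraMap R U (if i = j then r else 0) := by
  rw [Matrix.sub_apply, Matrix.algebraMap_matrix_apply, apply_ite (algebraMap R U), map_zero]

theorem commute_sub_algebraMap_apply_iff (y : U) (r : R) (i j : ι) :
    Commute y ((A - algebraMap R (Matrix ι ι U) r) i j) ↔ Commute y (A i j) := by
  rw [sub_algebraMap_apply, commute_iff_lie_eq, commute_iff_lie_eq, lie_sub, lie_algebraMap,
    sub_zero]

theorem IsGlMatrix.sub_algebraMap (hA : IsGlMatrix A) (r : R) :
    IsGlMatrix (A - algebraMap R (Matrix ι ι U) r) := fun i j p q => by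
  simp only [sub_algebraMap_apply, sub_lie, lie_sub, algebraMap_lie, lie_algebraMap, sub_zero,
    hA i j p q]
  grind

theorem commute_apply_of_mem_glTensors (hB : B ∈ glTensors A) {x a b : ι} (ha : a ≠ x)
    (hb : b ≠ x) : Commute (A a b) (B x x) :=
  commute_iff_lie_eq.2 <| by rw [hB, if_neg hb, if_neg ha, sub_zero]

theorem pow_succ_apply_lie (hB : B ∈ glTensors A) (k : ℕ) (i j p q : ι) :
    ⁅(A ^ (k + 1)) i j, B p q⁆ = ∑ s ∈ antidiagonal k,
      ((A ^ s.1 * B) i q * (A ^ s.2) p j - (A ^ s.1) i q * (B * A ^ s.2) p j) := by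
  induction k generalizing j with
  | zero =>
    simp only [zero_add, pow_one, hB i j p q, Nat.antidiagonal_zero, sum_singleton, pow_zero,
      one_mul, mul_one, Matrix.one_apply]
    grind
  | succ k ih =>
    have leibniz : ⁅(A ^ (k + 2)) i j, B p q⁆ =
        ∑ a, (A ^ (k + 1)) i a * ⁅A a j, B p q⁆ + ∑ a, ⁅(A ^ (k + 1)) i a, B p q⁆ * A a j := by
      rw [pow_succ, Matrix.mul_apply, sum_lie]
      simp only [mul_lie_eq, sum_add_distrib]
    rw [leibniz, Nat.sum_antidiagonal_succ']
    congr 1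
    · simp only [hB _ j p q, mul_sub, mul_ite, mul_zero, sum_sub_distrib, sum_ite_irrel,
        sum_ite_eq', sum_const_zero, mem_univ, if_true, ← Matrix.mul_apply, pow_zero,
        Matrix.one_apply, mul_one]
      grind
    · simp only [ih, sum_mul]
      rw [sum_comm]
      refine sum_congr rfl fun s _ => ?_
      simp only [sub_mul, sum_sub_distrib, mul_assoc, ← mul_sum, ← Matrix.mul_apply, ← pow_succ]

theorem IsGlMatrix.commute_pow_apply_self (hA : IsGlMatrix A) (x : ι) (k l : ℕ) :
    Commute ((A ^ k) x x) ((A ^ l) x x) := by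
  induction k using Nat.strong_induction_on generalizing l with
  | _ k ih =>
    cases k with
    | zero => simp
    | succ k =>
      rw [commute_iff_lie_eq, pow_succ_apply_lie (pow_mem hA.mem_glTensors l), sum_sub_distrib,
        ← Nat.sum_antidiagonal_swap, ← sum_sub_distrib]
      refine sum_eq_zero fun s hs => sub_eq_zero.2 ?_
      have hs' : s.1 < k + 1 := Nat.lt_succ_of_le (HasAntidiagonal.antidiagonal.fst_le hs)
      simpa only [Prod.fst_swap, Prod.snd_swap, ← pow_add, add_comm l] using
        (ih s.1 hs' (s.2 + l)).symm.eq

theorem mul_updateCol_zero_mul_apply (A B C : Matrix ι ι U) (x i j : ι) :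
    (C * (A.updateCol x 0 * B)) i j = (C * (A * B)) i j - (C * A) i x * B x j := by
  have h : A.updateCol x 0 = A - Matrix.vecMulVec (A.col x) (Pi.single x 1) := by
    ext r c
    by_cases hc : c = x <;> simp [Matrix.vecMulVec_apply, hc]
  rw [h, sub_mul, mul_sub, Matrix.vecMulVec_mul, Matrix.single_one_vecMul, Matrix.mul_vecMulVec]
  rfl

/-- For a matrix of edge weights, the total weight of the closed paths of length `k + 1` at `x`
that do not visit `x` in between: zeroing column `x` forbids steps into `x`. -/
def firstReturn (A : Matrix ι ι U) (x : ι) (k : ℕ) : U :=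
  (A.updateCol x 0 ^ k * A) x x

theorem commute_firstReturn {x : ι} {y : U} (h : ∀ k, Commute y ((A ^ k) x x)) (k : ℕ) :
    Commute y (firstReturn A x k) := by
  suffices paths : ∀ l, Commute y ((A.updateCol x 0 ^ k * A ^ (l + 1)) x x) by
    simpa only [firstReturn, zero_add, pow_one] using paths 0
  induction k with
  | zero => simpa only [pow_zero, one_mul] using fun l => h (l + 1)
  | succ k ih =>
    intro l
    -- A path that avoids `x` for `k` steps either avoids it at the next one too or splits there.
    rw [pow_succ, mul_assoc, mul_updateCol_zero_mul_apply, ← pow_succ']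
    exact (ih (l + 1)).sub_right (Commute.mul_right (by simpa using ih 0) (h _))

theorem commute_firstReturn_of_forall_apply {y : U} (h : ∀ i j, Commute y (A i j)) (x : ι) (k : ℕ) :
    Commute y (firstReturn A x k) := by
  refine commute_firstReturn (fun l => ?_) k
  have hA : Commute (Matrix.scalar ι y) A := Matrix.scalar_commute_iff.2 (Matrix.ext h)
  exact congr_fun₂ (Matrix.scalar_commute_iff.1 (hA.pow_right l)) x x

theorem IsGlMatrix.commute_firstReturn_apply (hA : IsGlMatrix A) {x a b : ι} (ha : a ≠ x)
    (hb : b ≠ x) (k : ℕ) : Commute (firstReturn A x k) (A a b) :=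
  (commute_firstReturn (fun l =>
    commute_apply_of_mem_glTensors (pow_mem hA.mem_glTensors l) ha hb) k).symm

theorem IsGlMatrix.commute_firstReturn_firstReturn (hA : IsGlMatrix A) (x : ι) (k l : ℕ) :
    Commute (firstReturn A x k) (firstReturn A x l) :=
  commute_firstReturn (fun j => (commute_firstReturn (hA.commute_pow_apply_self x j) k).symm) l

end Ring

section LinearOrder

variable {R U ι : Type*} [CommRing R] [Ring U] [Algebra R U] [LinearOrder ι]
  {A : Matrix ι ι U}

/-- The submatrix of `A` with indices `≤ m`. -/
def leadingBlock (A : Matrix ι ι U) (m : ι) : Matrix {i // i ≤ m} {i // i ≤ m} U :=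
  A.submatrix Subtype.val Subtype.val

theorem isGlMatrix_leadingBlock (hA : IsGlMatrix A) (m : ι) : IsGlMatrix (leadingBlock A m) :=
  hA.submatrix Subtype.val_injective

variable [Fintype ι]

/-- The sum of the `A_{m i₁} A_{i₁ i₂} ⋯ A_{i_k m}` over all `i₁, …, i_k < m`; up to sign and for
`A = E - (m - 1) I` this is `Λ_{k+1}(ε_m)`. -/
def gzElement (A : Matrix ι ι U) (m : ι) (k : ℕ) : U :=
  firstReturn (leadingBlock A m) ⟨m, le_rfl⟩ k

theorem IsGlMatrix.commute_gzElement_apply (hA : IsGlMatrix A) {m a b : ι} (ha : a < m)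
    (hb : b < m) (k : ℕ) : Commute (gzElement A m k) (A a b) :=
  (isGlMatrix_leadingBlock hA m).commute_firstReturn_apply (a := ⟨a, ha.le⟩) (b := ⟨b, hb.le⟩)
    (Subtype.coe_ne_coe.1 ha.ne) (Subtype.coe_ne_coe.1 hb.ne) k

theorem IsGlMatrix.commute_gzElement_of_lt (hA : IsGlMatrix A) (r r' : R) {m m' : ι}
    (h : m' < m) (k k' : ℕ) :
    Commute (gzElement (A - algebraMap R _ r) m k) (gzElement (A - algebraMap R _ r') m' k') := by
  refine commute_firstReturn_of_forall_apply (fun a b => ?_) _ k'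
  rw [leadingBlock, Matrix.submatrix_apply, commute_sub_algebraMap_apply_iff,
    ← commute_sub_algebraMap_apply_iff _ r]
  exact (hA.sub_algebraMap r).commute_gzElement_apply (a.2.trans_lt h) (b.2.trans_lt h) k

theorem gelfand_zetlin_commute_general (hA : IsGlMatrix A) (c : ι → R) (m m' : ι) (k k' : ℕ) :
    Commute (gzElement (A - algebraMap R _ (c m)) m k)
      (gzElement (A - algebraMap R _ (c m')) m' k') := by
  rcases lt_trichotomy m m' with h | rfl | h
  · exact (hA.commute_gzElement_of_lt _ _ h k' k).symm
  · exact (isGlMatrix_leadingBlock (hA.sub_algebraMap _) m).commute_firstReturn_firstReturn _ k k'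
  · exact hA.commute_gzElement_of_lt _ _ h k k'

end LinearOrder

theorem isGlMatrix_e : IsGlMatrix (Matrix.of (e n)) := fun i j p q => by
  simp only [Matrix.of_apply, e, ← LieHom.map_lie]
  rw [single_lie_single, map_sub]
  split_ifs <;> simp only [map_zero]

theorem of_f_eq_sub_algebraMap (m : Fin n) :
    Matrix.of (f n m) =
      Matrix.of (e n) - algebraMap ℚ (Matrix (Fin n) (Fin n) (Ugl n)) ((m : ℕ) : ℚ) := by
  ext i j
  rw [Matrix.sub_apply, Matrix.algebraMap_matrix_apply, Algebra.algebraMap_eq_smul_one]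
  rfl

/-- The sum in the definition of `Lam`, with an arbitrary first index `i` in place of `m`, as its
recursion requires. -/
def chainSum (m : Fin n) (k : ℕ) (i : Fin n) : Ugl n :=
  ∑ v ∈ (univ : Finset (Fin k → Fin n)).filter (fun v => ∀ t, (v t : ℕ) < (m : ℕ)),
    chainProd n m (i :: (List.ofFn v ++ [m]))

theorem chainSum_succ (m : Fin n) (k : ℕ) (i : Fin n) :
    chainSum n m (k + 1) i = ∑ j with j < m, f n m i j * chainSum n m k j := by
  unfold chainSum
  rw [sum_filter, sum_filter, ← (Fin.consEquiv fun _ => Fin n).sum_comp, Fintype.sum_prod_type]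
  refine sum_congr rfl fun j _ => ?_
  simp only [Fin.consEquiv, Equiv.coe_fn_mk, Fin.forall_fin_succ, Fin.cons_zero, Fin.cons_succ,
    Fin.val_fin_lt]
  split_ifs with hj
  · rw [mul_sum, sum_filter]
    simp [hj, List.ofFn_succ, chainProd]
  · simp [hj]

theorem chainSum_eq_pow_mul_apply (m : Fin n) (k : ℕ) (i : {i // i ≤ m}) :
    chainSum n m k i = ((leadingBlock (Matrix.of (f n m)) m).updateCol ⟨m, le_rfl⟩ 0 ^ k *
      leadingBlock (Matrix.of (f n m)) m) i ⟨m, le_rfl⟩ := by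
  induction k generalizing i with
  | zero => simp [chainSum, chainProd, leadingBlock]
  | succ k ih =>
    calc chainSum n m (k + 1) i
        = ∑ j with j ≤ m, if j = m then 0 else f n m i j * chainSum n m k j := by
          rw [chainSum_succ, sum_filter, sum_filter]
          grind
      _ = ∑ j : {i // i ≤ m}, if (j : Fin n) = m then 0 else f n m i j * chainSum n m k j :=
          sum_subtype _ (by simp) _
      _ = _ := by
          rw [pow_succ', mul_assoc, Matrix.mul_apply]
          simp only [ih, Matrix.updateCol_apply, Subtype.ext_iff, ite_mul, Pi.zero_apply, zero_mul]
          rfl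

theorem Lam_eq_smul_gzElement (k : ℕ) (m : Fin n) :
    Lam n k m = (-1 : ℚ) ^ (k - 1) •
      gzElement (Matrix.of (e n) - algebraMap ℚ _ ((m : ℕ) : ℚ)) m (k - 1) := by
  rw [← of_f_eq_sub_algebraMap]
  exact congr_arg _ (chainSum_eq_pow_mul_apply n m (k - 1) ⟨m, le_rfl⟩)

/-- **The Gelfand–Zetlin subalgebra is commutative**: the elementary symmetric functions
`Λ_k(ε_m)` associated with the matrices `E₁, E₂−I, …, Eₙ−(n−1)I` of generators of
`U(glₙ)` commute pairwise. -/
theorem gelfand_zetlin_commute :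
    ∀ (k k' : ℕ), 1 ≤ k → 1 ≤ k' → ∀ (m m' : Fin n),
      Lam n k m * Lam n k' m' = Lam n k' m' * Lam n k m := by
  intro k k' _ _ m m'
  rw [Lam_eq_smul_gzElement, Lam_eq_smul_gzElement]
  exact ((gelfand_zetlin_commute_general (isGlMatrix_e n) (fun i => ((i : ℕ) : ℚ)) m m'
    (k - 1) (k' - 1)).smul_left _).smul_right _

end

end GZ
end
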